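/- Fix a constant m ≥ 1. There exist constants C > 0 and c ≥ 0 (depending only on m) such that the following holds. Let p be an odd prime, let g, h : 𝔽_p* → 𝔽_p* be arbitrary functions with μ(g) ≤ m, and define f(x,y) = g(x)(h(x)+y) on 𝔽_p* × 𝔽_p*. Then for every nonempty finite subset A ⊆ 𝔽_p* with |A| ≤ p^{3/5}, one has both max{|f(A,A)|, |A+A|} ≥ C (log(2|A|))^{−c} |A|^{11/9} and max{|f(A,A)|, |A−A|} ≥ C (log(2|A|))^{−c} |A|^{11/9}. -/

import Mathlib

open Finset Pointwise

/-- `mu g` is `max_{t ∈ 𝔽_p*} |{x ∈ 𝔽_p* : g x = t}|`. -/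
def mu {p : ℕ} [NeZero p] (g : ZMod p → ZMod p) : ℕ :=
  Finset.sup (Finset.univ.filter fun t : ZMod p => t ≠ 0)
    (fun t => (Finset.univ.filter fun x : ZMod p => x ≠ 0 ∧ g x = t).card)


namespace SDE
open MvPolynomial

variable {K : Type*} [Field K]

lemma totalDegree_det_le {n : ℕ} {σ : Type*} (M : Matrix (Fin n) (Fin n) (MvPolynomial σ K)) (d : ℕ)
    (h : ∀ i j, (M i j).totalDegree ≤ d) : M.det.totalDegree ≤ n * d := by
  rw [Matrix.det_apply]
  refine totalDegree_finsetSum_le ?_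
  intro s _
  rw [Units.smul_def]
  refine (totalDegree_smul_le _ _).trans ?_
  refine (totalDegree_finsetProd _ _).trans ?_
  calc _ ≤ ∑ _i : Fin n, d := Finset.sum_le_sum fun i _ => h _ _
    _ = _ := by simp

lemma totalDegree_coeff_fse_le (f : MvPolynomial (Fin 3) K) (i : ℕ) :
    ((finSuccEquiv K 2 f).coeff i).totalDegree ≤ f.totalDegree := by
  by_cases h : (finSuccEquiv K 2 f).coeff i = 0
  · simp [h]
  · have := totalDegree_coeff_finSuccEquiv_add_le f i h
    omega

lemma totalDegree_resultant_le (u V : MvPolynomial (Fin 3) K) (m n : ℕ) :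
    (Polynomial.resultant (finSuccEquiv K 2 u) (finSuccEquiv K 2 V) m n).totalDegree
      ≤ (m + n) * max u.totalDegree V.totalDegree := by
  rw [Polynomial.resultant]
  apply totalDegree_det_le
  intro i j
  rw [Polynomial.sylvester, Matrix.of_apply]
  induction j using Fin.addCases with
  | left j => 
    simp only [Fin.addCases_left]
    split_ifs
    · exact (totalDegree_coeff_fse_le _ _).trans (le_max_right _ _)
    · simp
  | right j =>
    simp only [Fin.addCases_right]
    split_ifs
    · exact (totalDegree_coeff_fse_le _ _).trans (le_max_left _ _)
    · simp

lemma natDegree_fse_le (u : MvPolynomial (Fin 3) K) :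
    (finSuccEquiv K 2 u).natDegree ≤ u.totalDegree := by
  rw [natDegree_finSuccEquiv]; exact degreeOf_le_totalDegree _ _

lemma fse_rename (ρ : MvPolynomial (Fin 2) K) :
    finSuccEquiv K 2 (rename Fin.succ ρ) = Polynomial.C ρ := by
  induction ρ using MvPolynomial.induction_on with
  | C a => simp [finSuccEquiv_apply]
  | add p q hp hq => simp [hp, hq]
  | mul_X p i hp => rw [map_mul, map_mul, hp, rename_X, finSuccEquiv_X_succ, Polynomial.C_mul]

/-- Elimination. -/
lemma elim (u V : MvPolynomial (Fin 3) K) (hu : Irreducible u) (hy : degreeOf 0 u ≠ 0)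
    (hV : ¬ u ∣ V) : ∃ ρ : MvPolynomial (Fin 2) K, ρ ≠ 0 ∧
      ρ.totalDegree ≤ (u.totalDegree + V.totalDegree) * max u.totalDegree V.totalDegree ∧
      ∃ a b, rename Fin.succ ρ = u * a + V * b := by
  classical
  set P := finSuccEquiv K 2 u with hP
  set Q := finSuccEquiv K 2 V with hQ
  have hPi : Irreducible P := (MulEquiv.irreducible_iff (finSuccEquiv K 2)).2 hu
  have hPd : P.natDegree ≠ 0 := by rw [hP, natDegree_finSuccEquiv]; exact hy
  have hprim : P.IsPrimitive := hPi.isPrimitive hPd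
  have hnd : ¬ P ∣ Q := by
    intro h; apply hV
    exact (map_dvd_iff (finSuccEquiv K 2)).1 h
  set L := FractionRing (MvPolynomial (Fin 2) K)
  have hPi' : Irreducible (P.map (algebraMap (MvPolynomial (Fin 2) K) L)) :=
    (hprim.irreducible_iff_irreducible_map_fraction_map).1 hPi
  have hnd' : ¬ P.map (algebraMap (MvPolynomial (Fin 2) K) L) ∣ Q.map (algebraMap _ L) := fun h =>
    hnd ((hprim.dvd_iff_fraction_map_dvd_fraction_map L).2 h)
  have hcop : IsCoprime (P.map (algebraMap (MvPolynomial (Fin 2) K) L)) (Q.map (algebraMap _ L)) :=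
    (hPi'.coprime_iff_not_dvd).2 hnd'
  have hinj : Function.Injective (algebraMap (MvPolynomial (Fin 2) K) L) :=
    IsFractionRing.injective _ _
  have hres : Polynomial.resultant P Q ≠ 0 := by
    intro h0
    have h1 := Polynomial.resultant_map_map P Q P.natDegree Q.natDegree
      (algebraMap (MvPolynomial (Fin 2) K) L)
    rw [h0, map_zero] at h1
    have h2 := (Polynomial.resultant_eq_zero_iff (f := P.map (algebraMap (MvPolynomial (Fin 2) K) L))
      (g := Q.map (algebraMap (MvPolynomial (Fin 2) K) L))).1
      (by rw [Polynomial.natDegree_map_eq_of_injective hinj,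
            Polynomial.natDegree_map_eq_of_injective hinj]; exact h1)
    exact h2.2 hcop
  obtain ⟨a, b, -, -, hab⟩ := Polynomial.exists_mul_add_mul_eq_C_resultant P Q le_rfl le_rfl
    (Or.inl hPd)
  refine ⟨Polynomial.resultant P Q, hres, ?_, (finSuccEquiv K 2).symm a,
    (finSuccEquiv K 2).symm b, ?_⟩
  · refine (totalDegree_resultant_le u V _ _).trans ?_
    exact Nat.mul_le_mul_right _ (Nat.add_le_add (natDegree_fse_le u) (natDegree_fse_le V))
  · apply (finSuccEquiv K 2).injective
    rw [fse_rename, map_add, map_mul, map_mul, AlgEquiv.apply_symm_apply, AlgEquiv.apply_symm_apply, hab]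

end SDE


namespace SDE
open MvPolynomial

variable {K : Type*} [Field K]

lemma deriv_aeval (v : Fin 3 → Polynomial K) (f : MvPolynomial (Fin 3) K) :
    Polynomial.derivative (aeval v f) = ∑ i, aeval v (pderiv i f) * Polynomial.derivative (v i) := by
  induction f using MvPolynomial.induction_on with
  | C a => simp [Polynomial.algebraMap_eq]
  | add p q hp hq => simp [hp, hq, add_mul, Finset.sum_add_distrib]
  | mul_X p i hp =>
    simp only [map_mul, aeval_X, Polynomial.derivative_mul, hp, Derivation.leibniz, pderiv_X,
      smul_eq_mul, map_add, add_mul, Finset.sum_add_distrib, Finset.sum_mul]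
    have e1 : ∑ x, aeval v p * aeval v (pderiv x (X i : MvPolynomial (Fin 3) K)) *
        Polynomial.derivative (v x) = aeval v p * Polynomial.derivative (v i) := by
      rw [Finset.sum_eq_single i]
      · simp
      · intro b _ hb; rw [pderiv_X_of_ne hb.symm]; simp
      · simp
    rw [add_comm]
    refine congrArg₂ (· + ·) ?_ ?_
    · rw [← e1]
      apply Finset.sum_congr rfl; intro j _
      rw [pderiv_X]
    · apply Finset.sum_congr rfl; intro j _; ring

lemma fse_eval {B : Type*} [CommRing B] [Algebra K B] (y b c : B) (u : MvPolynomial (Fin 3) K) :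
    ((finSuccEquiv K 2 u).map (aeval ![b, c] : MvPolynomial (Fin 2) K →ₐ[K] B).toRingHom).eval y
      = aeval ![y, b, c] u := by
  induction u using MvPolynomial.induction_on with
  | C a => simp [finSuccEquiv_apply]
  | add p q hp hq => simp only [map_add, Polynomial.map_add, Polynomial.eval_add, hp, hq]
  | mul_X p i hp =>
    simp only [map_mul, Polynomial.map_mul, Polynomial.eval_mul, hp, aeval_X]
    congr 1
    refine Fin.cases ?_ (fun j => ?_) i
    · simp [finSuccEquiv_X_zero]
    · rw [finSuccEquiv_X_succ]; simp

lemma fse_pderiv (u : MvPolynomial (Fin 3) K) :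
    finSuccEquiv K 2 (pderiv 0 u) = Polynomial.derivative (finSuccEquiv K 2 u) := by
  induction u using MvPolynomial.induction_on with
  | C a => simp [finSuccEquiv_apply]
  | add p q hp hq => simp only [map_add, hp, hq]
  | mul_X p i hp =>
    simp only [map_mul, Derivation.leibniz, smul_eq_mul, map_add, Polynomial.derivative_mul, hp]
    have e1 : finSuccEquiv K 2 (pderiv 0 (X i)) = Polynomial.derivative (finSuccEquiv K 2 (X i)) := by
      refine Fin.cases ?_ (fun j => ?_) i
      · rw [finSuccEquiv_X_zero]; simp
      · rw [finSuccEquiv_X_succ, pderiv_X_of_ne (by simp [Fin.succ_ne_zero])]; simp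
    rw [e1]; ring

lemma totalDegree_pderiv_le (i : Fin 3) (u : MvPolynomial (Fin 3) K) :
    (pderiv i u).totalDegree ≤ u.totalDegree - 1 := by
  conv_lhs => rw [u.as_sum, map_sum]
  refine totalDegree_finsetSum_le ?_
  intro s hs
  rw [pderiv_monomial]
  by_cases h0 : s i = 0
  · simp [h0]
  refine (totalDegree_monomial_le _ _).trans ?_
  have h1 : (s.sum fun _ e => e) ≤ u.totalDegree := le_totalDegree hs
  have h2 : s = (s - Finsupp.single i 1) + Finsupp.single i 1 := by
    ext j
    by_cases hj : j = i
    · subst hj; simp; omega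
    · simp [Ne.symm hj]
  have h3 : (s.sum fun _ e => e) = ((s - Finsupp.single i 1).sum fun _ e => e) + 1 := by
    conv_lhs => rw [h2]
    rw [Finsupp.sum_add_index' (by simp) (by simp), Finsupp.sum_single_index rfl]
  change ((s - Finsupp.single i 1).sum fun _ e => e) ≤ _
  omega

lemma degreeOf_zero_of_pderiv_eq_zero (p : ℕ) [CharP K p] (u : MvPolynomial (Fin 3) K)
    (hd : u.totalDegree < p) (h : pderiv 0 u = 0) : degreeOf 0 u = 0 := by
  by_contra hne
  rw [← natDegree_finSuccEquiv] at hne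
  have h1 := fse_pderiv u
  rw [h, map_zero] at h1
  obtain ⟨n, hn⟩ := Nat.exists_eq_succ_of_ne_zero hne
  have h2 := congrArg (fun q => Polynomial.coeff q n) h1.symm
  simp only [Polynomial.coeff_derivative, Polynomial.coeff_zero] at h2
  have hle := natDegree_fse_le u
  rcases mul_eq_zero.1 h2 with h3 | h3
  · have : (finSuccEquiv K 2 u).leadingCoeff = 0 := by
      rw [Polynomial.leadingCoeff, hn]; exact h3
    rw [Polynomial.leadingCoeff_eq_zero] at this
    rw [this] at hn; simp at hn
  · have h4 : ((n + 1 : ℕ) : MvPolynomial (Fin 2) K) = 0 := by push_cast; exact h3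
    have h5 : C (σ := Fin 2) ((n + 1 : ℕ) : K) = 0 := by rw [map_natCast]; exact h4
    rw [C_eq_zero, CharP.cast_eq_zero_iff K p] at h5
    have := Nat.le_of_dvd (by omega) h5
    omega

/-- The curvature polynomial. -/
noncomputable def W (u : MvPolynomial (Fin 3) K) : MvPolynomial (Fin 3) K :=
  pderiv 1 (pderiv 1 u) * (pderiv 0 u) ^ 2 - 2 * pderiv 0 (pderiv 1 u) * pderiv 1 u * pderiv 0 u
    + pderiv 0 (pderiv 0 u) * (pderiv 1 u) ^ 2

/-- restriction to a line in a plane Z = z -/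
noncomputable def red (G c z : K) : MvPolynomial (Fin 3) K →ₐ[K] Polynomial K :=
  aeval ![Polynomial.C G * Polynomial.X + Polynomial.C c, Polynomial.X, Polynomial.C z]

/-- restriction to a line in a plane X = x -/
noncomputable def blue (x s t : K) : MvPolynomial (Fin 3) K →ₐ[K] Polynomial K :=
  aeval ![Polynomial.C s * Polynomial.X + Polynomial.C t, Polynomial.C x, Polynomial.X]

lemma deriv_red (G c z : K) (f : MvPolynomial (Fin 3) K) :
    Polynomial.derivative (red G c z f) = red G c z (pderiv 1 f) + Polynomial.C G * red G c z (pderiv 0 f) := by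
  rw [red, deriv_aeval, Fin.sum_univ_three]
  simp
  ring

lemma red_eval (G c z x : K) (f : MvPolynomial (Fin 3) K) :
    (red G c z f).eval x = aeval ![G * x + c, x, z] f := by
  induction f using MvPolynomial.induction_on with
  | C a => simp [red]
  | add p q hp hq => simp only [map_add, Polynomial.eval_add, hp, hq]
  | mul_X p i hp =>
    simp only [map_mul, Polynomial.eval_mul, hp]
    congr 1
    fin_cases i <;> simp [red]

lemma blue_eval (x s t z : K) (f : MvPolynomial (Fin 3) K) :
    (blue x s t f).eval z = aeval ![s * z + t, x, z] f := by
  induction f using MvPolynomial.induction_on with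
  | C a => simp [blue]
  | add p q hp hq => simp only [map_add, Polynomial.eval_add, hp, hq]
  | mul_X p i hp =>
    simp only [map_mul, Polynomial.eval_mul, hp]
    congr 1
    fin_cases i <;> simp [blue]

lemma red_natDegree (G c z : K) (f : MvPolynomial (Fin 3) K) :
    (red G c z f).natDegree ≤ f.totalDegree := by
  have := aeval_natDegree_le (n := 1) f le_rfl
    ![Polynomial.C G * Polynomial.X + Polynomial.C c, Polynomial.X, Polynomial.C z]
    (by
      intro i
      fin_cases i
      · exact Polynomial.natDegree_linear_le
      · simp
      · simp)
  rw [mul_one] at this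
  exact this

lemma pderiv_comm' (i j : Fin 3) (u : MvPolynomial (Fin 3) K) :
    pderiv i (pderiv j u) = pderiv j (pderiv i u) := by
  induction u using MvPolynomial.induction_on with
  | C a => simp
  | add p q hp hq => simp only [map_add, hp, hq]
  | mul_X p k hp =>
    have e : ∀ a b : Fin 3, pderiv a (pderiv b (X k : MvPolynomial (Fin 3) K)) = 0 := by
      intro a b
      rw [pderiv_X]
      by_cases h : b = k
      · subst h; simp
      · simp [h]
    simp only [Derivation.leibniz, smul_eq_mul, map_add, hp, e]
    ring

lemma red_W (G c z : K) (u : MvPolynomial (Fin 3) K) :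
    ∃ h, red G c z (W u) = (red G c z (pderiv 0 u)) ^ 2 *
      Polynomial.derivative (Polynomial.derivative (red G c z u)) +
      Polynomial.derivative (red G c z u) * h := by
  have hc : pderiv 1 (pderiv 0 u) = pderiv 0 (pderiv 1 u) := by
    exact pderiv_comm' 1 0 u
  refine ⟨red G c z (pderiv 0 (pderiv 0 u)) * (Polynomial.derivative (red G c z u)
    - 2 * Polynomial.C G * red G c z (pderiv 0 u)) - 2 * red G c z (pderiv 0 (pderiv 1 u)) *
    red G c z (pderiv 0 u), ?_⟩
  simp only [W, map_add, map_sub, map_mul, map_pow, map_ofNat, deriv_red, Polynomial.derivative_mul,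
    Polynomial.derivative_C, hc]
  ring

/-- Tangent lines are contained. -/
lemma tangent (p : ℕ) [CharP K p] (u : MvPolynomial (Fin 3) K) (hd : u.totalDegree < p)
    (hW : u ∣ W u) (y0 x0 z : K) (h0 : aeval ![y0, x0, z] u = 0)
    (h1 : aeval ![y0, x0, z] (pderiv 0 u) ≠ 0) :
    ∃ G c, G * x0 + c = y0 ∧ red G c z u = 0 := by
  set G := - aeval ![y0, x0, z] (pderiv 1 u) / aeval ![y0, x0, z] (pderiv 0 u) with hG
  refine ⟨G, y0 - G * x0, by ring, ?_⟩
  set c := y0 - G * x0 with hc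
  have hy : G * x0 + c = y0 := by rw [hc]; ring
  by_contra hne
  set ψ := red G c z u with hψ
  obtain ⟨q, hq, hq0⟩ := Polynomial.exists_eq_pow_rootMultiplicity_mul_and_not_dvd ψ hne x0
  set k := ψ.rootMultiplicity x0 with hk
  have e0 : ψ.IsRoot x0 := by
    rw [Polynomial.IsRoot, hψ, red_eval, hy]; exact h0
  have e1 : (Polynomial.derivative ψ).IsRoot x0 := by
    rw [Polynomial.IsRoot, hψ, deriv_red, Polynomial.eval_add, Polynomial.eval_mul, red_eval,
      red_eval, hy, Polynomial.eval_C, hG]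
    field_simp
    ring
  have hk2 : 1 < k := (Polynomial.one_lt_rootMultiplicity_iff_isRoot hne).2 ⟨e0, e1⟩
  have hkp : k < p := by
    have a1 : k ≤ ψ.natDegree := by
      classical
      rw [hk, ← Polynomial.count_roots]
      exact (Multiset.count_le_card _ _).trans (Polynomial.card_roots' _)
    exact (a1.trans (red_natDegree _ _ _ _)).trans_lt hd
  have cast_ne : ∀ n : ℕ, 0 < n → n < p → (n : K) ≠ 0 := by
    intro n hn hnp h
    rw [CharP.cast_eq_zero_iff K p] at h
    exact absurd (Nat.le_of_dvd hn h) (by omega)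
  obtain ⟨j, hj⟩ : ∃ j, k = j + 2 := ⟨k - 2, by omega⟩
  obtain ⟨h, hh⟩ := red_W G c z u
  obtain ⟨w, hw⟩ := hW
  rw [hw, map_mul, ← hψ] at hh
  have hqx : q.eval x0 ≠ 0 := by
    intro h; exact hq0 (Polynomial.dvd_iff_isRoot.2 h)
  set T : Polynomial K := Polynomial.X - Polynomial.C x0 with hT
  have hTd : Polynomial.derivative T = 1 := by simp [hT]
  rw [hj] at hq
  have d1 : Polynomial.derivative ψ = T ^ (j + 1) * (((j + 2 : ℕ) : Polynomial K) * q + T * Polynomial.derivative q) := by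
    rw [hq, Polynomial.derivative_mul, Polynomial.derivative_pow, hTd]
    simp only [map_natCast]
    have : j + 2 - 1 = j + 1 := rfl
    rw [this]; ring
  set q1 := (((j + 2 : ℕ) : Polynomial K) * q + T * Polynomial.derivative q) with hq1
  have d2 : Polynomial.derivative (Polynomial.derivative ψ) = T ^ j * (((j + 1 : ℕ) : Polynomial K) * q1 + T * Polynomial.derivative q1) := by
    rw [d1, Polynomial.derivative_mul, Polynomial.derivative_pow, hTd]
    simp only [map_natCast]
    have : j + 1 - 1 = j := rfl
    rw [this]; ring
  rw [d2, d1] at hh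
  have hTne : T ≠ 0 := Polynomial.X_sub_C_ne_zero x0
  have hh2 : T ^ j * (T ^ 2 * q * red G c z w) = T ^ j * ((red G c z (pderiv 0 u)) ^ 2 * (((j + 1 : ℕ) : Polynomial K) * q1 + T * Polynomial.derivative q1) + T * q1 * h) := by
    have : ψ * red G c z w = T ^ j * (T ^ 2 * q * red G c z w) := by
      rw [hq]; ring
    rw [← this, hh]; ring
  have hh3 := mul_left_cancel₀ (pow_ne_zero j hTne) hh2
  have hh4 := congrArg (Polynomial.eval x0) hh3
  have hTe : T.eval x0 = 0 := by simp [hT]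
  have hq1e : q1.eval x0 = ((j + 2 : ℕ) : K) * q.eval x0 := by
    rw [hq1]; simp [hTe]
  have hue : (red G c z (pderiv 0 u)).eval x0 ≠ 0 := by
    rw [red_eval, hy]; exact h1
  simp only [Polynomial.eval_mul, Polynomial.eval_add, Polynomial.eval_pow, hTe, hq1e,
    Polynomial.eval_natCast] at hh4
  have n1 := cast_ne (j + 1) (by omega) (by omega)
  have n2 := cast_ne (j + 2) (by omega) (by omega)
  have : (red G c z (pderiv 0 u)).eval x0 ^ 2 * (((j + 1 : ℕ) : K) * (((j + 2 : ℕ) : K) * q.eval x0)) = 0 := by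
    linear_combination -hh4
  exact absurd this (by
    refine mul_ne_zero (pow_ne_zero _ hue) (mul_ne_zero n1 (mul_ne_zero n2 hqx)))

end SDE


namespace SDE
open MvPolynomial

variable {K : Type*} [Field K]

lemma dvd_of_subst (x : K) (f : MvPolynomial (Fin 3) K)
    (h : aeval (![X 0, C x, X 2] : Fin 3 → MvPolynomial (Fin 3) K) f = 0) :
    (X 1 - C x : MvPolynomial (Fin 3) K) ∣ f := by
  rw [← Ideal.mem_span_singleton]
  set I := Ideal.span {(X 1 - C x : MvPolynomial (Fin 3) K)} with hI
  rw [← Ideal.Quotient.eq_zero_iff_mem]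
  have key : ∀ f : MvPolynomial (Fin 3) K, Ideal.Quotient.mk I f =
      Ideal.Quotient.mk I (aeval (![X 0, C x, X 2] : Fin 3 → MvPolynomial (Fin 3) K) f) := by
    intro f
    induction f using MvPolynomial.induction_on with
    | C a => simp
    | add p q hp hq => simp only [map_add, hp, hq]
    | mul_X p i hp =>
      rw [map_mul, map_mul, map_mul, hp, aeval_X]
      refine congrArg₂ (· * ·) rfl ?_
      fin_cases i
      · rfl
      · rw [Ideal.Quotient.eq, hI]; exact Ideal.mem_span_singleton_self _
      · rfl
  rw [key, h, map_zero]

lemma not_dvd_pderiv (u : MvPolynomial (Fin 3) K) (hY : pderiv 0 u ≠ 0) : ¬ u ∣ pderiv 0 u := by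
  intro h
  have h1 := totalDegree_le_of_dvd_of_isDomain h hY
  have h2 := totalDegree_pderiv_le 0 u
  have h3 : u.totalDegree = 0 := by omega
  rw [totalDegree_eq_zero_iff_eq_C] at h3
  apply hY; rw [h3]; simp

lemma degreeOf_ne_of_pderiv (u : MvPolynomial (Fin 3) K) (hY : pderiv 0 u ≠ 0) :
    degreeOf 0 u ≠ 0 := by
  intro h
  rw [← natDegree_finSuccEquiv] at h
  apply hY
  apply (finSuccEquiv K 2).injective
  rw [fse_pderiv, map_zero, Polynomial.eq_C_of_natDegree_eq_zero h]; simp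

lemma subst_ne_zero (x : K) (u : MvPolynomial (Fin 3) K) (hu : Irreducible u)
    (hY : pderiv 0 u ≠ 0) :
    aeval (![X 0, C x, X 2] : Fin 3 → MvPolynomial (Fin 3) K) u ≠ 0 := by
  intro h
  obtain ⟨c, hc⟩ := dvd_of_subst x u h
  rcases hu.isUnit_or_isUnit hc with h1 | h1
  · have := h1.map (aeval (![0, x, 0] : Fin 3 → K))
    simp at this
  · rw [isUnit_iff_eq_C_of_isReduced] at h1
    obtain ⟨r, _, rfl⟩ := h1
    apply hY
    rw [hc]
    simp [Derivation.leibniz]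

lemma exists_eval_ne_zero [Infinite K] (f : MvPolynomial (Fin 3) K) (h : f ≠ 0) :
    ∃ y x z : K, aeval ![y, x, z] f ≠ 0 := by
  by_contra hcon
  push Not at hcon
  apply h
  apply MvPolynomial.funext
  intro v
  have := hcon (v 0) (v 1) (v 2)
  have hv : v = ![v 0, v 1, v 2] := by ext i; fin_cases i <;> rfl
  rw [hv, map_zero]
  rw [← this, aeval_eq_eval]

lemma aeval_rename_succ {B : Type*} [CommRing B] [Algebra K B] (y b c : B) (ρ : MvPolynomial (Fin 2) K) :
    aeval ![y, b, c] (rename Fin.succ ρ) = aeval ![b, c] ρ := by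
  rw [aeval_rename]; congr 1

lemma ruled [IsAlgClosed K] (p : ℕ) [CharP K p] (u : MvPolynomial (Fin 3) K)
    (hu : Irreducible u) (hd : u.totalDegree < p)
    (hW : u ∣ W u) (x s t : K) (hb : blue x s t u = 0) (G c z : K) (hr : red G c z u = 0)
    (hrY : red G c z (pderiv 0 u) ≠ 0) : G * x + c = s * z + t := by
  classical
  have hinf : Infinite K := IsAlgClosed.instInfinite
  have hY : pderiv 0 u ≠ 0 := by intro h; rw [h, map_zero] at hrY; exact hrY rfl
  have hdeg := degreeOf_ne_of_pderiv u hY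
  set N : MvPolynomial (Fin 3) K := (X 1 - C x) * pderiv 1 u +
    (X 0 - C s * X 2 - C t) * pderiv 0 u with hN
  have redN : ∀ G' c' z', red G' c' z' u = 0 → red G' c' z' N =
      (Polynomial.C (G' * x + c' - s * z' - t)) * red G' c' z' (pderiv 0 u) := by
    intro G' c' z' h
    have h1 := deriv_red G' c' z' u
    rw [h, Polynomial.derivative_zero] at h1
    have e0 : red G' c' z' (X 0) = Polynomial.C G' * Polynomial.X + Polynomial.C c' := by simp [red]
    have e1 : red G' c' z' (X 1) = Polynomial.X := by simp [red]
    have e2 : red G' c' z' (X 2) = Polynomial.C z' := by simp [red]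
    have eC : ∀ a : K, red G' c' z' (C a) = Polynomial.C a := by intro a; simp [red]
    rw [hN, map_add, map_mul, map_mul, map_sub, map_sub, map_sub, map_mul, e0, e1, e2, eC, eC, eC]
    simp only [Polynomial.C_sub, Polynomial.C_add, Polynomial.C_mul]
    linear_combination -(Polynomial.X - Polynomial.C x) * h1
  suffices hdvd : u ∣ N by
    obtain ⟨w, hw⟩ := hdvd
    have h1 := redN G c z hr
    rw [hw, map_mul, hr, zero_mul] at h1
    have h2 := (mul_eq_zero.1 h1.symm).resolve_right hrY
    rw [Polynomial.C_eq_zero] at h2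
    linear_combination h2
  by_contra hnd
  obtain ⟨r1, r1ne, -, a1, b1, hr1⟩ := elim u N hu hdeg hnd
  obtain ⟨r2, r2ne, -, a2, b2, hr2⟩ := elim u _ hu hdeg (not_dvd_pderiv u hY)
  set P := finSuccEquiv K 2 u with hP
  have hPne : P ≠ 0 := by
    intro h; exact hu.ne_zero ((finSuccEquiv K 2).injective (by rw [map_zero]; exact h))
  set l := P.leadingCoeff with hl
  have hlne : l ≠ 0 := by rwa [hl, Ne, Polynomial.leadingCoeff_eq_zero]
  set e := P.natDegree with he
  set u0 := aeval (![X 0, C x, X 2] : Fin 3 → MvPolynomial (Fin 3) K) u with hu0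
  have hu0ne : u0 ≠ 0 := subst_ne_zero x u hu hY
  have hinj := rename_injective (R := K) (Fin.succ : Fin 2 → Fin 3) (Fin.succ_injective 2)
  have hren : ∀ f : MvPolynomial (Fin 2) K, f ≠ 0 → rename (Fin.succ : Fin 2 → Fin 3) f ≠ 0 := by
    intro f hf h; apply hf; apply hinj; rw [h, map_zero]
  obtain ⟨ys, x0, z0, hne⟩ := exists_eval_ne_zero
    (rename Fin.succ r1 * rename Fin.succ r2 * rename Fin.succ l * u0)
    (mul_ne_zero (mul_ne_zero (mul_ne_zero (hren _ r1ne) (hren _ r2ne)) (hren _ hlne)) hu0ne)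
  rw [map_mul, map_mul, map_mul] at hne
  have hn4 := right_ne_zero_of_mul hne
  have hn3 := right_ne_zero_of_mul (left_ne_zero_of_mul hne)
  have hn2 := right_ne_zero_of_mul (left_ne_zero_of_mul (left_ne_zero_of_mul hne))
  have hn1 := left_ne_zero_of_mul (left_ne_zero_of_mul (left_ne_zero_of_mul hne))
  rw [aeval_rename_succ] at hn3
  have hn4' : aeval ![ys, x, z0] u ≠ 0 := by
    intro h; apply hn4
    rw [hu0, ← h]
    have key : ∀ f : MvPolynomial (Fin 3) K, aeval ![ys, x0, z0]
      (aeval (![X 0, C x, X 2] : Fin 3 → MvPolynomial (Fin 3) K) f) = aeval ![ys, x, z0] f := by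
      intro f
      induction f using MvPolynomial.induction_on with
      | C a => simp
      | add p q hp hq => simp only [map_add, hp, hq]
      | mul_X p i hp =>
        rw [map_mul, map_mul, map_mul, hp, aeval_X]
        refine congrArg₂ (· * ·) rfl ?_
        fin_cases i <;> simp
    exact key u
  -- the polynomial in Y at (x0,z0)
  set v0 : Polynomial K := P.map (aeval ![x0, z0] : MvPolynomial (Fin 2) K →ₐ[K] K).toRingHom with hv0
  have v0deg : v0.natDegree = e := by
    apply Polynomial.natDegree_map_of_leadingCoeff_ne_zero
    exact hn3
  have v0ne : v0 ≠ 0 := by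
    intro h
    have : v0.natDegree = 0 := by rw [h]; simp
    rw [v0deg, he, hP, natDegree_finSuccEquiv] at this
    exact hdeg this
  have v0eval : ∀ y, v0.eval y = aeval ![y, x0, z0] u := fun y => fse_eval y x0 z0 u
  have v0d : ∀ y, (Polynomial.derivative v0).eval y = aeval ![y, x0, z0] (pderiv 0 u) := by
    intro y
    rw [hv0, Polynomial.derivative_map, hP, ← fse_pderiv]
    exact fse_eval y x0 z0 _
  have hsimple : ∀ y, aeval ![y, x0, z0] u = 0 → aeval ![y, x0, z0] (pderiv 0 u) ≠ 0 := by
    intro y hy hy'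
    have h3 := congrArg (aeval ![y, x0, z0]) hr2
    rw [map_add, map_mul, map_mul, hy, hy', zero_mul, zero_mul, add_zero, aeval_rename_succ] at h3
    rw [aeval_rename_succ] at hn2
    exact hn2 h3
  have hnodup : v0.roots.Nodup := by
    rw [Multiset.nodup_iff_count_le_one]
    intro y
    rw [Polynomial.count_roots]
    by_contra hcon
    have h3 := (Polynomial.one_lt_rootMultiplicity_iff_isRoot v0ne (t := y)).1 (by omega)
    have h4 := h3.1
    have h5 := h3.2
    rw [Polynomial.IsRoot, v0eval] at h4
    rw [Polynomial.IsRoot, v0d] at h5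
    exact hsimple y h4 h5
  have hcard : v0.roots.toFinset.card = e := by
    rw [Multiset.toFinset_card_of_nodup hnodup, ← v0deg]
    exact (IsAlgClosed.splits v0).natDegree_eq_card_roots.symm
  -- lines
  have hline : ∀ y : K, ∃ q : K × K, y ∈ v0.roots → (q.1 * x0 + q.2 = y ∧ red q.1 q.2 z0 u = 0) := by
    intro y
    by_cases hy : y ∈ v0.roots
    · have h3 : aeval ![y, x0, z0] u = 0 := by
        rw [← v0eval]; exact (Polynomial.mem_roots'.1 hy).2
      obtain ⟨G', c', h4, h5⟩ := tangent p u hd hW y x0 z0 h3 (hsimple y h3)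
      exact ⟨(G', c'), fun _ => ⟨h4, h5⟩⟩
    · exact ⟨(0, 0), fun h => absurd h hy⟩
  choose q hq using hline
  set ℓ : K → Polynomial K := fun y => Polynomial.C (q y).1 * Polynomial.X + Polynomial.C (q y).2 with hℓ
  set S : Finset (Polynomial K) := v0.roots.toFinset.image ℓ with hS
  have hScard : S.card = e := by
    rw [hS, Finset.card_image_of_injOn, hcard]
    intro y hy y' hy' h
    have h3 := congrArg (Polynomial.eval x0) h
    simp only [hℓ, Polynomial.eval_add, Polynomial.eval_mul, Polynomial.eval_C, Polynomial.eval_X] at h3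
    rw [(hq y (by simpa using hy)).1, (hq y' (by simpa using hy')).1] at h3
    exact h3
  set Pv : Polynomial (Polynomial K) := P.map (aeval ![Polynomial.X, Polynomial.C z0] :
    MvPolynomial (Fin 2) K →ₐ[K] Polynomial K).toRingHom with hPv
  have Pveval : ∀ w : Polynomial K, Pv.eval w = aeval ![w, Polynomial.X, Polynomial.C z0] u :=
    fun w => fse_eval w _ _ u
  -- evaluating everything
  have Pvev2 : ∀ y x' : K, (Pv.eval (Polynomial.C y)).eval x' = aeval ![y, x', z0] u := by
    intro y x'
    have := red_eval 0 y z0 x' u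
    simp only [zero_mul, zero_add] at this
    rw [Pveval, ← this, red]
    simp
  have Pvne : Pv ≠ 0 := by
    intro h
    have := Pvev2 ys x
    rw [h] at this
    simp at this
    exact hn4' this.symm
  have hSroots : S.val ≤ Pv.roots := by
    rw [Multiset.le_iff_subset S.nodup]
    intro w hw
    have hw' : w ∈ S := hw
    rw [hS, Finset.mem_image] at hw'
    obtain ⟨y, hy, rfl⟩ := hw'
    rw [Polynomial.mem_roots Pvne, Polynomial.IsRoot, Pveval]
    exact (hq y (by simpa using hy)).2
  obtain ⟨Q, hQ⟩ := (Multiset.prod_X_sub_C_dvd_iff_le_roots Pvne S.val).2 hSroots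
  have hQdeg : Q.natDegree = 0 := by
    have h3 : Pv.natDegree ≤ e := Polynomial.natDegree_map_le
    have hQne : Q ≠ 0 := by rintro rfl; exact Pvne (by rw [hQ, mul_zero])
    have hm := Polynomial.monic_multisetProd_X_sub_C S.val
    rw [hQ, hm.natDegree_mul' hQne, Polynomial.natDegree_multiset_prod_X_sub_C_eq_card] at h3
    have : S.val.card = e := hScard
    omega
  obtain ⟨qq, hqq⟩ := Polynomial.natDegree_eq_zero.1 hQdeg
  have hprod : ∀ y x' : K, aeval ![y, x', z0] u = (∏ w ∈ S, (y - w.eval x')) * qq.eval x' := by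
    intro y x'
    rw [← Pvev2, hQ, ← hqq, Polynomial.eval_mul, Polynomial.eval_C, Polynomial.eval_mul]
    congr 1
    have : (Multiset.map (fun a => Polynomial.X - Polynomial.C a) S.val).prod = ∏ a ∈ S, (Polynomial.X - Polynomial.C a) := rfl
    rw [this, Polynomial.eval_prod, Polynomial.eval_prod]
    simp
  have hqx : qq.eval x ≠ 0 := by
    intro h; apply hn4'; rw [hprod, h, mul_zero]
  have hbz : aeval ![s * z0 + t, x, z0] u = 0 := by
    rw [← blue_eval, hb]; simp
  rw [hprod] at hbz
  have h6 := (mul_eq_zero.1 hbz).resolve_right hqx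
  rw [Finset.prod_eq_zero_iff] at h6
  obtain ⟨w, hwS, hw⟩ := h6
  rw [hS, Finset.mem_image] at hwS
  obtain ⟨y, hy, rfl⟩ := hwS
  have hy' := hq y (by simpa using hy)
  simp only [hℓ, Polynomial.eval_add, Polynomial.eval_mul, Polynomial.eval_C, Polynomial.eval_X] at hw
  have h7 := redN _ _ _ hy'.2
  have h8 : (q y).1 * x + (q y).2 - s * z0 - t = 0 := by linear_combination -hw
  rw [h8, Polynomial.C_0, zero_mul] at h7
  have h9 := congrArg (red (q y).1 (q y).2 z0) hr1
  rw [map_add, map_mul, map_mul, hy'.2, h7, zero_mul, zero_mul, add_zero] at h9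
  have h10 := congrArg (Polynomial.eval x0) h9
  rw [red_eval, aeval_rename_succ] at h10
  rw [aeval_rename_succ] at hn1
  exact hn1 (by simpa using h10)

end SDE


namespace SDE
open MvPolynomial

variable {K : Type*} [Field K]

lemma totalDegree_W_le (u : MvPolynomial (Fin 3) K) : (W u).totalDegree ≤ 3 * u.totalDegree := by
  have h := fun i (f : MvPolynomial (Fin 3) K) => (totalDegree_pderiv_le i f).trans (Nat.sub_le _ _)
  have h2 := fun i j (f : MvPolynomial (Fin 3) K) => (h i (pderiv j f)).trans (h j f)
  have m := fun (f g : MvPolynomial (Fin 3) K) => totalDegree_mul f g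
  have two : (2 : MvPolynomial (Fin 3) K).totalDegree = 0 := by
    have : (2 : MvPolynomial (Fin 3) K) = C 2 := (map_ofNat C 2).symm
    rw [this, totalDegree_C]
  rw [W]
  refine (totalDegree_add _ _).trans (max_le ((totalDegree_sub _ _).trans (max_le ?_ ?_)) ?_)
  · refine (m _ _).trans ?_
    rw [pow_two]
    have := m (pderiv 0 u) (pderiv 0 u)
    have := h 0 u
    have := h2 1 1 u
    omega
  · refine (m _ _).trans ?_
    have := m (2 * pderiv 0 (pderiv 1 u)) (pderiv 1 u)
    have := m 2 (pderiv 0 (pderiv 1 u))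
    have := h 0 u
    have := h 1 u
    have := h2 0 1 u
    omega
  · refine (m _ _).trans ?_
    rw [pow_two]
    have := m (pderiv 1 u) (pderiv 1 u)
    have := h 1 u
    have := h2 0 0 u
    omega

lemma bezout_count [Infinite K] {ι : Type*} [DecidableEq ι] (R : Finset ι) (G c Z : ι → K)
    (hZ : Set.InjOn Z R) (u V : MvPolynomial (Fin 3) K) (hu : Irreducible u)
    (hy : degreeOf 0 u ≠ 0) (hV : ¬ u ∣ V) (S : Finset ι) (hS : S ⊆ R)
    (h : ∀ r ∈ S, red (G r) (c r) (Z r) u = 0 ∧ red (G r) (c r) (Z r) V = 0) :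
    S.card ≤ (u.totalDegree + V.totalDegree) * max u.totalDegree V.totalDegree := by
  classical
  obtain ⟨ρ, hρ, hdeg, a, b, hab⟩ := elim u V hu hy hV
  refine le_trans ?_ hdeg
  have hren : rename (Fin.succ : Fin 2 → Fin 3) ρ ≠ 0 := by
    intro h0; apply hρ
    apply rename_injective (R := K) (Fin.succ : Fin 2 → Fin 3) (Fin.succ_injective 2)
    rw [h0, map_zero]
  obtain ⟨y0, x0, z0, hne⟩ := exists_eval_ne_zero _ hren
  rw [aeval_rename_succ] at hne
  set τ : Polynomial K := blue x0 0 0 (rename Fin.succ ρ) with hτ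
  have τe : ∀ z, τ.eval z = aeval ![x0, z] ρ := by
    intro z; rw [hτ, blue_eval, aeval_rename_succ]
  have τne : τ ≠ 0 := by
    intro h0; apply hne; rw [← τe, h0]; simp
  have τd : τ.natDegree ≤ ρ.totalDegree := by
    have := aeval_natDegree_le (n := 1) ρ le_rfl
      ![Polynomial.C x0, Polynomial.X]
      (by intro i; fin_cases i <;> simp)
    rw [mul_one] at this
    rw [hτ, blue, aeval_rename_succ]
    exact this
  calc S.card = (S.image Z).card := (Finset.card_image_of_injOn (hZ.mono (by exact_mod_cast hS))).symm
    _ ≤ τ.roots.toFinset.card := by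
        apply Finset.card_le_card
        intro z hz
        obtain ⟨r, hr, rfl⟩ := Finset.mem_image.1 hz
        rw [Multiset.mem_toFinset, Polynomial.mem_roots τne, Polynomial.IsRoot, τe]
        have h1 := congrArg (red (G r) (c r) (Z r)) hab
        rw [map_add, map_mul, map_mul, (h r hr).1, (h r hr).2, zero_mul, zero_mul, add_zero] at h1
        have h2 := congrArg (Polynomial.eval x0) h1
        rw [red_eval, aeval_rename_succ] at h2
        simpa using h2
    _ ≤ τ.natDegree := (Multiset.toFinset_card_le _).trans (Polynomial.card_roots' _)
    _ ≤ _ := τd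

lemma exists_factors (f : MvPolynomial (Fin 3) K) (hf : f ≠ 0) :
    ∃ Φ : Finset (MvPolynomial (Fin 3) K), (∀ u ∈ Φ, Irreducible u) ∧
      (∑ u ∈ Φ, u.totalDegree ≤ f.totalDegree) ∧
      ∀ φ : MvPolynomial (Fin 3) K →ₐ[K] Polynomial K, φ f = 0 → ∃ u ∈ Φ, φ u = 0 := by
  classical
  induction f using WfDvdMonoid.induction_on_irreducible with
  | zero => exact absurd rfl hf
  | unit f h =>
    refine ⟨∅, by simp, by simp, fun φ h0 => ?_⟩
    have := h.map φ
    rw [h0] at this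
    simp at this
  | mul a i ha hi ih =>
    obtain ⟨Φ, h1, h2, h3⟩ := ih ha
    refine ⟨insert i Φ, ?_, ?_, ?_⟩
    · intro u hu
      rcases Finset.mem_insert.1 hu with rfl | hu
      · exact hi
      · exact h1 u hu
    · rw [totalDegree_mul_of_isDomain hi.ne_zero ha]
      by_cases hmem : i ∈ Φ
      · rw [Finset.insert_eq_of_mem hmem]; omega
      · rw [Finset.sum_insert hmem]; omega
    · intro φ h0
      rw [map_mul] at h0
      rcases mul_eq_zero.1 h0 with h | h
      · exact ⟨i, Finset.mem_insert_self _ _, h⟩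
      · obtain ⟨u, hu, hu0⟩ := h3 φ h
        exact ⟨u, Finset.mem_insert_of_mem hu, hu0⟩

lemma totalDegree_pos_of_irreducible (u : MvPolynomial (Fin 3) K) (hu : Irreducible u) :
    1 ≤ u.totalDegree := by
  by_contra h
  have h3 : u.totalDegree = 0 := by omega
  rw [totalDegree_eq_zero_iff_eq_C] at h3
  apply hu.not_isUnit
  rw [h3, isUnit_iff_eq_C_of_isReduced]
  refine ⟨_, ?_, rfl⟩
  rw [isUnit_iff_ne_zero]
  intro h0; rw [h0] at h3; simp at h3; exact hu.ne_zero h3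

lemma blue_natDegree (x s t : K) (f : MvPolynomial (Fin 3) K) :
    (blue x s t f).natDegree ≤ f.totalDegree := by
  have := aeval_natDegree_le (n := 1) f le_rfl
    ![Polynomial.C s * Polynomial.X + Polynomial.C t, Polynomial.C x, Polynomial.X]
    (by
      intro i
      fin_cases i
      · exact Polynomial.natDegree_linear_le
      · simp
      · simp)
  rw [mul_one] at this
  exact this

lemma exists_vanishing {κ : Type*} (T : Finset κ) (x s t : κ → K) :
    ∃ f : MvPolynomial (Fin 3) K, f ≠ 0 ∧ f.totalDegree ≤ 3 * Nat.sqrt (3 * T.card) ∧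
      ∀ b ∈ T, blue (x b) (s b) (t b) f = 0 := by
  classical
  set n := T.card with hn
  set q := Nat.sqrt (3 * n) with hq
  set E : Finset (Fin 3 →₀ ℕ) := (Fintype.piFinset fun _ : Fin 3 => Finset.range (q + 1)).image
    Finsupp.equivFunOnFinite.symm with hE
  have hEcard : E.card = (q + 1) ^ 3 := by
    rw [hE, Finset.card_image_of_injective _ (Equiv.injective _), Fintype.card_piFinset]
    simp
  let F : (E → K) →ₗ[K] MvPolynomial (Fin 3) K :=
    ∑ e : E, (monomial (R := K) e.1) ∘ₗ (LinearMap.proj e)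
  have hF : ∀ a, F a = ∑ e : E, monomial e.1 (a e) := by
    intro a; simp [F]
  let Ψ : (E → K) →ₗ[K] (T × Fin (3 * q + 1) → K) :=
    LinearMap.pi fun bi => (Polynomial.lcoeff K bi.2) ∘ₗ
      ((blue (x bi.1) (s bi.1) (t bi.1)).toLinearMap ∘ₗ F)
  have hΨ : ∀ a b i, Ψ a (b, i) = (blue (x b) (s b) (t b) (F a)).coeff i := by
    intro a b i; simp [Ψ]
  have hdim : Module.finrank K (T × Fin (3 * q + 1) → K) < Module.finrank K (E → K) := by
    rw [Module.finrank_fintype_fun_eq_card, Module.finrank_fintype_fun_eq_card, Fintype.card_prod,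
      Fintype.card_coe, Fintype.card_coe, hEcard, Fintype.card_fin]
    have h1 : 3 * n < (q + 1) * (q + 1) := Nat.lt_succ_sqrt (3 * n)
    have : n * (3 * q + 1) ≤ 3 * n * (q + 1) := by nlinarith
    calc n * (3 * q + 1) ≤ 3 * n * (q + 1) := this
      _ < (q + 1) * (q + 1) * (q + 1) := by
        apply Nat.mul_lt_mul_of_pos_right h1; omega
      _ = (q + 1) ^ 3 := by ring
  have hker := LinearMap.ker_ne_bot_of_finrank_lt (f := Ψ) hdim
  obtain ⟨a, ha, hane⟩ := (Submodule.ne_bot_iff _).1 hker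
  rw [LinearMap.mem_ker] at ha
  have hdeg : (F a).totalDegree ≤ 3 * q := by
    rw [hF]
    refine totalDegree_finsetSum_le ?_
    intro e _
    refine (totalDegree_monomial_le _ _).trans ?_
    obtain ⟨v, hv, hve⟩ := Finset.mem_image.1 e.2
    change ((e.1).sum fun _ e => e) ≤ _
    rw [Finsupp.sum_fintype _ _ (by simp)]
    calc ∑ i, e.1 i ≤ ∑ _i : Fin 3, q := by
          apply Finset.sum_le_sum
          intro i _
          have := Fintype.mem_piFinset.1 hv i
          rw [← hve]
          simp at this ⊢
          omega
      _ = 3 * q := by simp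
  refine ⟨F a, ?_, hdeg, ?_⟩
  · intro h0
    apply hane
    ext e
    have h1 := congrArg (coeff e.1) h0
    rw [hF, coeff_sum, Finset.sum_eq_single e] at h1
    · simpa using h1
    · intro e' _ hne
      rw [coeff_monomial, if_neg]
      intro h; exact hne (Subtype.ext h)
    · simp
  · intro b hb
    ext i
    rw [Polynomial.coeff_zero]
    by_cases hi : i < 3 * q + 1
    · have := congrFun ha (⟨b, hb⟩, ⟨i, hi⟩)
      rw [hΨ] at this
      simpa using this
    · apply Polynomial.coeff_eq_zero_of_natDegree_lt
      have := blue_natDegree (x b) (s b) (t b) (F a)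
      omega

lemma no_red_blue [Infinite K] (u : MvPolynomial (Fin 3) K) (hu : Irreducible u)
    (hy : degreeOf 0 u = 0) (x s t : K) (hb : blue x s t u = 0) (G c z : K)
    (hr : red G c z u = 0) : False := by
  rw [← natDegree_finSuccEquiv] at hy
  have h0 := Polynomial.eq_C_of_natDegree_eq_zero hy
  set ρ := (finSuccEquiv K 2 u).coeff 0
  have h1 : u = rename Fin.succ ρ := by
    apply (finSuccEquiv K 2).injective; rw [fse_rename, h0]
  have h2 : aeval (![X 0, C x, X 2] : Fin 3 → MvPolynomial (Fin 3) K) u = 0 := by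
    by_contra hne
    obtain ⟨y', x', z', h3⟩ := exists_eval_ne_zero _ hne
    apply h3
    rw [h1, aeval_rename_succ]
    have key : ∀ f : MvPolynomial (Fin 2) K, aeval ![y', x', z']
        (aeval (![C x, X 2] : Fin 2 → MvPolynomial (Fin 3) K) f) = aeval ![x, z'] f := by
      intro f
      induction f using MvPolynomial.induction_on with
      | C a => simp
      | add p q hp hq => simp only [map_add, hp, hq]
      | mul_X p i hp =>
        rw [map_mul, map_mul, map_mul, hp, aeval_X]
        refine congrArg₂ (· * ·) rfl ?_
        fin_cases i <;> simp
    rw [key]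
    have h4 := congrArg (Polynomial.eval z') hb
    rw [blue_eval, h1, aeval_rename_succ] at h4
    simpa using h4
  obtain ⟨e, he⟩ := dvd_of_subst x u h2
  rcases hu.isUnit_or_isUnit he with h3 | h3
  · have := h3.map (aeval (![0, x, 0] : Fin 3 → K))
    simp at this
  · have h4 := h3.map (red G c z)
    rw [he, map_mul] at hr
    rcases mul_eq_zero.1 hr with h5 | h5
    · have : red G c z (X 1 - C x) = Polynomial.X - Polynomial.C x := by simp [red]
      rw [this] at h5
      exact Polynomial.X_sub_C_ne_zero x h5
    · rw [h5] at h4; simp at h4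

end SDE


namespace SDE
open MvPolynomial

lemma card_filter_prod_le_left {ι κ : Type*} (R : Finset ι) (T : Finset κ) (Q : ι → κ → Prop) [∀ r b, Decidable (Q r b)] (d : ℕ)
    (h : ∀ r ∈ R, (T.filter (Q r)).card ≤ d) :
    ((R ×ˢ T).filter fun q => Q q.1 q.2).card ≤ R.card * d := by
  rw [Finset.card_filter, Finset.sum_product]
  calc _ ≤ ∑ r ∈ R, d := by
        apply Finset.sum_le_sum; intro r hr
        have := h r hr
        rw [Finset.card_filter] at this
        exact this
    _ = _ := by simp

lemma card_filter_prod_le_right {ι κ : Type*} (R : Finset ι) (T : Finset κ) (Q : ι → κ → Prop) [∀ r b, Decidable (Q r b)] (d : ℕ)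
    (h : ∀ b ∈ T, (R.filter fun r => Q r b).card ≤ d) :
    ((R ×ˢ T).filter fun q => Q q.1 q.2).card ≤ T.card * d := by
  rw [Finset.card_filter, Finset.sum_product_right]
  calc _ ≤ ∑ b ∈ T, d := by
        apply Finset.sum_le_sum; intro r hr
        have := h r hr
        rw [Finset.card_filter] at this
        exact this
    _ = _ := by simp

variable {K : Type*} [Field K]

/-- incidence structure count -/
noncomputable def Inc {ι κ : Type*} (J : ι → κ → Prop) (R : Finset ι) (T : Finset κ) : ℕ :=
  by classical exact ((R ×ˢ T).filter fun q => J q.1 q.2).card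

open Classical in
lemma one_step [IsAlgClosed K] (p : ℕ) [CharP K p] {ι κ : Type*} (R : Finset ι) (T : Finset κ)
    (G c Z : ι → K) (x s t : κ → K) (hZ : Set.InjOn Z R) (hx : Set.InjOn x T) (k : ℕ)
    (hp : 27 * T.card < p ^ 2) (J : ι → κ → Prop)
    (hJ : ∀ r b, J r b ↔ G r * x b + c r = s b * Z r + t b)
    (hk : ∀ b ∈ T, ∀ b' ∈ T, b ≠ b' → (R.filter fun r => J r b ∧ J r b').card ≤ k) :
    ∃ R' ⊆ R, R'.card ≤ 378 * T.card ∧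
      Inc J R T ≤ R.card * (6 * Nat.sqrt (3 * T.card)) + T.card * k + Inc J R' T := by
  have hinf : Infinite K := IsAlgClosed.instInfinite
  obtain ⟨f, hf, hfd, hfb⟩ := exists_vanishing T x s t
  set d := 3 * Nat.sqrt (3 * T.card) with hd
  have hd2 : d ^ 2 ≤ 27 * T.card := by
    have := Nat.sqrt_le (3 * T.card)
    rw [hd]; nlinarith
  have hdp : d < p := lt_of_pow_lt_pow_left₀ 2 (by omega) (by omega)
  obtain ⟨Φ, hirr, hsum, hΦ⟩ := exists_factors f hf
  have hsum' : ∑ u ∈ Φ, u.totalDegree ≤ d := hsum.trans hfd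
  have hud : ∀ u ∈ Φ, u.totalDegree ≤ d := fun u hu =>
    (Finset.single_le_sum (f := fun u : MvPolynomial (Fin 3) K => u.totalDegree)
      (fun _ _ => Nat.zero_le _) hu).trans hsum'
  have hΦcard : Φ.card ≤ d := by
    calc Φ.card = ∑ u ∈ Φ, 1 := by simp
      _ ≤ ∑ u ∈ Φ, u.totalDegree :=
        Finset.sum_le_sum fun u hu => totalDegree_pos_of_irreducible u (hirr u hu)
      _ ≤ d := hsum'
  have hU : ∀ b, ∃ u, b ∈ T → u ∈ Φ ∧ blue (x b) (s b) (t b) u = 0 := by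
    intro b
    by_cases hb : b ∈ T
    · obtain ⟨u, hu, hu0⟩ := hΦ _ (hfb b hb)
      exact ⟨u, fun _ => ⟨hu, hu0⟩⟩
    · exact ⟨0, fun h => absurd h hb⟩
  choose U hU using hU
  let φ : ι → MvPolynomial (Fin 3) K →ₐ[K] Polynomial K := fun r => red (G r) (c r) (Z r)
  let bad : ι → MvPolynomial (Fin 3) K → Prop := fun r u =>
    (∃ b ∈ T, blue (x b) (s b) (t b) u = 0) ∧ φ r u = 0 ∧ (¬ u ∣ W u ∨ φ r (pderiv 0 u) = 0)
  refine ⟨R.filter fun r => ∃ u ∈ Φ, bad r u, Finset.filter_subset _ _, ?_, ?_⟩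
  · have hcov : (R.filter fun r => ∃ u ∈ Φ, bad r u) ⊆ Φ.biUnion fun u => R.filter fun r => bad r u := by
      intro r hr
      rw [Finset.mem_filter] at hr
      obtain ⟨hr, u, hu, hb⟩ := hr
      exact Finset.mem_biUnion.2 ⟨u, hu, Finset.mem_filter.2 ⟨hr, hb⟩⟩
    have hone : ∀ u ∈ Φ, (R.filter fun r => bad r u).card ≤ 14 * u.totalDegree * d := by
      intro u hu
      have hupos := totalDegree_pos_of_irreducible u (hirr u hu)
      have hule := hud u hu
      by_cases hy : degreeOf 0 u = 0
      · have : (R.filter fun r => bad r u) = ∅ := by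
          rw [Finset.filter_eq_empty_iff]
          rintro r hr ⟨⟨b, hb, hb0⟩, hr0, -⟩
          exact no_red_blue u (hirr u hu) hy _ _ _ hb0 _ _ _ hr0
        rw [this]; simp
      · have hY : pderiv 0 u ≠ 0 := fun h =>
          hy (degreeOf_zero_of_pderiv_eq_zero p u (lt_of_le_of_lt (hud u hu) hdp) h)
        by_cases hW : u ∣ W u
        · have := bezout_count R G c Z hZ u (pderiv 0 u) (hirr u hu) hy (not_dvd_pderiv u hY)
            (R.filter fun r => bad r u) (Finset.filter_subset _ _) (by
              intro r hr
              obtain ⟨-, -, h1, h2⟩ := Finset.mem_filter.1 hr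
              exact ⟨h1, h2.resolve_left (not_not.2 hW)⟩)
          refine this.trans ?_
          have h1 := totalDegree_pderiv_le 0 u
          have h2 : max u.totalDegree (pderiv 0 u).totalDegree = u.totalDegree := max_eq_left (by omega)
          rw [h2]
          calc _ ≤ (2 * u.totalDegree) * d := Nat.mul_le_mul (by omega) hule
            _ ≤ _ := Nat.mul_le_mul_right _ (by omega)
        · · -- W restricted vanishes on any contained red line
            have := bezout_count R G c Z hZ u (W u) (hirr u hu) hy hW
              (R.filter fun r => bad r u) (Finset.filter_subset _ _) (by
                intro r hr
                obtain ⟨-, -, h1, h2⟩ := Finset.mem_filter.1 hr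
                refine ⟨h1, ?_⟩
                obtain ⟨h, hh⟩ := red_W (G r) (c r) (Z r) u
                have h1' : red (G r) (c r) (Z r) u = 0 := h1
                rw [hh, h1']; simp)
            refine this.trans ?_
            have h1 := totalDegree_W_le u
            calc _ ≤ (4 * u.totalDegree) * (3 * u.totalDegree) :=
                  Nat.mul_le_mul (by omega) (max_le (by omega) h1)
              _ = 12 * u.totalDegree * u.totalDegree := by ring
              _ ≤ 14 * u.totalDegree * d := Nat.mul_le_mul (by omega) hule
    calc _ ≤ _ := Finset.card_le_card hcov
      _ ≤ ∑ u ∈ Φ, (R.filter fun r => bad r u).card := Finset.card_biUnion_le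
      _ ≤ ∑ u ∈ Φ, 14 * u.totalDegree * d := Finset.sum_le_sum hone
      _ = 14 * d * ∑ u ∈ Φ, u.totalDegree := by
          rw [Finset.mul_sum]; apply Finset.sum_congr rfl; intro u _; ring
      _ ≤ 14 * d * d := Nat.mul_le_mul_left _ hsum'
      _ ≤ 378 * T.card := by nlinarith
  · set R' := R.filter fun r => ∃ u ∈ Φ, bad r u with hR'
    have hA : ((R ×ˢ T).filter fun q => J q.1 q.2 ∧ φ q.1 (U q.2) ≠ 0).card ≤ R.card * d := by
      refine card_filter_prod_le_left R T (fun r b => J r b ∧ φ r (U b) ≠ 0) d ?_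
      intro r hr
      have hcov : (T.filter fun b => J r b ∧ φ r (U b) ≠ 0) ⊆
          Φ.biUnion fun u => T.filter fun b => U b = u ∧ J r b ∧ φ r (U b) ≠ 0 := by
        intro b hb
        have hb' := Finset.mem_filter.1 hb
        exact Finset.mem_biUnion.2 ⟨U b, (hU b hb'.1).1, Finset.mem_filter.2 ⟨hb'.1, rfl, hb'.2⟩⟩
      refine (Finset.card_le_card hcov).trans (Finset.card_biUnion_le.trans ?_)
      refine le_trans (Finset.sum_le_sum fun u hu => ?_) hsum'
      by_cases h0 : φ r u = 0
      · have : (T.filter fun b => U b = u ∧ J r b ∧ φ r (U b) ≠ 0) = ∅ := by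
          rw [Finset.filter_eq_empty_iff]
          rintro b _ ⟨rfl, _, h⟩
          exact h h0
        rw [this]; simp
      · calc _ = ((T.filter fun b => U b = u ∧ J r b ∧ φ r (U b) ≠ 0).image x).card :=
              (Finset.card_image_of_injOn (hx.mono (by
                intro b hb
                exact (Finset.mem_filter.1 hb).1))).symm
          _ ≤ (φ r u).roots.toFinset.card := by
              apply Finset.card_le_card
              intro w hw
              obtain ⟨b, hb, rfl⟩ := Finset.mem_image.1 hw
              obtain ⟨hbT, rfl, hJb, -⟩ := Finset.mem_filter.1 hb
              rw [Multiset.mem_toFinset, Polynomial.mem_roots h0, Polynomial.IsRoot]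
              change (red (G r) (c r) (Z r) (U b)).eval (x b) = 0
              rw [red_eval, (hJ r b).1 hJb, ← blue_eval, (hU b hbT).2]; simp
          _ ≤ (φ r u).natDegree := (Multiset.toFinset_card_le _).trans (Polynomial.card_roots' _)
          _ ≤ _ := red_natDegree _ _ _ _
    have hB : ((R ×ˢ T).filter fun q => φ q.1 (U q.2) = 0 ∧
        ∀ b' ∈ T, U b' = U q.2 → b' = q.2).card ≤ R.card * d := by
      refine card_filter_prod_le_left R T
        (fun r b => φ r (U b) = 0 ∧ ∀ b' ∈ T, U b' = U b → b' = b) d ?_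
      intro r hr
      refine le_trans ?_ hΦcard
      apply Finset.card_le_card_of_injOn U
      · intro b hb
        exact (hU b (Finset.mem_filter.1 hb).1).1
      · intro b hb b' hb' h
        have h1 := Finset.mem_filter.1 (Finset.mem_coe.1 hb)
        have h2 := Finset.mem_filter.1 (Finset.mem_coe.1 hb')
        exact h2.2.2 b h1.1 h
    have hC : ((R ×ˢ T).filter fun q => ¬ bad q.1 (U q.2) ∧ φ q.1 (U q.2) = 0 ∧
        ∃ b' ∈ T, U b' = U q.2 ∧ b' ≠ q.2).card ≤ T.card * k := by
      refine card_filter_prod_le_right R T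
        (fun r b => ¬ bad r (U b) ∧ φ r (U b) = 0 ∧ ∃ b' ∈ T, U b' = U b ∧ b' ≠ b) k ?_
      intro b hb
      by_cases hex : ∃ b' ∈ T, U b' = U b ∧ b' ≠ b
      · obtain ⟨b', hb', hUb', hne⟩ := hex
        refine le_trans (Finset.card_le_card ?_) (hk b hb b' hb' hne.symm)
        intro r hr
        obtain ⟨hrR, hnb, h0, -⟩ := Finset.mem_filter.1 hr
        have h1 : U b ∣ W (U b) ∧ φ r (pderiv 0 (U b)) ≠ 0 := by
          by_contra hcon
          apply hnb
          refine ⟨⟨b, hb, (hU b hb).2⟩, h0, ?_⟩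
          by_cases h2 : U b ∣ W (U b)
          · right; by_contra h3; exact hcon ⟨h2, h3⟩
          · left; exact h2
        have hru := ruled p (U b) (hirr _ (hU b hb).1) (lt_of_le_of_lt (hud _ (hU b hb).1) hdp) h1.1
        refine Finset.mem_filter.2 ⟨hrR, (hJ r b).2 ?_, (hJ r b').2 ?_⟩
        · exact hru _ _ _ (hU b hb).2 _ _ _ h0 h1.2
        · refine hru _ _ _ ?_ _ _ _ h0 h1.2
          rw [← hUb']; exact (hU b' hb').2
      · have : (R.filter fun r => ¬ bad r (U b) ∧ φ r (U b) = 0 ∧ ∃ b' ∈ T, U b' = U b ∧ b' ≠ b) = ∅ := by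
          rw [Finset.filter_eq_empty_iff]
          rintro r _ ⟨_, _, h⟩
          exact hex h
        rw [this]; simp
    have hcov : ((R ×ˢ T).filter fun q => J q.1 q.2) ⊆
        ((R ×ˢ T).filter fun q => J q.1 q.2 ∧ φ q.1 (U q.2) ≠ 0) ∪
        ((R ×ˢ T).filter fun q => φ q.1 (U q.2) = 0 ∧ ∀ b' ∈ T, U b' = U q.2 → b' = q.2) ∪
        ((R ×ˢ T).filter fun q => ¬ bad q.1 (U q.2) ∧ φ q.1 (U q.2) = 0 ∧
        ∃ b' ∈ T, U b' = U q.2 ∧ b' ≠ q.2) ∪ ((R' ×ˢ T).filter fun q => J q.1 q.2) := by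
      rintro ⟨r, b⟩ hq
      obtain ⟨hm, hj⟩ := Finset.mem_filter.1 hq
      obtain ⟨hrR, hbT⟩ := Finset.mem_product.1 hm
      simp only [Finset.mem_union, Finset.mem_filter]
      by_cases h0 : φ r (U b) = 0
      · by_cases h1 : ∀ b' ∈ T, U b' = U b → b' = b
        · left; left; right; exact ⟨hm, h0, h1⟩
        · push Not at h1
          by_cases h2 : bad r (U b)
          · right
            refine ⟨Finset.mem_product.2 ⟨?_, hbT⟩, hj⟩
            exact Finset.mem_filter.2 ⟨hrR, U b, (hU b hbT).1, h2⟩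
          · left; right; exact ⟨hm, h2, h0, h1⟩
      · left; left; left; exact ⟨hm, hj, h0⟩
    have h1 := Finset.card_le_card hcov
    have h2 := h1.trans (Finset.card_union_le _ _)
    have h3 := Finset.card_union_le (((R ×ˢ T).filter fun q => J q.1 q.2 ∧ φ q.1 (U q.2) ≠ 0) ∪
        ((R ×ˢ T).filter fun q => φ q.1 (U q.2) = 0 ∧ ∀ b' ∈ T, U b' = U q.2 → b' = q.2))
        ((R ×ˢ T).filter fun q => ¬ bad q.1 (U q.2) ∧ φ q.1 (U q.2) = 0 ∧
        ∃ b' ∈ T, U b' = U q.2 ∧ b' ≠ q.2)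
    have h4 := Finset.card_union_le ((R ×ˢ T).filter fun q => J q.1 q.2 ∧ φ q.1 (U q.2) ≠ 0)
        ((R ×ˢ T).filter fun q => φ q.1 (U q.2) = 0 ∧ ∀ b' ∈ T, U b' = U q.2 → b' = q.2)
    have e1 : Inc J R T = ((R ×ˢ T).filter fun q => J q.1 q.2).card := by
      unfold Inc; congr!
    have e2 : Inc J R' T = ((R' ×ˢ T).filter fun q => J q.1 q.2).card := by
      unfold Inc; congr!
    have e3 : R.card * (6 * Nat.sqrt (3 * T.card)) = R.card * d + R.card * d := by rw [hd]; ring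
    rw [e1, e2, e3]
    omega

end SDE


namespace SDE

lemma exists_rich_subset {κ : Type*} [DecidableEq κ] (f : κ → ℕ) (t : ℕ) (ht : 1 ≤ t) :
    ∀ (n : ℕ) (T : Finset κ), T.card = n → t ≤ n →
      ∃ T' ⊆ T, T'.card = t ∧ t * ∑ b ∈ T, f b ≤ n * ∑ b ∈ T', f b := by
  intro n
  induction n with
  | zero => intro T _ h; omega
  | succ n ih =>
    intro T hT htn
    by_cases h : t = n + 1
    · exact ⟨T, subset_rfl, by omega, by rw [h]⟩
    · have hne : T.Nonempty := by rw [← Finset.card_pos]; omega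
      obtain ⟨b, hb, hmin⟩ := Finset.exists_min_image T f hne
      obtain ⟨T', hT', hc, hle⟩ := ih (T.erase b) (by rw [Finset.card_erase_of_mem hb]; omega) (by omega)
      refine ⟨T', hT'.trans (Finset.erase_subset _ _), hc, ?_⟩
      have h1 : (n + 1) * f b ≤ ∑ b ∈ T, f b := by
        have := Finset.card_nsmul_le_sum T f (f b) hmin
        rw [hT] at this; simpa using this
      have h2 : f b + ∑ a ∈ T.erase b, f a = ∑ a ∈ T, f a := Finset.add_sum_erase T f hb
      set S := ∑ a ∈ T, f a
      set S1 := ∑ a ∈ T.erase b, f a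
      set S2 := ∑ a ∈ T', f a
      have hn : 0 < n := by omega
      have h3 : n * S ≤ (n + 1) * S1 := by nlinarith
      have : n * (t * S) ≤ n * ((n + 1) * S2) := by
        calc n * (t * S) = t * (n * S) := by ring
          _ ≤ t * ((n + 1) * S1) := Nat.mul_le_mul_left _ h3
          _ = (n + 1) * (t * S1) := by ring
          _ ≤ (n + 1) * (n * S2) := Nat.mul_le_mul_left _ hle
          _ = _ := by ring
      exact Nat.le_of_mul_le_mul_left this hn

open Classical in
lemma Inc_eq_sum {ι κ : Type*} (J : ι → κ → Prop) (R : Finset ι) (T : Finset κ) :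
    Inc J R T = ∑ b ∈ T, (R.filter fun r => J r b).card := by
  have e1 : Inc J R T = ((R ×ˢ T).filter fun q => J q.1 q.2).card := by
    unfold Inc; congr!
  rw [e1, Finset.card_filter, Finset.sum_product_right]
  simp_rw [Finset.card_filter]

lemma Inc_le {ι κ : Type*} (J : ι → κ → Prop) (R : Finset ι) (T : Finset κ) :
    Inc J R T ≤ R.card * T.card := by
  classical
  rw [Inc_eq_sum, mul_comm]
  refine (Finset.sum_le_card_nsmul T _ R.card fun b _ => ?_).trans (by simp)
  convert Finset.card_filter_le R (fun r => J r b)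

lemma step_arith (r n t k l l' σ τ i i1 i2 q r' : ℝ) (hr : 0 ≤ r) (hk : 0 ≤ k)
    (hτ0 : 0 < τ) (hσ0 : 0 ≤ σ) (hττ : τ * τ = t) (hσσ : σ * σ = n)
    (h1 : 379 * τ ≤ σ) (h2 : σ ≤ 379 * 1.42 * τ) (hq : q ≤ 1.8 * τ) (hl : l' + 1 ≤ l)
    (hI : i1 ≤ r * (6 * q) + t * k + i2) (hle : t * i ≤ n * i1) (hr' : r' ≤ 378 * t)
    (hi2 : i2 ≤ 6000 * (r' + t) * τ + k * t * (1 + l')) :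
    i ≤ 6000 * (r + n) * σ + k * n * (1 + l) := by
  subst hττ; subst hσσ
  have a1 : r * (6 * q) ≤ r * (10.8 * τ) := mul_le_mul_of_nonneg_left (by linarith) hr
  have a2 : 6000 * (r' + τ * τ) * τ ≤ 6000 * (379 * (τ * τ)) * τ :=
    mul_le_mul_of_nonneg_right (by linarith) hτ0.le
  have a3 : k * (τ * τ) * (1 + l') ≤ k * (τ * τ) * l :=
    mul_le_mul_of_nonneg_left (by linarith) (by positivity)
  have a4 : i1 ≤ r * (10.8 * τ) + τ * τ * k + (6000 * (379 * (τ * τ)) * τ + k * (τ * τ) * l) := by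
    linarith
  have a5 : σ * σ * i1 ≤ σ * σ * (r * (10.8 * τ) + τ * τ * k + (6000 * (379 * (τ * τ)) * τ + k * (τ * τ) * l)) :=
    mul_le_mul_of_nonneg_left a4 (by positivity)
  have b1 : (σ * σ) * (r * (10.8 * τ)) ≤ τ * τ * (6000 * r * σ) := by
    have h5 : 0 ≤ r * σ * τ := by positivity
    calc (σ * σ) * (r * (10.8 * τ)) = σ * (10.8 * (r * σ * τ)) := by ring
      _ ≤ (379 * 1.42 * τ) * (10.8 * (r * σ * τ)) := mul_le_mul_of_nonneg_right h2 (by positivity)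
      _ = 5812.344 * (r * σ * τ * τ) + (379 * 1.42 * 10.8 - 5812.344) * (r * σ * τ * τ) := by ring
      _ ≤ 6000 * (r * σ * τ * τ) := by
        have : 0 ≤ r * σ * τ * τ := by positivity
        norm_num; linarith
      _ = _ := by ring
  have b2 : (σ * σ) * (6000 * (379 * (τ * τ)) * τ) ≤ τ * τ * (6000 * (σ * σ) * σ) := by
    calc (σ * σ) * (6000 * (379 * (τ * τ)) * τ) = (379 * τ) * (σ * σ * τ * τ * 6000) := by ring
      _ ≤ σ * (σ * σ * τ * τ * 6000) := mul_le_mul_of_nonneg_right h1 (by positivity)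
      _ = _ := by ring
  have c : τ * τ * i ≤ τ * τ * (6000 * (r + σ * σ) * σ + k * (σ * σ) * (1 + l)) := by
    calc τ * τ * i ≤ _ := hle
      _ ≤ _ := a5
      _ = (σ * σ) * (r * (10.8 * τ)) + (σ * σ) * (6000 * (379 * (τ * τ)) * τ) +
          τ * τ * (k * (σ * σ) * (1 + l)) := by ring
      _ ≤ τ * τ * (6000 * r * σ) + τ * τ * (6000 * (σ * σ) * σ) + τ * τ * (k * (σ * σ) * (1 + l)) := by
        linarith
      _ = _ := by ring
  exact le_of_mul_le_mul_left c (by positivity)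

variable {K : Type*} [Field K]

open Classical in
theorem incidence [IsAlgClosed K] (p : ℕ) [CharP K p] {ι κ : Type*}
    (G c Z : ι → K) (x s t : κ → K) (k : ℕ) (J : ι → κ → Prop)
    (hJ : ∀ r b, J r b ↔ G r * x b + c r = s b * Z r + t b) :
    ∀ (n : ℕ) (R : Finset ι) (T : Finset κ), T.card = n →
    Set.InjOn Z R → Set.InjOn x T → 27 * n < p ^ 2 →
    (∀ b ∈ T, ∀ b' ∈ T, b ≠ b' → (R.filter fun r => J r b ∧ J r b').card ≤ k) →
    (Inc J R T : ℝ) ≤ 6000 * (R.card + n) * Real.sqrt n + k * n * (1 + Nat.log 2 n) := by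
  intro n
  induction n using Nat.strong_induction_on with
  | _ n ih =>
  intro R T hT hZ hx hp hk
  have hs0 := Real.sqrt_nonneg (n : ℝ)
  have hss : Real.sqrt n * Real.sqrt n = n := Real.mul_self_sqrt (Nat.cast_nonneg n)
  have hRn : (0 : ℝ) ≤ R.card := Nat.cast_nonneg _
  have hnn : (0 : ℝ) ≤ n := Nat.cast_nonneg _
  have hkk : (0 : ℝ) ≤ k := Nat.cast_nonneg _
  by_cases hsmall : n < 379 ^ 2
  · have h1 : (Inc J R T : ℝ) ≤ R.card * n := by
      have := Inc_le J R T
      rw [hT] at this; exact_mod_cast this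
    have h2 : Real.sqrt n ≤ 379 := by
      rw [Real.sqrt_le_left (by norm_num)]
      exact_mod_cast hsmall.le
    have h3 : (R.card : ℝ) * n ≤ 6000 * (R.card + n) * Real.sqrt n := by
      have h4 : (n : ℝ) ≤ 379 * Real.sqrt n := by
        calc (n : ℝ) = Real.sqrt n * Real.sqrt n := hss.symm
          _ ≤ _ := mul_le_mul_of_nonneg_right h2 hs0
      have h7 : (R.card : ℝ) * n ≤ R.card * (379 * Real.sqrt n) :=
        mul_le_mul_of_nonneg_left h4 hRn
      have h5 : 0 ≤ (R.card : ℝ) * Real.sqrt n := by positivity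
      have h6 : 0 ≤ (n : ℝ) * Real.sqrt n := by positivity
      linarith
    have : (0 : ℝ) ≤ k * n * (1 + Nat.log 2 n) := by positivity
    linarith
  · push Not at hsmall
    set t' := n / 379 ^ 2 with ht'
    have ht1 : 1 ≤ t' := (Nat.one_le_div_iff (by norm_num)).2 hsmall
    have htn : 379 ^ 2 * t' ≤ n := Nat.mul_div_le n _
    have htn2 : n ≤ 2 * 379 ^ 2 * t' := by
      have := Nat.div_add_mod n (379 ^ 2)
      have h2 := Nat.mod_lt n (show 0 < 379 ^ 2 by norm_num)
      rw [← ht'] at this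
      omega
    obtain ⟨T', hT', hc, hle⟩ := exists_rich_subset (fun b => (R.filter fun r => J r b).card) t' ht1 n T hT
      (by omega)
    rw [← Inc_eq_sum, ← Inc_eq_sum] at hle
    obtain ⟨R', hR', hR'c, hI⟩ := one_step p R T' G c Z x s t hZ (hx.mono (by exact_mod_cast hT')) k
      (by rw [hc]; omega) J hJ (fun b hb b' hb' h => hk b (hT' hb) b' (hT' hb') h)
    have hind := ih t' (by omega) R' T' hc (hZ.mono (by exact_mod_cast hR'))
      (hx.mono (by exact_mod_cast hT')) (by omega) (fun b hb b' hb' h => by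
        refine le_trans (Finset.card_le_card ?_) (hk b (hT' hb) b' (hT' hb') h)
        exact Finset.filter_subset_filter _ hR')
    rw [hc] at hR'c hI
    have hlog : Nat.log 2 t' + 1 ≤ Nat.log 2 n := by
      rw [← Nat.log_mul_base (by norm_num) (by omega)]
      exact Nat.log_mono_right (by omega)
    have hlogR : (Nat.log 2 t' : ℝ) + 1 ≤ Nat.log 2 n := by exact_mod_cast hlog
    set τ : ℝ := Real.sqrt t' with hτ
    set σ : ℝ := Real.sqrt n with hσ
    have hτ0 : 0 < τ := Real.sqrt_pos.2 (by exact_mod_cast ht1)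
    have hττ : τ * τ = t' := Real.mul_self_sqrt (Nat.cast_nonneg t')
    have hστ : 379 * τ ≤ σ := by
      apply Real.le_sqrt_of_sq_le
      have : ((379 ^ 2 * t' : ℕ) : ℝ) ≤ n := by exact_mod_cast htn
      push_cast at this
      nlinarith
    have hστ2 : σ ≤ 379 * 1.42 * τ := by
      apply Real.sqrt_le_iff.2
      constructor
      · positivity
      · have : (n : ℝ) ≤ ((2 * 379 ^ 2 * t' : ℕ) : ℝ) := by exact_mod_cast htn2
        push_cast at this
        nlinarith
    have hsq3 : (Nat.sqrt (3 * t') : ℝ) ≤ 1.8 * τ := by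
      have h1 : (Nat.sqrt (3 * t') : ℝ) ≤ Real.sqrt ((3 * t' : ℕ) : ℝ) := Real.nat_sqrt_le_real_sqrt
      refine h1.trans ?_
      apply Real.sqrt_le_iff.2
      constructor
      · positivity
      · push_cast; nlinarith
    have hIR : (Inc J R T' : ℝ) ≤ R.card * (6 * (Nat.sqrt (3 * t') : ℝ)) + t' * k + Inc J R' T' := by
      exact_mod_cast hI
    have hleR : (t' : ℝ) * Inc J R T ≤ n * Inc J R T' := by exact_mod_cast hle
    have hR'R : (R'.card : ℝ) ≤ 378 * t' := by exact_mod_cast hR'c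
    exact step_arith R.card n t' k (Nat.log 2 n) (Nat.log 2 t') σ τ (Inc J R T) (Inc J R T')
      (Inc J R' T') (Nat.sqrt (3 * t')) R'.card hRn hkk hτ0 hs0 hττ hss hστ hστ2 hsq3 hlogR hIR hleR
      hR'R hind

end SDE


namespace SDE

lemma exists_generic (p : ℕ) [Fact p.Prime] {K : Type*} [Field K] [Infinite K] (φ : ZMod p →+* K) :
    ∃ ω τ : K,
      (∀ α β γ : ZMod p, φ α + φ β * ω + φ γ * ω ^ 2 = 0 → α = 0 ∧ β = 0 ∧ γ = 0) ∧
      (∀ α β γ δ : ZMod p, φ α + φ β * ω + φ γ * ω ^ 2 + φ δ * τ = 0 → δ = 0) := by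
  classical
  have hφ : ∀ a, φ a = 0 → a = 0 := fun a h => by
    exact (map_eq_zero φ).1 h
  let P : ZMod p × ZMod p × ZMod p → Polynomial K := fun q =>
    Polynomial.C (φ q.1) + Polynomial.C (φ q.2.1) * Polynomial.X + Polynomial.C (φ q.2.2) * Polynomial.X ^ 2
  obtain ⟨ω, hω⟩ := Infinite.exists_notMem_finset
    ((Finset.univ : Finset (ZMod p × ZMod p × ZMod p)).biUnion fun q => (P q).roots.toFinset)
  obtain ⟨τ, hτ⟩ := Infinite.exists_notMem_finset
    ((Finset.univ : Finset (ZMod p × ZMod p × ZMod p × ZMod p)).image fun q =>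
      -(φ q.1 + φ q.2.1 * ω + φ q.2.2.1 * ω ^ 2) / φ q.2.2.2)
  refine ⟨ω, τ, ?_, ?_⟩
  · intro α β γ h
    by_contra hne
    apply hω
    rw [Finset.mem_biUnion]
    refine ⟨(α, β, γ), Finset.mem_univ _, ?_⟩
    rw [Multiset.mem_toFinset, Polynomial.mem_roots']
    constructor
    · intro h0
      apply hne
      have h1 := congrArg (fun f => Polynomial.coeff f 0) h0
      have h2 := congrArg (fun f => Polynomial.coeff f 1) h0
      have h3 := congrArg (fun f => Polynomial.coeff f 2) h0
      simp [P, Polynomial.coeff_X, Polynomial.coeff_C] at h1 h2 h3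
      exact ⟨h1, h2, h3⟩
    · simpa [P, Polynomial.IsRoot] using h
  · intro α β γ δ h
    by_contra hδ
    apply hτ
    rw [Finset.mem_image]
    refine ⟨(α, β, γ, δ), Finset.mem_univ _, ?_⟩
    have : φ δ ≠ 0 := fun h => hδ (hφ _ h)
    simp only
    rw [div_eq_iff this]
    linear_combination (-1 : K) * h

def JQ {F : Type*} [Field F] (r b : (F × F) × F) : Prop :=
  r.1.1 * b.2 + r.1.2 = b.1.1 * r.2 + b.1.2

lemma two_planes {F : Type*} [Field F] [DecidableEq F] (L : Finset (F × F)) (S : Finset F) (κ : ℕ)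
    (hκ : ∀ a ∈ S, ∀ y, (L.filter fun l => l.1 * a + l.2 = y).card ≤ κ)
    (b b' : (F × F) × F) (hb : b ∈ L ×ˢ S) (hne : b ≠ b')
    [DecidablePred fun r : (F × F) × F => JQ r b ∧ JQ r b'] :
    ((L ×ˢ S).filter fun r => JQ r b ∧ JQ r b').card ≤ S.card + κ := by
  obtain ⟨⟨g1, c1⟩, a1⟩ := b
  obtain ⟨⟨g2, c2⟩, a2⟩ := b'
  have ha1 : a1 ∈ S := (Finset.mem_product.1 hb).2
  by_cases h : a1 = a2
  · subst h
    by_cases hg : g1 = g2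
    · subst hg
      rw [Finset.card_eq_zero.2]
      · omega
      · rw [Finset.filter_eq_empty_iff]
        rintro ⟨⟨g, c⟩, a⟩ _ ⟨h1, h2⟩
        simp only [JQ] at h1 h2
        apply hne
        have : c1 = c2 := by linear_combination h2 - h1
        rw [this]
    · refine le_trans ?_ ((hκ a1 ha1 (g1 * ((c2 - c1) / (g1 - g2)) + c1)).trans (Nat.le_add_left _ _))
      have hg' : g1 - g2 ≠ 0 := sub_ne_zero.2 hg
      have key : ∀ r : (F × F) × F, JQ r ((g1, c1), a1) ∧ JQ r ((g2, c2), a1) →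
          r.2 = (c2 - c1) / (g1 - g2) := by
        rintro ⟨⟨g, c⟩, a⟩ ⟨h1, h2⟩
        simp only [JQ] at h1 h2
        simp only
        rw [eq_div_iff hg']
        linear_combination h2 - h1
      apply Finset.card_le_card_of_injOn (fun r => r.1)
      · intro r hr
        simp only [Finset.coe_filter, Set.mem_ofPred_eq, Finset.mem_product] at hr
        have := key r hr.2
        simp only [Finset.coe_filter, Set.mem_ofPred_eq]
        refine ⟨hr.1.1, ?_⟩
        rw [← this]
        exact hr.2.1
      · intro r hr r' hr' hrr
        simp only [Finset.coe_filter, Set.mem_ofPred_eq, Finset.mem_product] at hr hr'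
        exact Prod.ext hrr ((key r hr.2).trans (key r' hr'.2).symm)
  · refine le_trans ?_ (Nat.le_add_right _ _)
    apply Finset.card_le_card_of_injOn (fun r => r.2)
    · intro r hr
      simp only [Finset.coe_filter, Set.mem_ofPred_eq, Finset.mem_product] at hr
      exact hr.1.2
    · rintro ⟨⟨g, c⟩, a⟩ hr ⟨⟨g', c'⟩, a'⟩ hr' haa
      simp only [Finset.coe_filter, Set.mem_ofPred_eq] at hr hr'
      simp only at haa
      subst haa
      obtain ⟨_, h1, h2⟩ := hr
      obtain ⟨_, h3, h4⟩ := hr'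
      simp only [JQ] at h1 h2 h3 h4
      have hgg : g = g' := by
        have h5 : (g - g') * (a1 - a2) = 0 := by linear_combination h1 - h2 - h3 + h4
        rcases mul_eq_zero.1 h5 with h6 | h6
        · exact sub_eq_zero.1 h6
        · exact absurd (sub_eq_zero.1 h6) h
      subst hgg
      have : c = c' := by linear_combination h1 - h3
      rw [this]

lemma change_iff {K : Type*} [Field K] {g c a g' c' a' ω τ : K} (e : 1 + ω * g ≠ 0) (e' : 1 + ω * g' ≠ 0) :
    g * a + c = g' * a' + c' ↔
    g / (1 + ω * g) * ((a + τ * g' + ω * c') / (1 + ω * g')) + c / (1 + ω * g) =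
      g' / (1 + ω * g') * ((a' + τ * g + ω * c) / (1 + ω * g)) + c' / (1 + ω * g') := by
  generalize hd : 1 + ω * g = d at *
  generalize hd' : 1 + ω * g' = d' at *
  constructor
  · intro h
    field_simp
    rw [← hd, ← hd']
    linear_combination h
  · intro h
    field_simp at h
    rw [← hd, ← hd'] at h
    linear_combination h

theorem lemmaQ_aux (p : ℕ) [Fact p.Prime] {K : Type*} [Field K] [IsAlgClosed K] [CharP K p]
    (φ : ZMod p →+* K) (L : Finset (ZMod p × ZMod p)) (S : Finset (ZMod p)) (κ : ℕ)
    (hκ : ∀ a ∈ S, ∀ y, (L.filter fun l => l.1 * a + l.2 = y).card ≤ κ)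
    (hp : 27 * (L.card * S.card) < p ^ 2) :
    (Inc JQ (L ×ˢ S) (L ×ˢ S) : ℝ) ≤ 12000 * ((L.card * S.card : ℕ) : ℝ) * Real.sqrt ((L.card * S.card : ℕ) : ℝ)
      + (S.card + κ) * ((L.card * S.card : ℕ) : ℝ) * (1 + Nat.log 2 (L.card * S.card)) := by
  classical
  have hinf : Infinite K := IsAlgClosed.instInfinite
  obtain ⟨ω, τ, h1, h2⟩ := exists_generic p φ
  have hφ : Function.Injective φ := φ.injective
  have hd : ∀ g : ZMod p, 1 + ω * φ g ≠ 0 := by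
    intro g hg
    have := h1 1 g 0 (by rw [map_one, map_zero]; linear_combination hg)
    exact one_ne_zero this.1
  let Z : (ZMod p × ZMod p) × ZMod p → K := fun r => (φ r.2 + τ * φ r.1.1 + ω * φ r.1.2) / (1 + ω * φ r.1.1)
  have hZ : Function.Injective Z := by
    rintro ⟨⟨g, c⟩, a⟩ ⟨⟨g', c'⟩, a'⟩ h
    simp only [Z] at h
    rw [div_eq_div_iff (hd _) (hd _)] at h
    have hg : g - g' = 0 := h2 (a - a') (c - c' + g' * a - g * a') (c * g' - c' * g) (g - g') (by
      simp only [map_add, map_sub, map_mul]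
      linear_combination h)
    obtain rfl := sub_eq_zero.1 hg
    obtain ⟨e1, e2, e3⟩ := h1 (a - a') (c - c' + g * a - g * a') (c * g - c' * g) (by
      simp only [map_add, map_sub, map_mul]
      linear_combination h)
    obtain rfl := sub_eq_zero.1 e1
    have : c = c' := by linear_combination e2
    rw [this]
  have hinc := incidence (K := K) p (ι := (ZMod p × ZMod p) × ZMod p) (κ := (ZMod p × ZMod p) × ZMod p)
    (fun r => φ r.1.1 / (1 + ω * φ r.1.1)) (fun r => φ r.1.2 / (1 + ω * φ r.1.1)) Z Z
    (fun r => φ r.1.1 / (1 + ω * φ r.1.1)) (fun r => φ r.1.2 / (1 + ω * φ r.1.1)) (S.card + κ) JQ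
    (by
      rintro ⟨⟨g, c⟩, a'⟩ ⟨⟨g', c'⟩, a⟩
      simp only [JQ, Z]
      have e := hd g
      have e' := hd g'
      rw [← hφ.eq_iff]
      simp only [map_add, map_mul]
      exact change_iff e e')
    (L.card * S.card) (L ×ˢ S) (L ×ˢ S) (Finset.card_product _ _) hZ.injOn hZ.injOn hp
    (by
      intro b hb b' _ hne
      convert two_planes L S κ hκ b b' hb hne)
  refine hinc.trans (le_of_eq ?_)
  rw [Finset.card_product]
  push_cast
  ring

theorem lemmaQ (p : ℕ) [Fact p.Prime] (L : Finset (ZMod p × ZMod p)) (S : Finset (ZMod p)) (κ : ℕ)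
    (hκ : ∀ a ∈ S, ∀ y, (L.filter fun l => l.1 * a + l.2 = y).card ≤ κ)
    (hp : 27 * (L.card * S.card) < p ^ 2) :
    (Inc JQ (L ×ˢ S) (L ×ˢ S) : ℝ) ≤ 12000 * ((L.card * S.card : ℕ) : ℝ) * Real.sqrt ((L.card * S.card : ℕ) : ℝ)
      + (S.card + κ) * ((L.card * S.card : ℕ) : ℝ) * (1 + Nat.log 2 (L.card * S.card)) :=
  haveI : CharP (AlgebraicClosure (ZMod p)) p :=
    charP_of_injective_algebraMap (algebraMap (ZMod p) (AlgebraicClosure (ZMod p))).injective p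
  lemmaQ_aux p (algebraMap (ZMod p) (AlgebraicClosure (ZMod p))) L S κ hκ hp

end SDE


namespace SDE

/-- number of (line, abscissa) pairs whose value lies in `T` -/
def II {F : Type*} [Field F] [DecidableEq F] (L : Finset (F × F)) (S T : Finset F) : ℕ :=
  ((L ×ˢ S).filter fun u => u.1.1 * u.2 + u.1.2 ∈ T).card

lemma II_sq_le {F : Type*} [Field F] [DecidableEq F] (L : Finset (F × F)) (S T : Finset F) :
    (II L S T) ^ 2 ≤ T.card * Inc JQ (L ×ˢ S) (L ×ˢ S) := by
  classical
  set U := L ×ˢ S with hU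
  let ev : (F × F) × F → F := fun u => u.1.1 * u.2 + u.1.2
  have h1 : II L S T = ∑ t ∈ T, (U.filter fun u => ev u = t).card := by
    unfold II
    rw [← hU, Finset.card_eq_sum_card_fiberwise (f := ev) (t := T)]
    · refine Finset.sum_congr rfl fun t ht => ?_
      congr 1
      ext u
      simp only [Finset.mem_filter]
      constructor
      · rintro ⟨⟨a, _⟩, b⟩; exact ⟨a, b⟩
      · rintro ⟨a, b⟩; exact ⟨⟨a, by rw [← b] at ht; exact ht⟩, b⟩
    · intro u hu
      have := (Finset.mem_filter.1 (Finset.mem_coe.1 hu)).2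
      exact this
  have h2 : ∑ t ∈ T, (U.filter fun u => ev u = t).card ^ 2 ≤ Inc JQ U U := by
    have h3 : ∀ t ∈ T, (U.filter fun u => ev u = t).card ^ 2 =
        (((U ×ˢ U).filter fun q => ev q.1 = ev q.2 ∧ ev q.1 ∈ T).filter fun q => ev q.1 = t).card := by
      intro t ht
      rw [sq, ← Finset.card_product]
      congr 1
      ext q
      simp only [Finset.mem_filter, Finset.mem_product]
      constructor
      · rintro ⟨⟨a, b⟩, c, d⟩; exact ⟨⟨⟨a, c⟩, by rw [b, d], by rw [b]; exact ht⟩, b⟩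
      · rintro ⟨⟨⟨a, c⟩, b, _⟩, d⟩; exact ⟨⟨a, d⟩, c, by rw [← b, d]⟩
    rw [Finset.sum_congr rfl h3, ← Finset.card_eq_sum_card_fiberwise (f := fun q : ((F × F) × F) × ((F × F) × F) => ev q.1) (t := T)]
    · unfold Inc
      apply Finset.card_le_card_of_injOn (fun q => ((q.1.1, q.2.2), (q.2.1, q.1.2)))
      · intro q hq
        have hq := Finset.mem_coe.1 hq
        rw [Finset.mem_filter, Finset.mem_product, hU, Finset.mem_product, Finset.mem_product] at hq
        apply Finset.mem_coe.2
        rw [Finset.mem_filter, Finset.mem_product, hU, Finset.mem_product, Finset.mem_product]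
        exact ⟨⟨⟨hq.1.1.1, hq.1.2.2⟩, ⟨hq.1.2.1, hq.1.1.2⟩⟩, hq.2.1⟩
      · rintro ⟨⟨a, b⟩, c, d⟩ _ ⟨⟨a', b'⟩, c', d'⟩ _ h
        simp only [Prod.mk.injEq] at h ⊢
        tauto
    · intro q hq
      exact (Finset.mem_filter.1 (Finset.mem_coe.1 hq)).2.2
  rw [h1]
  exact (sq_sum_le_card_mul_sum_sq).trans (Nat.mul_le_mul_left _ h2)

lemma card_lines_one {F : Type*} [Field F] [Fintype F] [DecidableEq F] (s t : F) :
    ((Finset.univ : Finset (F × F)).filter fun l => l.1 * s + l.2 = t).card = Fintype.card F := by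
  rw [← Finset.card_univ]
  apply Finset.card_bij (fun l _ => l.1)
  · intro l _; exact Finset.mem_univ _
  · intro l hl l' hl' h
    have h1 := (Finset.mem_filter.1 hl).2
    have h2 := (Finset.mem_filter.1 hl').2
    refine Prod.ext h ?_
    rw [h] at h1
    linear_combination h1 - h2
  · intro g _
    exact ⟨(g, t - g * s), by simp, rfl⟩

lemma card_lines_two {F : Type*} [Field F] [Fintype F] [DecidableEq F] (s t s' t' : F)
    (h : (s, t) ≠ (s', t')) :
    ((Finset.univ : Finset (F × F)).filter fun l => l.1 * s + l.2 = t ∧ l.1 * s' + l.2 = t').card ≤ 1 := by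
  rw [Finset.card_le_one]
  intro l hl l' hl'
  obtain ⟨_, h1, h2⟩ := Finset.mem_filter.1 hl
  obtain ⟨_, h3, h4⟩ := Finset.mem_filter.1 hl'
  have hs : s - s' ≠ 0 := by
    intro hs
    have hs := sub_eq_zero.1 hs
    subst hs
    apply h
    rw [← h1, ← h2]
  have : (l.1 - l'.1) * (s - s') = 0 := by linear_combination h1 - h2 - h3 + h4
  have hg : l.1 = l'.1 := by
    rcases mul_eq_zero.1 this with h | h
    · exact sub_eq_zero.1 h
    · exact absurd h hs
  refine Prod.ext hg ?_
  rw [hg] at h1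
  linear_combination h1 - h3

lemma II_eq_sum {F : Type*} [Field F] [DecidableEq F] (L : Finset (F × F)) (S T : Finset F) :
    II L S T = ∑ l ∈ L, (S.filter fun s => l.1 * s + l.2 ∈ T).card := by
  unfold II
  rw [Finset.card_filter, Finset.sum_product]
  simp_rw [Finset.card_filter]

lemma inc_eq {F : Type*} [Field F] [DecidableEq F] (l : F × F) (S T : Finset F) :
    (S.filter fun s => l.1 * s + l.2 ∈ T).card =
      ∑ q ∈ S ×ˢ T, if l.1 * q.1 + l.2 = q.2 then 1 else 0 := by
  rw [Finset.card_filter, Finset.sum_product]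
  refine Finset.sum_congr rfl fun s _ => ?_
  simp only [Finset.sum_ite_eq]

lemma vinh_sum {F : Type*} [Field F] [Fintype F] [DecidableEq F] (S T : Finset F) :
    ∑ l : F × F, (S.filter fun s => l.1 * s + l.2 ∈ T).card = Fintype.card F * (S.card * T.card) := by
  simp_rw [inc_eq]
  rw [Finset.sum_comm]
  simp_rw [← Finset.card_filter]
  rw [Finset.sum_congr rfl (fun q _ => card_lines_one q.1 q.2)]
  rw [Finset.sum_const, Finset.card_product, smul_eq_mul, mul_comm]

lemma vinh_sq {F : Type*} [Field F] [Fintype F] [DecidableEq F] (S T : Finset F) :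
    ∑ l : F × F, (S.filter fun s => l.1 * s + l.2 ∈ T).card ^ 2 ≤
      Fintype.card F * (S.card * T.card) + (S.card * T.card) ^ 2 := by
  have h : ∀ l : F × F, (S.filter fun s => l.1 * s + l.2 ∈ T).card ^ 2 =
      ∑ q ∈ S ×ˢ T, ∑ q' ∈ S ×ˢ T, if l.1 * q.1 + l.2 = q.2 ∧ l.1 * q'.1 + l.2 = q'.2 then 1 else 0 := by
    intro l
    rw [sq, inc_eq, Finset.sum_mul_sum]
    refine Finset.sum_congr rfl fun q _ => Finset.sum_congr rfl fun q' _ => ?_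
    by_cases h1 : l.1 * q.1 + l.2 = q.2 <;> by_cases h2 : l.1 * q'.1 + l.2 = q'.2 <;> simp [h1, h2]
  simp_rw [h]
  rw [Finset.sum_comm]
  have h2 : ∀ q ∈ S ×ˢ T, ∑ l : F × F, ∑ q' ∈ S ×ˢ T,
      (if l.1 * q.1 + l.2 = q.2 ∧ l.1 * q'.1 + l.2 = q'.2 then 1 else 0) ≤
      Fintype.card F + S.card * T.card := by
    intro q hq
    rw [Finset.sum_comm]
    simp_rw [← Finset.card_filter]
    rw [← Finset.add_sum_erase _ _ hq]
    refine Nat.add_le_add ?_ ?_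
    · simp only [and_self]
      rw [card_lines_one]
    · refine (Finset.sum_le_card_nsmul _ _ 1 fun q' hq' => ?_).trans ?_
      · exact card_lines_two _ _ _ _ (fun h => (Finset.mem_erase.1 hq').1 h.symm)
      · rw [smul_eq_mul, mul_one, ← Finset.card_product]
        exact Finset.card_le_card (Finset.erase_subset _ _)
  refine (Finset.sum_le_card_nsmul _ _ _ h2).trans (le_of_eq ?_)
  rw [Finset.card_product, smul_eq_mul]; ring

lemma vinh (p : ℕ) [Fact p.Prime] (L : Finset (ZMod p × ZMod p)) (S T : Finset (ZMod p)) :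
    ((II L S T : ℝ) - L.card * S.card * T.card / p) ^ 2 ≤ p * L.card * S.card * T.card := by
  have hp0 : (0 : ℝ) < p := by exact_mod_cast (Fact.out : p.Prime).pos
  set i : ZMod p × ZMod p → ℝ := fun l => ((S.filter fun s => l.1 * s + l.2 ∈ T).card : ℝ) with hi
  set N : ℝ := S.card * T.card with hN
  have h1 : ∑ l, i l = p * N := by
    have := vinh_sum (F := ZMod p) S T
    rw [ZMod.card] at this
    simp only [hi, hN]
    exact_mod_cast this
  have h2 : ∑ l, i l ^ 2 ≤ p * N + N ^ 2 := by
    have := vinh_sq (F := ZMod p) S T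
    rw [ZMod.card] at this
    simp only [hi, hN]
    exact_mod_cast this
  have h3 : ∑ l, (i l - N / p) ^ 2 ≤ p * N := by
    have e : ∑ l, (i l - N / p) ^ 2 = ∑ l, i l ^ 2 - 2 * (N / p) * ∑ l, i l + ∑ l : ZMod p × ZMod p, (N / p) ^ 2 := by
      rw [Finset.mul_sum, ← Finset.sum_sub_distrib, ← Finset.sum_add_distrib]
      refine Finset.sum_congr rfl fun l _ => by ring
    have e2 : ∑ l : ZMod p × ZMod p, (N / p) ^ 2 = N ^ 2 := by
      rw [Finset.sum_const, Finset.card_univ, Fintype.card_prod, ZMod.card, nsmul_eq_mul]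
      push_cast
      field_simp
    rw [e, e2, h1]
    have : 2 * (N / p) * (p * N) = 2 * N ^ 2 := by field_simp
    linarith
  have h4 : (II L S T : ℝ) - L.card * S.card * T.card / p = ∑ l ∈ L, (i l - N / p) := by
    rw [Finset.sum_sub_distrib, Finset.sum_const, II_eq_sum, nsmul_eq_mul]
    push_cast
    simp only [hN]
    ring
  rw [h4]
  calc (∑ l ∈ L, (i l - N / p)) ^ 2 ≤ L.card * ∑ l ∈ L, (i l - N / p) ^ 2 := sq_sum_le_card_mul_sum_sq
    _ ≤ L.card * ∑ l, (i l - N / p) ^ 2 := by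
      refine mul_le_mul_of_nonneg_left ?_ (Nat.cast_nonneg _)
      exact Finset.sum_le_sum_of_subset_of_nonneg (Finset.subset_univ _) fun _ _ _ => sq_nonneg _
    _ ≤ L.card * (p * N) := mul_le_mul_of_nonneg_left h3 (Nat.cast_nonneg _)
    _ = _ := by simp only [hN]; ring

theorem lemmaJ (p : ℕ) [Fact p.Prime] (L : Finset (ZMod p × ZMod p)) (S T : Finset (ZMod p)) (κ : ℕ)
    (hκ : ∀ a ∈ S, ∀ y, (L.filter fun l => l.1 * a + l.2 = y).card ≤ κ)
    (C : ℝ) (hC : 0 ≤ C) (hsk : (S.card + κ : ℝ) ≤ C * Real.sqrt ((L.card * S.card : ℕ) : ℝ)) :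
    (II L S T : ℝ) ≤ 2 * (L.card * S.card * T.card / p) ∨
    (II L S T : ℝ) ^ 4 ≤ (12000 + C) ^ 2 * (1 + Nat.log 2 (L.card * S.card)) ^ 2 * (T.card : ℝ) ^ 2 *
      ((L.card * S.card : ℕ) : ℝ) ^ 3 := by
  set I : ℝ := (II L S T : ℝ) with hI
  have hI0 : 0 ≤ I := Nat.cast_nonneg _
  set N : ℝ := ((L.card * S.card : ℕ) : ℝ) with hN
  have hN0 : 0 ≤ N := Nat.cast_nonneg _
  have hNe : N = L.card * S.card := by rw [hN]; push_cast; ring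
  set ℓ : ℝ := (1 + Nat.log 2 (L.card * S.card) : ℝ) with hℓ
  have hℓ1 : 1 ≤ ℓ := by rw [hℓ]; linarith [(Nat.cast_nonneg (Nat.log 2 (L.card * S.card)) : (0:ℝ) ≤ _)]
  set t : ℝ := (T.card : ℝ) with ht
  have ht0 : 0 ≤ t := Nat.cast_nonneg _
  have hp0 : (0 : ℝ) < p := by exact_mod_cast (Fact.out : p.Prime).pos
  have hs0 := Real.sqrt_nonneg N
  have hss : Real.sqrt N * Real.sqrt N = N := Real.mul_self_sqrt hN0
  by_cases hp : 27 * (L.card * S.card) < p ^ 2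
  · right
    have h1 := lemmaQ p L S κ hκ hp
    rw [← hN, ← hℓ] at h1
    have h2 : (Inc JQ (L ×ˢ S) (L ×ˢ S) : ℝ) ≤ (12000 + C) * ℓ * (N * Real.sqrt N) := by
      have a1 : 12000 * N * Real.sqrt N ≤ 12000 * ℓ * (N * Real.sqrt N) := by
        have : 0 ≤ N * Real.sqrt N := by positivity
        nlinarith
      have a2 : (S.card + κ : ℝ) * N * ℓ ≤ (C * Real.sqrt N) * N * ℓ := by gcongr
      linarith
    have h3 : I ^ 2 ≤ t * Inc JQ (L ×ˢ S) (L ×ˢ S) := by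
      have := II_sq_le L S T
      rw [hI, ht]; exact_mod_cast this
    have h4 : I ^ 2 ≤ t * ((12000 + C) * ℓ * (N * Real.sqrt N)) :=
      h3.trans (mul_le_mul_of_nonneg_left h2 ht0)
    calc I ^ 4 = (I ^ 2) ^ 2 := by ring
      _ ≤ (t * ((12000 + C) * ℓ * (N * Real.sqrt N))) ^ 2 := by gcongr
      _ = (12000 + C) ^ 2 * ℓ ^ 2 * t ^ 2 * (N ^ 2 * (Real.sqrt N * Real.sqrt N)) := by ring
      _ = _ := by rw [hss]; ring
  · push Not at hp
    have hpN : (p : ℝ) ^ 2 ≤ 27 * N := by rw [hN]; exact_mod_cast hp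
    have hv := vinh p L S T
    rw [← hI, ← ht, ← hNe, mul_assoc (p : ℝ), ← hNe] at hv
    by_cases h : I ≤ 2 * (N * t / p)
    · left; rw [hNe] at h; exact h
    · right
      push Not at h
      have h5 : I / 2 ≤ I - N * t / p := by linarith
      have h6 : (I / 2) ^ 2 ≤ p * N * t := (pow_le_pow_left₀ (by linarith) h5 2).trans hv
      have h7 : I ^ 2 ≤ 4 * (p * N * t) := by linarith
      calc I ^ 4 = (I ^ 2) ^ 2 := by ring
        _ ≤ (4 * (p * N * t)) ^ 2 := by gcongr
        _ = 16 * p ^ 2 * (N ^ 2 * t ^ 2) := by ring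
        _ ≤ 16 * (27 * N) * (N ^ 2 * t ^ 2) := by gcongr
        _ = 432 * (t ^ 2 * N ^ 3) := by ring
        _ ≤ ((12000 + C) ^ 2 * ℓ ^ 2) * (t ^ 2 * N ^ 3) := by
          gcongr
          have : (1:ℝ) ≤ ℓ ^ 2 := one_le_pow₀ hℓ1
          nlinarith
        _ = _ := by ring

end SDE


namespace SDE

theorem lemmaJ_param (p : ℕ) [Fact p.Prime] (X B S T : Finset (ZMod p)) (u : ZMod p → ZMod p)
    (v : ZMod p → ZMod p → ZMod p) (hu : Set.InjOn u X) (hv : ∀ x ∈ X, Function.Injective (v x))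
    (C : ℝ) (hC : 0 ≤ C)
    (hsk : (S.card + X.card : ℝ) ≤ C * Real.sqrt ((X.card * B.card * S.card : ℕ) : ℝ))
    (n : ℕ) (hn : n ≤ ∑ x ∈ X, ∑ b ∈ B, (S.filter fun s => u x * s + v x b ∈ T).card) :
    (n : ℝ) ≤ 2 * (X.card * B.card * S.card * T.card / p) ∨
    (n : ℝ) ^ 4 ≤ (12000 + C) ^ 2 * (1 + Nat.log 2 (X.card * B.card * S.card)) ^ 2 * (T.card : ℝ) ^ 2 *
      ((X.card * B.card * S.card : ℕ) : ℝ) ^ 3 := by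
  let e : ZMod p × ZMod p → ZMod p × ZMod p := fun q => (u q.1, v q.1 q.2)
  have he : Set.InjOn e (X ×ˢ B : Finset (ZMod p × ZMod p)) := by
    rintro ⟨x, b⟩ hq ⟨x', b'⟩ hq' h
    have hq := (Finset.mem_product.1 (Finset.mem_coe.1 hq)).1
    have hq' := (Finset.mem_product.1 (Finset.mem_coe.1 hq')).1
    simp only [e, Prod.mk.injEq] at h
    have hx : x = x' := hu hq hq' h.1
    subst hx
    rw [hv x hq h.2]
  set L := (X ×ˢ B).image e with hL
  have hLc : L.card = X.card * B.card := by
    rw [hL, Finset.card_image_of_injOn he, Finset.card_product]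
  have hII : II L S T = ∑ x ∈ X, ∑ b ∈ B, (S.filter fun s => u x * s + v x b ∈ T).card := by
    rw [II_eq_sum, hL, Finset.sum_image he, Finset.sum_product]
  have hκ : ∀ a ∈ S, ∀ y, (L.filter fun l => l.1 * a + l.2 = y).card ≤ X.card := by
    intro a _ y
    apply Finset.card_le_card_of_surjOn (fun x => (u x, y - u x * a))
    intro l hl
    have hl := Finset.mem_filter.1 (Finset.mem_coe.1 hl)
    obtain ⟨⟨x, b⟩, hq, rfl⟩ := Finset.mem_image.1 hl.1
    refine ⟨x, (Finset.mem_product.1 hq).1, ?_⟩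
    refine Prod.ext rfl ?_
    have := hl.2
    simp only [e] at this ⊢
    linear_combination -this
  have := lemmaJ p L S T X.card hκ C hC (by rw [hLc]; exact hsk)
  rw [hLc, hII] at this
  have hnR : (n : ℝ) ≤ ((∑ x ∈ X, ∑ b ∈ B, (S.filter fun s => u x * s + v x b ∈ T).card : ℕ) : ℝ) := by
    exact_mod_cast hn
  rcases this with h | h
  · left
    refine hnR.trans (h.trans (le_of_eq ?_))
    push_cast; ring
  · right
    exact (pow_le_pow_left₀ (Nat.cast_nonneg _) hnR 4).trans h

lemma dyadic_pow {V : Type*} (Vs : Finset V) (r : V → ℕ) (M k : ℕ) (hk : k ≠ 0) (hM : ∀ z ∈ Vs, r z ≤ M) (Y : ℝ)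
    (hY : ∀ τ : ℕ, 1 ≤ τ → ((Vs.filter fun z => τ ≤ r z).card : ℝ) * (τ : ℝ) ^ k ≤ Y) :
    ∑ z ∈ Vs, (r z : ℝ) ^ k ≤ 2 ^ k * Y * (1 + Nat.log 2 M) := by
  have h1 : ∀ z ∈ Vs, (r z : ℝ) ^ k ≤ ∑ j ∈ range (1 + Nat.log 2 M),
      if 2 ^ j ≤ r z then 2 ^ k * ((2 ^ j : ℕ) : ℝ) ^ k else 0 := by
    intro z hz
    by_cases h0 : r z = 0
    · rw [h0]
      simp only [Nat.cast_zero, zero_pow hk]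
      exact Finset.sum_nonneg fun j _ => by split_ifs <;> positivity
    · have hj : Nat.log 2 (r z) ∈ range (1 + Nat.log 2 M) := by
        rw [Finset.mem_range]
        have := Nat.log_mono_right (b := 2) (hM z hz)
        omega
      refine le_trans ?_ (Finset.single_le_sum (f := fun j => if 2 ^ j ≤ r z then (2:ℝ) ^ k * ((2 ^ j : ℕ) : ℝ) ^ k else 0) (fun j _ => by positivity) hj)
      rw [if_pos (Nat.pow_log_le_self 2 h0), ← mul_pow]
      have : r z < 2 ^ (Nat.log 2 (r z) + 1) := Nat.lt_pow_succ_log_self (by norm_num) _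
      have h2 : r z ≤ 2 * 2 ^ (Nat.log 2 (r z)) := by rw [pow_succ] at this; omega
      gcongr
      exact_mod_cast h2
  calc ∑ z ∈ Vs, (r z : ℝ) ^ k ≤ ∑ z ∈ Vs, ∑ j ∈ range (1 + Nat.log 2 M),
      (if 2 ^ j ≤ r z then 2 ^ k * ((2 ^ j : ℕ) : ℝ) ^ k else 0) := Finset.sum_le_sum h1
    _ = ∑ j ∈ range (1 + Nat.log 2 M), ∑ z ∈ Vs,
      (if 2 ^ j ≤ r z then (2:ℝ) ^ k * ((2 ^ j : ℕ) : ℝ) ^ k else 0) := Finset.sum_comm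
    _ = ∑ j ∈ range (1 + Nat.log 2 M), 2 ^ k * (((Vs.filter fun z => 2 ^ j ≤ r z).card : ℝ) * ((2 ^ j : ℕ) : ℝ) ^ k) := by
      refine Finset.sum_congr rfl fun j _ => ?_
      rw [← Finset.sum_filter, Finset.sum_const, nsmul_eq_mul]
      ring
    _ ≤ ∑ j ∈ range (1 + Nat.log 2 M), 2 ^ k * Y := by
      refine Finset.sum_le_sum fun j _ => ?_
      exact mul_le_mul_of_nonneg_left (hY _ Nat.one_le_two_pow) (by positivity)
    _ = _ := by
      rw [Finset.sum_const, Finset.card_range, nsmul_eq_mul]; push_cast; ring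

/-- representation function of differences -/
def rr {F : Type*} [AddCommGroup F] [DecidableEq F] (A : Finset F) (z : F) : ℕ :=
  (A.filter fun b => b + z ∈ A).card

lemma rr_le {F : Type*} [AddCommGroup F] [DecidableEq F] (A : Finset F) (z : F) : rr A z ≤ A.card :=
  Finset.card_filter_le _ _

lemma rr_mono {F : Type*} [AddCommGroup F] [DecidableEq F] {A B : Finset F} (h : A ⊆ B) (z : F) :
    rr A z ≤ rr B z := by
  unfold rr
  apply Finset.card_le_card
  intro b hb
  rw [Finset.mem_filter] at hb ⊢
  exact ⟨h hb.1, h hb.2⟩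

lemma rr_neg {F : Type*} [AddCommGroup F] [DecidableEq F] (A : Finset F) (z : F) :
    rr A (-z) = rr A z := by
  unfold rr
  refine Finset.card_bij' (fun b _ => b - z) (fun b _ => b + z) ?_ ?_ ?_ ?_
  · intro b hb
    rw [Finset.mem_filter] at hb ⊢
    rw [sub_eq_add_neg]
    exact ⟨hb.2, by simpa using hb.1⟩
  · intro b hb
    rw [Finset.mem_filter] at hb ⊢
    exact ⟨hb.2, by simpa using hb.1⟩
  · intros; simp
  · intros; simp

lemma sum_rr_mul {F : Type*} [AddCommGroup F] [Fintype F] [DecidableEq F] (A : Finset F) (φ : F → ℝ) :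
    ∑ z, (rr A z : ℝ) * φ z = ∑ a ∈ A, ∑ b ∈ A, φ (a - b) := by
  have h : ∀ z, (rr A z : ℝ) * φ z = ∑ b ∈ A, if b + z ∈ A then φ z else 0 := by
    intro z
    rw [rr, ← Finset.sum_filter, Finset.sum_const, nsmul_eq_mul]
  simp_rw [h]
  rw [Finset.sum_comm, Finset.sum_comm (s := A) (t := A)]
  refine Finset.sum_congr rfl fun b _ => ?_
  rw [← Finset.sum_filter]
  refine Finset.sum_bij' (fun z _ => b + z) (fun a _ => a - b) ?_ ?_ ?_ ?_ ?_
  · intro z hz; exact (Finset.mem_filter.1 hz).2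
  · intro a ha; simpa using ha
  · intros; simp
  · intros; simp
  · intros; simp

lemma sum_rr {F : Type*} [AddCommGroup F] [Fintype F] [DecidableEq F] (A : Finset F) :
    ∑ z, (rr A z : ℝ) = (A.card : ℝ) ^ 2 := by
  have := sum_rr_mul A (fun _ => 1)
  simp only [mul_one, Finset.sum_const, nsmul_eq_mul] at this
  rw [this]; ring

structure Setup (p : ℕ) [Fact p.Prime] (g h : ZMod p → ZMod p) (A X Fs : Finset (ZMod p)) (m : ℕ) : Prop where
  hXA : X ⊆ A
  inj : Set.InjOn g X
  g0 : ∀ x ∈ X, g x ≠ 0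
  hF : ∀ x ∈ X, ∀ y ∈ A, g x * (h x + y) ∈ Fs
  hm : A.card ≤ m * X.card
  hA : A.Nonempty
  hpa : A.card ^ 5 ≤ p ^ 3
  hFa : A.card ≤ Fs.card
  hFb : Fs.card ≤ A.card ^ 2

noncomputable def lam {F : Type*} (A : Finset F) : ℝ := 1 + Nat.log 2 (A.card ^ 5)

lemma one_le_lam {F : Type*} (A : Finset F) : 1 ≤ lam A := by
  unfold lam
  linarith [(Nat.cast_nonneg (Nat.log 2 (A.card ^ 5)) : (0:ℝ) ≤ _)]

lemma log_le_lam {F : Type*} (A : Finset F) (n : ℕ) (h : n ≤ A.card ^ 5) : (1 : ℝ) + Nat.log 2 n ≤ lam A := by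
  unfold lam
  have := Nat.log_mono_right (b := 2) h
  have : (Nat.log 2 n : ℝ) ≤ Nat.log 2 (A.card ^ 5) := by exact_mod_cast this
  linarith

section
variable {p : ℕ} [Fact p.Prime] {g h : ZMod p → ZMod p} {A X Fs : Finset (ZMod p)} {m : ℕ}

lemma Setup.apos (H : Setup p g h A X Fs m) : 0 < A.card := Finset.card_pos.2 H.hA

lemma Setup.xpos (H : Setup p g h A X Fs m) : 0 < X.card := by
  have := H.apos
  have := H.hm
  by_contra h0
  have h1 : X.card = 0 := by omega
  rw [h1] at this
  omega

lemma Setup.mpos (H : Setup p g h A X Fs m) : 0 < m := by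
  have := H.apos
  have := H.hm
  by_contra h0
  have h1 : m = 0 := by omega
  rw [h1, zero_mul] at this
  omega

/-- popular differences -/
lemma Setup.alpha (H : Setup p g h A X Fs m) (S : Finset (ZMod p)) (τ : ℕ) (hS : ∀ z ∈ S, τ ≤ rr A z) (hτ : 1 ≤ τ) :
    (S.card : ℝ) * (τ : ℝ) ^ 4 ≤ (12001 + m) ^ 2 * m * lam A ^ 2 * Fs.card ^ 2 * A.card ^ 2 := by
  have hap : (1 : ℝ) ≤ A.card := by exact_mod_cast H.apos
  have hxp : (1 : ℝ) ≤ X.card := by exact_mod_cast H.xpos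
  have hmp : (1 : ℝ) ≤ m := by exact_mod_cast H.mpos
  have hl := one_le_lam A
  have hm : (A.card : ℝ) ≤ m * X.card := by exact_mod_cast H.hm
  have hxa : (X.card : ℝ) ≤ A.card := by exact_mod_cast Finset.card_le_card H.hXA
  have hfa : (A.card : ℝ) ≤ Fs.card := by exact_mod_cast H.hFa
  have hp0 : (0 : ℝ) < p := by exact_mod_cast (Fact.out : p.Prime).pos
  rcases S.eq_empty_or_nonempty with rfl | hSn
  · simp only [Finset.card_empty, Nat.cast_zero, zero_mul]; positivity
  have hsp : (1 : ℝ) ≤ S.card := by exact_mod_cast Finset.card_pos.2 hSn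
  have hSτ : (S.card : ℝ) * τ ≤ (A.card : ℝ) ^ 2 := by
    rw [← sum_rr]
    calc (S.card : ℝ) * τ = ∑ z ∈ S, (τ : ℝ) := by rw [Finset.sum_const, nsmul_eq_mul]
      _ ≤ ∑ z ∈ S, (rr A z : ℝ) := Finset.sum_le_sum fun z hz => by exact_mod_cast hS z hz
      _ ≤ _ := Finset.sum_le_sum_of_subset_of_nonneg (Finset.subset_univ _) fun _ _ _ => Nat.cast_nonneg _
  have hτ1 : (1 : ℝ) ≤ τ := by exact_mod_cast hτ
  have hSa : (S.card : ℝ) ≤ (A.card : ℝ) ^ 2 := by nlinarith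
  have hSaN : S.card ≤ A.card ^ 2 := by exact_mod_cast hSa
  have hxaN := Finset.card_le_card H.hXA
  have hN : X.card * A.card * S.card ≤ A.card ^ 5 := by
    calc X.card * A.card * S.card ≤ A.card * A.card * A.card ^ 2 := by gcongr
      _ = A.card ^ 4 := by ring
      _ ≤ A.card ^ 5 := Nat.pow_le_pow_right H.apos (by norm_num)
  have hsk : (S.card + X.card : ℝ) ≤ (m + 1 : ℝ) * Real.sqrt ((X.card * A.card * S.card : ℕ) : ℝ) := by
    have e1 : (S.card : ℝ) ≤ m * Real.sqrt ((X.card * A.card * S.card : ℕ) : ℝ) := by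
      rw [← Real.sqrt_sq (by linarith : (0:ℝ) ≤ m), ← Real.sqrt_mul (by positivity)]
      apply Real.le_sqrt_of_sq_le
      push_cast
      calc (S.card : ℝ) ^ 2 ≤ S.card * (A.card : ℝ) ^ 2 := by nlinarith
        _ = (A.card : ℝ) * (A.card * S.card) := by ring
        _ ≤ (m * X.card) * (A.card * S.card) := by gcongr
        _ ≤ (m * (m * X.card)) * (A.card * S.card) := by
          gcongr
          nlinarith [mul_nonneg (by linarith : (0:ℝ) ≤ m) (by linarith : (0:ℝ) ≤ (X.card:ℝ))]
        _ = _ := by ring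
    have e2 : (X.card : ℝ) ≤ Real.sqrt ((X.card * A.card * S.card : ℕ) : ℝ) := by
      apply Real.le_sqrt_of_sq_le
      push_cast
      calc (X.card : ℝ) ^ 2 = X.card * X.card * 1 := by ring
        _ ≤ X.card * A.card * S.card := by gcongr
    linarith
  have hn : X.card * (S.card * τ) ≤ ∑ x ∈ X, ∑ b ∈ A, (S.filter fun s => g x * s + g x * (h x + b) ∈ Fs).card := by
    rw [← smul_eq_mul]
    apply Finset.card_nsmul_le_sum
    intro x hx
    calc S.card * τ ≤ ∑ s ∈ S, rr A s := by
          rw [← smul_eq_mul]; exact Finset.card_nsmul_le_sum _ _ _ hS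
      _ = ∑ b ∈ A, (S.filter fun s => b + s ∈ A).card := by
          simp_rw [rr, Finset.card_filter]
          rw [Finset.sum_comm]
      _ ≤ _ := by
          refine Finset.sum_le_sum fun b _ => Finset.card_le_card ?_
          intro s hs
          rw [Finset.mem_filter] at hs ⊢
          refine ⟨hs.1, ?_⟩
          have := H.hF x hx _ hs.2
          convert this using 1
          ring
  have := lemmaJ_param p X A S Fs g (fun x b => g x * (h x + b)) H.inj
    (fun x hx b b' hb => by
      have := mul_left_cancel₀ (H.g0 x hx) hb
      exact add_left_cancel this) (m + 1) (by linarith) hsk _ hn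
  have h3 : (A.card : ℝ) ^ 5 ≤ (p : ℝ) ^ 3 := by exact_mod_cast H.hpa
  have hFb : (Fs.card : ℝ) ≤ (A.card : ℝ) ^ 2 := by exact_mod_cast H.hFb
  set a : ℝ := (A.card : ℝ)
  set F : ℝ := (Fs.card : ℝ)
  set s : ℝ := (S.card : ℝ)
  set x : ℝ := (X.card : ℝ)
  have hx0 : 0 < x := by linarith
  have hs0 : 0 < s := by linarith
  have ha0 : 0 < a := by linarith
  have hF0 : 0 < F := by linarith
  rcases this with h1 | h1
  · push_cast at h1
    have h2 : (τ : ℝ) ≤ 2 * (a * F / p) := by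
      have e : (x * s) * τ ≤ (x * s) * (2 * (a * F / p)) := by
        calc (x * s) * τ = x * (s * τ) := by ring
          _ ≤ _ := h1
          _ = _ := by ring
      exact le_of_mul_le_mul_left e (by positivity)
    have h4 : s * (τ : ℝ) ^ 4 ≤ 8 * (F ^ 2 * a ^ 2) := by
      calc s * (τ : ℝ) ^ 4 = (s * τ) * (τ : ℝ) ^ 3 := by ring
        _ ≤ a ^ 2 * (2 * (a * F / p)) ^ 3 := by gcongr
        _ = 8 * (F ^ 2 * a ^ 2) * (a ^ 3 * F / p ^ 3) := by field_simp; ring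
        _ ≤ 8 * (F ^ 2 * a ^ 2) * 1 := by
          gcongr
          rw [div_le_one (by positivity)]
          calc a ^ 3 * F ≤ a ^ 3 * a ^ 2 := by gcongr
            _ = a ^ 5 := by ring
            _ ≤ _ := h3
        _ = _ := by ring
    refine h4.trans ?_
    have h5 : (8 : ℝ) ≤ (12001 + m) ^ 2 * m * lam A ^ 2 := by
      have : (8:ℝ) ≤ (12001 + m) ^ 2 := by nlinarith
      calc (8:ℝ) = 8 * 1 * 1 ^ 2 := by norm_num
        _ ≤ _ := by gcongr
    calc 8 * (F ^ 2 * a ^ 2) ≤ ((12001 + m) ^ 2 * m * lam A ^ 2) * (F ^ 2 * a ^ 2) := by gcongr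
      _ = _ := by ring
  · push_cast at h1
    have hlog := log_le_lam A _ hN
    have e : (x ^ 3 * s ^ 3) * (x * (s * (τ : ℝ) ^ 4)) ≤ (x ^ 3 * s ^ 3) * ((12001 + m) ^ 2 * lam A ^ 2 * F ^ 2 * a ^ 3) := by
      calc (x ^ 3 * s ^ 3) * (x * (s * (τ : ℝ) ^ 4)) = (x * (s * τ)) ^ 4 := by ring
        _ ≤ _ := h1
        _ ≤ (12000 + (m + 1)) ^ 2 * lam A ^ 2 * F ^ 2 * (x * a * s) ^ 3 := by gcongr
        _ = _ := by ring
    have e2 := le_of_mul_le_mul_left e (by positivity)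
    have e3 : a * (s * (τ : ℝ) ^ 4) ≤ a * ((12001 + m) ^ 2 * m * lam A ^ 2 * F ^ 2 * a ^ 2) := by
      calc a * (s * (τ : ℝ) ^ 4) ≤ (m * x) * (s * (τ : ℝ) ^ 4) := by gcongr
        _ = m * (x * (s * (τ : ℝ) ^ 4)) := by ring
        _ ≤ m * ((12001 + m) ^ 2 * lam A ^ 2 * F ^ 2 * a ^ 3) := by gcongr
        _ = _ := by ring
    exact le_of_mul_le_mul_left e3 ha0

lemma Setup.E4 (H : Setup p g h A X Fs m) :
    ∑ z, (rr A z : ℝ) ^ 4 ≤ 16 * ((12001 + m) ^ 2 * m) * lam A ^ 3 * Fs.card ^ 2 * A.card ^ 2 := by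
  have := dyadic_pow Finset.univ (rr A) A.card 4 (by norm_num) (fun z _ => rr_le A z)
    ((12001 + m) ^ 2 * m * lam A ^ 2 * Fs.card ^ 2 * A.card ^ 2)
    (fun τ hτ => H.alpha _ τ (fun z hz => (Finset.mem_filter.1 hz).2) hτ)
  refine this.trans ?_
  have h1 := log_le_lam A A.card (Nat.le_self_pow (by norm_num) _)
  have hl := one_le_lam A
  calc _ ≤ 2 ^ 4 * ((12001 + m) ^ 2 * m * lam A ^ 2 * (Fs.card : ℝ) ^ 2 * (A.card : ℝ) ^ 2) * lam A := by
        gcongr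
    _ = _ := by ring

end

end SDE


namespace SDE

def nn {F : Type*} [Field F] [DecidableEq F] (A B : Finset F) (ε q : F) : ℕ :=
  (A.filter fun c => q - ε * c ∈ B).card

lemma sum_nn {F : Type*} [Field F] [DecidableEq F] (A B Q : Finset F) (ε : F) :
    ∑ q ∈ Q, nn A B ε q = ∑ b ∈ B, (A.filter fun c => b + ε * c ∈ Q).card := by
  simp_rw [nn, Finset.card_filter]
  rw [Finset.sum_comm, Finset.sum_comm (s := B)]
  refine Finset.sum_congr rfl fun c _ => ?_
  rw [← Finset.card_filter, ← Finset.card_filter]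
  refine Finset.card_bij' (fun q _ => q - ε * c) (fun b _ => b + ε * c) ?_ ?_ ?_ ?_
  · intro q hq
    rw [Finset.mem_filter] at hq ⊢
    exact ⟨hq.2, by simpa using hq.1⟩
  · intro q hq
    rw [Finset.mem_filter] at hq ⊢
    exact ⟨hq.2, by simpa using hq.1⟩
  · intros; simp
  · intros; simp

lemma nn_le_left {F : Type*} [Field F] [DecidableEq F] (A B : Finset F) (ε q : F) : nn A B ε q ≤ A.card :=
  Finset.card_filter_le _ _

lemma nn_le_right {F : Type*} [Field F] [DecidableEq F] (A B : Finset F) (ε q : F) (hε : ε ≠ 0) :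
    nn A B ε q ≤ B.card := by
  apply Finset.card_le_card_of_injOn (fun c => q - ε * c)
  · intro c hc; exact (Finset.mem_filter.1 (Finset.mem_coe.1 hc)).2
  · intro c _ c' _ h
    have : ε * (c - c') = 0 := by linear_combination -h
    rcases mul_eq_zero.1 this with h | h
    · exact absurd h hε
    · exact sub_eq_zero.1 h

section
variable {p : ℕ} [Fact p.Prime] {g h : ZMod p → ZMod p} {A X Fs : Finset (ZMod p)} {m : ℕ}

lemma Setup.beta0 (H : Setup p g h A X Fs m) (B Q : Finset (ZMod p)) (hB : B.card ≤ A.card ^ 2) (ε : ZMod p) (hε : ε ≠ 0)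
    (ρ : ℕ) (hρ : 1 ≤ ρ) (hQ : ∀ q ∈ Q, ρ ≤ nn A B ε q) :
    (A.card : ℝ) * (Q.card * (ρ : ℝ) ^ 2) ^ 2 ≤ (12001 + m) ^ 2 * m * lam A ^ 2 * B.card ^ 3 * Fs.card ^ 3 ∨
    (Q.card : ℝ) * (ρ : ℝ) ^ 2 ≤ 2 * A.card * Fs.card * B.card ^ 2 / p := by
  have hap : (1 : ℝ) ≤ A.card := by exact_mod_cast H.apos
  have hxp : (1 : ℝ) ≤ X.card := by exact_mod_cast H.xpos
  have hmp : (1 : ℝ) ≤ m := by exact_mod_cast H.mpos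
  have hl := one_le_lam A
  have hm : (A.card : ℝ) ≤ m * X.card := by exact_mod_cast H.hm
  have hxa : (X.card : ℝ) ≤ A.card := by exact_mod_cast Finset.card_le_card H.hXA
  have hxaN := Finset.card_le_card H.hXA
  have hfa : (A.card : ℝ) ≤ Fs.card := by exact_mod_cast H.hFa
  have hp0 : (0 : ℝ) < p := by exact_mod_cast (Fact.out : p.Prime).pos
  rcases Q.eq_empty_or_nonempty with rfl | hQn
  · left; simp only [Finset.card_empty, Nat.cast_zero, zero_mul]
    rw [zero_pow (by norm_num), mul_zero]; positivity
  have hqp : (1 : ℝ) ≤ Q.card := by exact_mod_cast Finset.card_pos.2 hQn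
  have hρ1 : (1 : ℝ) ≤ ρ := by exact_mod_cast hρ
  have hρBN : ρ ≤ B.card := by
    obtain ⟨q, hq⟩ := hQn
    exact (hQ q hq).trans (nn_le_right A B ε q hε)
  have hρB : (ρ : ℝ) ≤ B.card := by exact_mod_cast hρBN
  have hQρN : Q.card * ρ ≤ ∑ b ∈ B, (A.filter fun c => b + ε * c ∈ Q).card := by
    rw [← sum_nn, ← smul_eq_mul]; exact Finset.card_nsmul_le_sum _ _ _ hQ
  have hQρ : (Q.card : ℝ) * ρ ≤ A.card * B.card := by
    have : Q.card * ρ ≤ A.card * B.card := by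
      refine hQρN.trans ?_
      rw [mul_comm A.card, ← smul_eq_mul]
      exact Finset.sum_le_card_nsmul _ _ _ fun b _ => Finset.card_filter_le _ _
    exact_mod_cast this
  have hQρ2 : (Q.card : ℝ) * (ρ : ℝ) ^ 2 ≤ A.card * B.card ^ 2 := by
    calc (Q.card : ℝ) * (ρ : ℝ) ^ 2 = (Q.card * ρ) * ρ := by ring
      _ ≤ (A.card * B.card) * B.card := by gcongr
      _ = _ := by ring
  by_cases hcase : (Fs.card : ℝ) ≤ X.card * B.card
  · have hN : X.card * B.card * Fs.card ≤ A.card ^ 5 := by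
      calc X.card * B.card * Fs.card ≤ A.card * A.card ^ 2 * A.card ^ 2 := by
            gcongr
            exact H.hFb
        _ = A.card ^ 5 := by ring
    have hsk : (Fs.card + X.card : ℝ) ≤ (m + 1 : ℝ) * Real.sqrt ((X.card * B.card * Fs.card : ℕ) : ℝ) := by
      have e1 : (Fs.card : ℝ) ≤ Real.sqrt ((X.card * B.card * Fs.card : ℕ) : ℝ) := by
        apply Real.le_sqrt_of_sq_le
        push_cast
        rw [sq]
        gcongr
      have e2 : (X.card : ℝ) ≤ Real.sqrt ((X.card * B.card * Fs.card : ℕ) : ℝ) := by linarith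
      nlinarith
    have hn : X.card * (Q.card * ρ) ≤ ∑ x ∈ X, ∑ b ∈ B,
        (Fs.filter fun s => (ε / g x) * s + (b - ε * h x) ∈ Q).card := by
      rw [← smul_eq_mul]
      apply Finset.card_nsmul_le_sum
      intro x hx
      refine hQρN.trans (Finset.sum_le_sum fun b _ => ?_)
      have hg := H.g0 x hx
      apply Finset.card_le_card_of_injOn (fun c => g x * (h x + c))
      · intro c hc
        have hc := Finset.mem_filter.1 (Finset.mem_coe.1 hc)
        apply Finset.mem_coe.2
        rw [Finset.mem_filter]
        refine ⟨H.hF x hx c hc.1, ?_⟩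
        convert hc.2 using 1
        field_simp
        ring
      · intro c _ c' _ hcc
        exact add_left_cancel (mul_left_cancel₀ hg hcc)
    have := lemmaJ_param p X B Fs Q (fun x => ε / g x) (fun x b => b - ε * h x)
      (fun x hx x' hx' hxx => by
        have h1 := H.g0 x hx
        have h2 := H.g0 x' hx'
        simp only at hxx
        rw [div_eq_div_iff h1 h2] at hxx
        exact H.inj hx hx' (mul_left_cancel₀ hε hxx).symm)
      (fun x hx b b' hb => by simpa using hb) (m + 1) (by linarith) hsk _ hn
    have hlog := log_le_lam A _ hN
    set a : ℝ := (A.card : ℝ)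
    set F : ℝ := (Fs.card : ℝ)
    set q : ℝ := (Q.card : ℝ)
    set b : ℝ := (B.card : ℝ)
    set x : ℝ := (X.card : ℝ)
    have hx0 : 0 < x := by linarith
    have hq0 : 0 < q := by linarith
    have ha0 : 0 < a := by linarith
    have hF0 : 0 < F := by linarith
    have hb0 : 0 < b := by linarith
    rcases this with h1 | h1
    · right
      push_cast at h1
      have h2 : (ρ : ℝ) ≤ 2 * (b * F / p) := by
        have e : (x * q) * ρ ≤ (x * q) * (2 * (b * F / p)) := by
          calc (x * q) * ρ = x * (q * ρ) := by ring
            _ ≤ _ := h1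
            _ = _ := by ring
        exact le_of_mul_le_mul_left e (by positivity)
      calc q * (ρ : ℝ) ^ 2 = (q * ρ) * ρ := by ring
        _ ≤ (a * b) * (2 * (b * F / p)) := by gcongr
        _ = _ := by ring
    · left
      push_cast at h1
      have e : (x ^ 3 * q ^ 2) * (x * (q * (ρ : ℝ) ^ 2) ^ 2) ≤ (x ^ 3 * q ^ 2) * ((12001 + m) ^ 2 * lam A ^ 2 * b ^ 3 * F ^ 3) := by
        calc (x ^ 3 * q ^ 2) * (x * (q * (ρ : ℝ) ^ 2) ^ 2) = (x * (q * ρ)) ^ 4 := by ring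
          _ ≤ _ := h1
          _ ≤ (12000 + (m + 1)) ^ 2 * lam A ^ 2 * q ^ 2 * (x * b * F) ^ 3 := by gcongr
          _ = _ := by ring
      have e2 := le_of_mul_le_mul_left e (by positivity)
      calc a * (q * (ρ : ℝ) ^ 2) ^ 2 ≤ (m * x) * (q * (ρ : ℝ) ^ 2) ^ 2 := by gcongr
        _ = m * (x * (q * (ρ : ℝ) ^ 2) ^ 2) := by ring
        _ ≤ m * ((12001 + m) ^ 2 * lam A ^ 2 * b ^ 3 * F ^ 3) := by gcongr
        _ = _ := by ring
  · left
    push Not at hcase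
    set a : ℝ := (A.card : ℝ)
    set F : ℝ := (Fs.card : ℝ)
    set q : ℝ := (Q.card : ℝ)
    set b : ℝ := (B.card : ℝ)
    set x : ℝ := (X.card : ℝ)
    have ha0 : 0 < a := by linarith
    have hF0 : 0 < F := by linarith
    have hb0 : 0 < b := by linarith
    have h5 : (1 : ℝ) ≤ (12001 + m) ^ 2 * lam A ^ 2 := by
      have : (1:ℝ) ≤ (12001 + m) ^ 2 := by nlinarith
      calc (1:ℝ) = 1 * 1 ^ 2 := by norm_num
        _ ≤ _ := by gcongr
    calc a * (q * (ρ : ℝ) ^ 2) ^ 2 ≤ a * (a * b ^ 2) ^ 2 := by gcongr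
      _ = a * b * (a ^ 2 * b ^ 3) := by ring
      _ ≤ (m * x) * b * (F ^ 2 * b ^ 3) := by gcongr
      _ = (m * (F ^ 2 * b ^ 3)) * (x * b) := by ring
      _ ≤ (m * (F ^ 2 * b ^ 3)) * F := by gcongr
      _ = 1 * (m * b ^ 3 * F ^ 3) := by ring
      _ ≤ ((12001 + m) ^ 2 * lam A ^ 2) * (m * b ^ 3 * F ^ 3) := by gcongr
      _ = _ := by ring

lemma Setup.beta (H : Setup p g h A X Fs m) (B : Finset (ZMod p)) (hB : B.card ≤ A.card ^ 2) (ε : ZMod p) (hε : ε ≠ 0) :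
    ∑ q, (nn A B ε q : ℝ) ^ 2 ≤ 4 * lam A * (Real.sqrt ((12001 + m) ^ 2 * m * lam A ^ 2 * B.card ^ 3 * Fs.card ^ 3 / A.card)
      + 2 * A.card * Fs.card * B.card ^ 2 / p) := by
  have hap : (1 : ℝ) ≤ A.card := by exact_mod_cast H.apos
  have hl := one_le_lam A
  set Y : ℝ := Real.sqrt ((12001 + m) ^ 2 * m * lam A ^ 2 * B.card ^ 3 * Fs.card ^ 3 / A.card)
      + 2 * A.card * Fs.card * B.card ^ 2 / p with hY
  have hs := Real.sqrt_nonneg ((12001 + m) ^ 2 * m * lam A ^ 2 * B.card ^ 3 * Fs.card ^ 3 / A.card)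
  have ht : 0 ≤ 2 * (A.card : ℝ) * Fs.card * B.card ^ 2 / p := by positivity
  have := dyadic_pow Finset.univ (nn A B ε) A.card 2 (by norm_num) (fun z _ => nn_le_left A B ε z) Y
    (fun ρ hρ => by
      rcases H.beta0 B (Finset.univ.filter fun q => ρ ≤ nn A B ε q) hB ε hε ρ hρ
        (fun q hq => (Finset.mem_filter.1 hq).2) with h1 | h1
      · have : ((Finset.univ.filter fun q => ρ ≤ nn A B ε q).card : ℝ) * (ρ : ℝ) ^ 2 ≤
          Real.sqrt ((12001 + m) ^ 2 * m * lam A ^ 2 * B.card ^ 3 * Fs.card ^ 3 / A.card) := by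
          apply Real.le_sqrt_of_sq_le
          rw [le_div_iff₀ (by linarith), mul_comm]
          exact h1
        rw [hY]; linarith
      · rw [hY]; linarith)
  refine this.trans ?_
  have h1 := log_le_lam A A.card (Nat.le_self_pow (by norm_num) _)
  have hY0 : 0 ≤ Y := by rw [hY]; linarith
  calc _ ≤ 2 ^ 2 * Y * lam A := by gcongr
    _ = _ := by ring

lemma Setup.weighted (H : Setup p g h A X Fs m) (A' : Finset (ZMod p)) (hA' : A' ⊆ A) (ε : ZMod p) (hε : ε ≠ 0)
    (E : ℝ)
    (hE : ∀ j : ℕ, (16 : ℝ) ^ j * ((Finset.univ.filter fun z => 2 ^ j ≤ rr A' z).card : ℝ) ^ 3 ≤ E) :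
    ∑ q, (∑ c ∈ A, (rr A' (q - ε * c) : ℝ)) ^ 2 ≤ 16 * lam A ^ 3 *
      (Real.sqrt ((12001 + m) ^ 2 * m * lam A ^ 2 * Fs.card ^ 3 * E / A.card) + 2 * A.card ^ 5 * Fs.card / p) := by
  have hap : (1 : ℝ) ≤ A.card := by exact_mod_cast H.apos
  have hl := one_le_lam A
  have hp0 : (0 : ℝ) < p := by exact_mod_cast (Fact.out : p.Prime).pos
  set J := 1 + Nat.log 2 A.card with hJ
  have hJl : (J : ℝ) ≤ lam A := by
    have := log_le_lam A A.card (Nat.le_self_pow (by norm_num) _)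
    rw [hJ]; push_cast; exact this
  let B : ℕ → Finset (ZMod p) := fun j => Finset.univ.filter fun z => 2 ^ j ≤ rr A' z
  have hBc : ∀ j, (2 : ℝ) ^ j * (B j).card ≤ (A.card : ℝ) ^ 2 := by
    intro j
    calc (2 : ℝ) ^ j * (B j).card = ∑ z ∈ B j, (2 : ℝ) ^ j := by
          rw [Finset.sum_const, nsmul_eq_mul]; ring
      _ ≤ ∑ z ∈ B j, (rr A' z : ℝ) := Finset.sum_le_sum fun z hz => by
          exact_mod_cast (Finset.mem_filter.1 hz).2
      _ ≤ ∑ z, (rr A' z : ℝ) :=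
          Finset.sum_le_sum_of_subset_of_nonneg (Finset.subset_univ _) fun _ _ _ => Nat.cast_nonneg _
      _ = (A'.card : ℝ) ^ 2 := sum_rr A'
      _ ≤ _ := by gcongr
  have hBcN : ∀ j, (B j).card ≤ A.card ^ 2 := by
    intro j
    have h1 := hBc j
    have h2 : (1 : ℝ) ≤ 2 ^ j := one_le_pow₀ (by norm_num)
    have h3 : ((B j).card : ℝ) ≤ (A.card : ℝ) ^ 2 := by
      refine le_trans ?_ h1
      exact le_mul_of_one_le_left (Nat.cast_nonneg _) h2
    exact_mod_cast h3
  have hW : ∀ q, ∑ c ∈ A, (rr A' (q - ε * c) : ℝ) ≤ ∑ j ∈ range J, 2 ^ (j + 1) * (nn A (B j) ε q : ℝ) := by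
    intro q
    have h1 : ∀ z, (rr A' z : ℝ) ≤ ∑ j ∈ range J, if z ∈ B j then (2 : ℝ) ^ (j + 1) else 0 := by
      intro z
      by_cases h0 : rr A' z = 0
      · rw [h0, Nat.cast_zero]
        exact Finset.sum_nonneg fun j _ => by split_ifs <;> positivity
      · have hj : Nat.log 2 (rr A' z) ∈ range J := by
          rw [Finset.mem_range, hJ]
          have := Nat.log_mono_right (b := 2) ((rr_le A' z).trans (Finset.card_le_card hA'))
          omega
        refine le_trans ?_ (Finset.single_le_sum (f := fun j => if z ∈ B j then (2 : ℝ) ^ (j + 1) else 0)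
          (fun j _ => by positivity) hj)
        have hz : z ∈ B (Nat.log 2 (rr A' z)) := by
          simp only [B, Finset.mem_filter]
          exact ⟨Finset.mem_univ _, Nat.pow_log_le_self 2 h0⟩
        rw [if_pos hz]
        have : rr A' z < 2 ^ (Nat.log 2 (rr A' z) + 1) := Nat.lt_pow_succ_log_self (by norm_num) _
        exact_mod_cast this.le
    calc ∑ c ∈ A, (rr A' (q - ε * c) : ℝ) ≤ ∑ c ∈ A, ∑ j ∈ range J, (if q - ε * c ∈ B j then (2 : ℝ) ^ (j + 1) else 0) :=
          Finset.sum_le_sum fun c _ => h1 _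
      _ = ∑ j ∈ range J, ∑ c ∈ A, (if q - ε * c ∈ B j then (2 : ℝ) ^ (j + 1) else 0) := Finset.sum_comm
      _ = _ := by
        refine Finset.sum_congr rfl fun j _ => ?_
        rw [← Finset.sum_filter, Finset.sum_const, nsmul_eq_mul, nn]; ring
  set Z : ℝ := Real.sqrt ((12001 + m) ^ 2 * m * lam A ^ 2 * Fs.card ^ 3 * E / A.card) + 2 * A.card ^ 5 * Fs.card / p with hZ
  have hZ0 : 0 ≤ Z := by
    rw [hZ]
    have := Real.sqrt_nonneg ((12001 + m) ^ 2 * m * lam A ^ 2 * Fs.card ^ 3 * E / A.card)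
    positivity
  have hj : ∀ j, (2 ^ (j + 1)) ^ 2 * ∑ q, (nn A (B j) ε q : ℝ) ^ 2 ≤ 16 * lam A * Z := by
    intro j
    have h1 := H.beta (B j) (hBcN j) ε hε
    have h2 : (4 : ℝ) ^ j * Real.sqrt ((12001 + m) ^ 2 * m * lam A ^ 2 * (B j).card ^ 3 * Fs.card ^ 3 / A.card) ≤
        Real.sqrt ((12001 + m) ^ 2 * m * lam A ^ 2 * Fs.card ^ 3 * E / A.card) := by
      rw [← Real.sqrt_sq (by positivity : (0:ℝ) ≤ 4 ^ j), ← Real.sqrt_mul (by positivity)]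
      apply Real.sqrt_le_sqrt
      have e : ((4 : ℝ) ^ j) ^ 2 = 16 ^ j := by rw [← pow_mul, mul_comm, pow_mul]; norm_num
      rw [e]
      calc (16 : ℝ) ^ j * ((12001 + m) ^ 2 * m * lam A ^ 2 * (B j).card ^ 3 * Fs.card ^ 3 / A.card) =
          (12001 + m) ^ 2 * m * lam A ^ 2 * Fs.card ^ 3 * (16 ^ j * (B j).card ^ 3) / A.card := by ring
        _ ≤ _ := by
          gcongr
          exact hE j
    have h3 : (4 : ℝ) ^ j * (2 * A.card * Fs.card * (B j).card ^ 2 / p) ≤ 2 * A.card ^ 5 * Fs.card / p := by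
      have e : (4 : ℝ) ^ j = (2 ^ j) ^ 2 := by rw [← pow_mul, mul_comm, pow_mul]; norm_num
      calc (4 : ℝ) ^ j * (2 * A.card * Fs.card * (B j).card ^ 2 / p) =
          2 * (A.card : ℝ) * Fs.card * (2 ^ j * (B j).card) ^ 2 / p := by rw [e]; ring
        _ ≤ 2 * (A.card : ℝ) * Fs.card * ((A.card : ℝ) ^ 2) ^ 2 / p := by
          gcongr
          exact hBc j
        _ = _ := by ring
    have e : ((2 : ℝ) ^ (j + 1)) ^ 2 = 4 * 4 ^ j := by
      rw [← pow_mul, mul_comm, pow_mul]; norm_num; ring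
    calc (2 ^ (j + 1)) ^ 2 * ∑ q, (nn A (B j) ε q : ℝ) ^ 2 ≤ 4 * 4 ^ j * (4 * lam A * (Real.sqrt ((12001 + m) ^ 2 * m * lam A ^ 2 * (B j).card ^ 3 * Fs.card ^ 3 / A.card)
      + 2 * A.card * Fs.card * (B j).card ^ 2 / p)) := by
          rw [e]; gcongr
      _ = 16 * lam A * (4 ^ j * Real.sqrt ((12001 + m) ^ 2 * m * lam A ^ 2 * (B j).card ^ 3 * Fs.card ^ 3 / A.card)
          + 4 ^ j * (2 * A.card * Fs.card * (B j).card ^ 2 / p)) := by ring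
      _ ≤ 16 * lam A * Z := by
          rw [hZ]; gcongr
  calc ∑ q, (∑ c ∈ A, (rr A' (q - ε * c) : ℝ)) ^ 2 ≤ ∑ q, (∑ j ∈ range J, 2 ^ (j + 1) * (nn A (B j) ε q : ℝ)) ^ 2 := by
        refine Finset.sum_le_sum fun q _ => ?_
        have := hW q
        have h0 : 0 ≤ ∑ c ∈ A, (rr A' (q - ε * c) : ℝ) := Finset.sum_nonneg fun _ _ => Nat.cast_nonneg _
        exact pow_le_pow_left₀ h0 this 2
    _ ≤ ∑ q, ((J : ℝ) * ∑ j ∈ range J, (2 ^ (j + 1) * (nn A (B j) ε q : ℝ)) ^ 2) := by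
        refine Finset.sum_le_sum fun q _ => ?_
        have := sq_sum_le_card_mul_sum_sq (s := range J) (f := fun j => 2 ^ (j + 1) * (nn A (B j) ε q : ℝ))
        rwa [Finset.card_range] at this
    _ = (J : ℝ) * ∑ j ∈ range J, (2 ^ (j + 1)) ^ 2 * ∑ q, (nn A (B j) ε q : ℝ) ^ 2 := by
        rw [← Finset.mul_sum, Finset.sum_comm]
        congr 1
        refine Finset.sum_congr rfl fun j _ => ?_
        rw [Finset.mul_sum]
        refine Finset.sum_congr rfl fun q _ => by ring
    _ ≤ (J : ℝ) * ∑ j ∈ range J, 16 * lam A * Z :=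
        mul_le_mul_of_nonneg_left (Finset.sum_le_sum fun j _ => hj j) (Nat.cast_nonneg _)
    _ = (J : ℝ) * J * (16 * lam A * Z) := by
        rw [Finset.sum_const, Finset.card_range, nsmul_eq_mul]; ring
    _ ≤ lam A * lam A * (16 * lam A * Z) := by gcongr
    _ = _ := by ring

end

end SDE


namespace SDE

lemma prune {F : Type*} [Field F] [DecidableEq F] (A D : Finset F) (hA : A.Nonempty) (ε : F) (hε : ε ≠ 0)
    (hD : ∀ a ∈ A, ∀ c ∈ A, a + ε * c ∈ D) (Δ : ℝ) (hΔ : Δ * (8 * D.card) ≤ (A.card : ℝ) ^ 2) :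
    ∃ A' ⊆ A, (A.card : ℝ) ≤ 2 * A'.card ∧
      ∀ b ∈ A', ((A.filter fun c => (nn A A' ε (b + ε * c) : ℝ) < Δ).card : ℝ) ≤ A.card / 4 := by
  let Φ : Finset F → ℝ := fun S => ∑ x ∈ D, min (nn A S ε x : ℝ) Δ - (A.card : ℝ) / 4 * S.card
  obtain ⟨A', hA', hmin⟩ := Finset.exists_min_image A.powerset Φ ⟨A, Finset.mem_powerset_self A⟩
  have hsub : A' ⊆ A := Finset.mem_powerset.1 hA'
  have hap : (0 : ℝ) < A.card := by exact_mod_cast Finset.card_pos.2 hA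
  refine ⟨A', hsub, ?_, ?_⟩
  · by_cases hΔ0 : 0 ≤ Δ
    · have h1 := hmin A (Finset.mem_powerset_self A)
      have h2 : ∑ x ∈ D, min (nn A A ε x : ℝ) Δ ≤ D.card * Δ := by
        rw [← nsmul_eq_mul]
        exact Finset.sum_le_card_nsmul _ _ _ fun x _ => min_le_right _ _
      have h3 : 0 ≤ ∑ x ∈ D, min (nn A A' ε x : ℝ) Δ :=
        Finset.sum_nonneg fun x _ => le_min (Nat.cast_nonneg _) hΔ0
      simp only [Φ] at h1
      nlinarith
    · push Not at hΔ0
      have h1 := hmin A (Finset.mem_powerset_self A)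
      have e : ∀ S : Finset F, ∀ x, min (nn A S ε x : ℝ) Δ = Δ := fun S x =>
        min_eq_right (hΔ0.le.trans (Nat.cast_nonneg _))
      simp only [Φ, e] at h1
      nlinarith
  · intro b hb
    set C := A.filter fun c => (nn A A' ε (b + ε * c) : ℝ) < Δ with hC
    have h1 := hmin (A'.erase b) (Finset.mem_powerset.2 ((Finset.erase_subset _ _).trans hsub))
    have hcard : ((A'.erase b).card : ℝ) = A'.card - 1 := by
      rw [Finset.card_erase_of_mem hb, Nat.cast_sub (Finset.card_pos.2 ⟨b, hb⟩)]; simp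
    simp only [Φ] at h1
    rw [hcard] at h1
    have hmono : ∀ x, (nn A (A'.erase b) ε x : ℝ) ≤ nn A A' ε x := by
      intro x
      have : nn A (A'.erase b) ε x ≤ nn A A' ε x := by
        apply Finset.card_le_card
        intro c hc
        rw [Finset.mem_filter] at hc ⊢
        exact ⟨hc.1, Finset.mem_of_mem_erase hc.2⟩
      exact_mod_cast this
    have hinj : Set.InjOn (fun c => b + ε * c) C := by
      intro c _ c' _ h
      exact mul_left_cancel₀ hε (add_left_cancel h)
    have h2 : (C.card : ℝ) ≤ ∑ x ∈ D, (min (nn A A' ε x : ℝ) Δ - min (nn A (A'.erase b) ε x : ℝ) Δ) := by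
      calc (C.card : ℝ) = ∑ x ∈ C.image (fun c => b + ε * c), (1 : ℝ) := by
            rw [Finset.sum_const, Finset.card_image_of_injOn hinj]; simp
        _ ≤ ∑ x ∈ C.image (fun c => b + ε * c), (min (nn A A' ε x : ℝ) Δ - min (nn A (A'.erase b) ε x : ℝ) Δ) := by
            refine Finset.sum_le_sum fun x hx => ?_
            obtain ⟨c, hc, rfl⟩ := Finset.mem_image.1 hx
            have hc' := Finset.mem_filter.1 hc
            have h3 : nn A (A'.erase b) ε (b + ε * c) + 1 ≤ nn A A' ε (b + ε * c) := by
              apply Finset.card_lt_card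
              rw [Finset.ssubset_iff_of_subset]
              · refine ⟨c, ?_, ?_⟩
                · rw [Finset.mem_filter]; exact ⟨hc'.1, by simpa using hb⟩
                · rw [Finset.mem_filter]; simp
              · intro c hc
                rw [Finset.mem_filter] at hc ⊢
                exact ⟨hc.1, Finset.mem_of_mem_erase hc.2⟩
            have h4 : (nn A (A'.erase b) ε (b + ε * c) : ℝ) + 1 ≤ nn A A' ε (b + ε * c) := by exact_mod_cast h3
            rw [min_eq_left hc'.2.le, min_eq_left (by linarith [hc'.2])]
            linarith
        _ ≤ _ := by
            refine Finset.sum_le_sum_of_subset_of_nonneg ?_ ?_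
            · intro x hx
              obtain ⟨c, hc, rfl⟩ := Finset.mem_image.1 hx
              exact hD b (hsub hb) c (Finset.mem_filter.1 hc).1
            · intro x _ _
              have := min_le_min_right Δ (hmono x)
              linarith
    rw [Finset.sum_sub_distrib] at h2
    linarith

section
variable {F : Type*} [Field F] [Fintype F] [DecidableEq F]

/-- real-valued indicator -/
def ind (A : Finset F) (x : F) : ℝ := if x ∈ A then 1 else 0

lemma ind_nonneg (A : Finset F) (x : F) : 0 ≤ ind A x := by unfold ind; split_ifs <;> norm_num

lemma ind_le_one (A : Finset F) (x : F) : ind A x ≤ 1 := by unfold ind; split_ifs <;> norm_num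

lemma ind_sq (A : Finset F) (x : F) : ind A x * ind A x = ind A x := by unfold ind; split_ifs <;> norm_num

lemma sum_ind (A : Finset F) (φ : F → ℝ) : ∑ x ∈ A, φ x = ∑ x, ind A x * φ x := by
  unfold ind
  simp

end
end SDE


namespace SDE
section
variable {F : Type*} [Field F] [Fintype F] [DecidableEq F]

lemma rr_eq_ind (A : Finset F) (z : F) : (rr A z : ℝ) = ∑ b, ind A b * ind A (b + z) := by
  rw [rr, Finset.card_filter, Nat.cast_sum, sum_ind]
  refine Finset.sum_congr rfl fun b _ => ?_
  simp [ind]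

lemma nn_eq_ind (A B : Finset F) (ε q : F) : (nn A B ε q : ℝ) = ∑ c, ind A c * ind B (q - ε * c) := by
  rw [nn, Finset.card_filter, Nat.cast_sum, sum_ind]
  refine Finset.sum_congr rfl fun b _ => ?_
  simp [ind]

/-- popular points -/
lemma G_le (A A' P : Finset F) (ε : F) (Δ : ℝ) (hΔ : 0 ≤ Δ)
    (hP : ∀ x ∈ P, Δ ≤ nn A A' ε x) :
    Δ ^ 2 * (∑ x ∈ P, ∑ y ∈ P, (rr A' (x - y) : ℝ)) ≤ ∑ q, (∑ c ∈ A, (rr A' (q - ε * c) : ℝ)) ^ 2 := by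
  have h1 : (∑ x ∈ P, ∑ y ∈ P, (rr A' (x - y) : ℝ)) = ∑ q, (∑ a ∈ A', ind P (q + a)) ^ 2 := by
    rw [← sum_rr_mul P (fun z => (rr A' z : ℝ))]
    calc ∑ z, (rr P z : ℝ) * (rr A' z : ℝ) = ∑ z, (rr A' z : ℝ) * (rr P z : ℝ) := by
          simp_rw [mul_comm]
      _ = ∑ a ∈ A', ∑ b ∈ A', (rr P (a - b) : ℝ) := sum_rr_mul A' (fun z => (rr P z : ℝ))
      _ = ∑ a ∈ A', ∑ b ∈ A', ∑ q, ind P (q + a) * ind P (q + b) := by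
          refine Finset.sum_congr rfl fun a _ => Finset.sum_congr rfl fun b _ => ?_
          rw [rr_eq_ind, ← Equiv.sum_comp (Equiv.addRight b)]
          refine Finset.sum_congr rfl fun q _ => ?_
          simp only [Equiv.coe_addRight]
          rw [mul_comm]; congr 2; ring
      _ = ∑ q, ∑ a ∈ A', ∑ b ∈ A', ind P (q + a) * ind P (q + b) := by
          rw [Finset.sum_comm]
          rw [Finset.sum_comm (s := (Finset.univ : Finset F)), Finset.sum_comm]
          refine Finset.sum_congr rfl fun a _ => ?_
          rw [Finset.sum_comm]
      _ = _ := by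
          refine Finset.sum_congr rfl fun q _ => ?_
          rw [sq, Finset.sum_mul_sum]
  rw [h1, Finset.mul_sum]
  refine Finset.sum_le_sum fun q _ => ?_
  rw [← mul_pow]
  refine pow_le_pow_left₀ (mul_nonneg hΔ (Finset.sum_nonneg fun a _ => ind_nonneg _ _)) ?_ 2
  have h2 : ∑ c ∈ A, (rr A' (q - ε * c) : ℝ) = ∑ a ∈ A', (nn A A' ε (q + a) : ℝ) := by
    simp_rw [rr, nn, Finset.card_filter, Nat.cast_sum]
    rw [Finset.sum_comm]
    refine Finset.sum_congr rfl fun a _ => Finset.sum_congr rfl fun c _ => ?_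
    rw [show a + (q - ε * c) = q + a - ε * c by ring]
  rw [h2, Finset.mul_sum]
  refine Finset.sum_le_sum fun a _ => ?_
  unfold ind
  split_ifs with h
  · rw [mul_one]; exact hP _ h
  · simp

/-- common count -/
def n3 (A A' : Finset F) (ε x y : F) : ℝ := ∑ c, ind A c * (ind A' (x - ε * c) * ind A' (y - ε * c))

lemma n3_nonneg (A A' : Finset F) (ε x y : F) : 0 ≤ n3 A A' ε x y :=
  Finset.sum_nonneg fun c _ => mul_nonneg (ind_nonneg _ _) (mul_nonneg (ind_nonneg _ _) (ind_nonneg _ _))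

lemma T_eq (A A' P : Finset F) (ε : F) (u : F → ℝ) :
    ∑ x ∈ P, ∑ y ∈ P, u (x - y) * n3 A A' ε x y =
      ∑ a ∈ A', ∑ b ∈ A', u (a - b) * ∑ c ∈ A, ind P (a + ε * c) * ind P (b + ε * c) := by
  have h1 : ∑ x ∈ P, ∑ y ∈ P, u (x - y) * n3 A A' ε x y =
      ∑ c, ∑ x, ∑ y, ind P x * (ind P y * (u (x - y) * (ind A c * (ind A' (x - ε * c) * ind A' (y - ε * c))))) := by
    simp_rw [sum_ind P, n3, Finset.mul_sum]
    rw [Finset.sum_comm (s := (Finset.univ : Finset F)) (t := (Finset.univ : Finset F))]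
    rw [Finset.sum_comm]
    calc _ = ∑ x, ∑ c, ∑ y, ind P x * (ind P y * (u (x - y) * (ind A c * (ind A' (x - ε * c) * ind A' (y - ε * c))))) := by
          refine Finset.sum_congr rfl fun x _ => ?_
          rw [Finset.sum_comm]
      _ = _ := Finset.sum_comm
  have h2 : ∑ a ∈ A', ∑ b ∈ A', u (a - b) * ∑ c ∈ A, ind P (a + ε * c) * ind P (b + ε * c) =
      ∑ c, ∑ a, ∑ b, ind A' a * (ind A' b * (u (a - b) * (ind A c * (ind P (a + ε * c) * ind P (b + ε * c))))) := by
    simp_rw [sum_ind A', sum_ind A, Finset.mul_sum]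
    calc _ = ∑ x, ∑ c, ∑ y, ind A' x * (ind A' y * (u (x - y) * (ind A c * (ind P (x + ε * c) * ind P (y + ε * c))))) := by
          refine Finset.sum_congr rfl fun x _ => ?_
          rw [Finset.sum_comm]
      _ = _ := Finset.sum_comm
  rw [h1, h2]
  refine Finset.sum_congr rfl fun c _ => ?_
  rw [← Equiv.sum_comp (Equiv.addRight (ε * c))]
  refine Finset.sum_congr rfl fun a _ => ?_
  rw [← Equiv.sum_comp (Equiv.addRight (ε * c))]
  refine Finset.sum_congr rfl fun b _ => ?_
  simp only [Equiv.coe_addRight, add_sub_cancel_right, add_sub_add_right_eq_sub]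
  ring

lemma T_ge (A A' : Finset F) (ε : F) (Δ : ℝ)
    (hA' : ∀ b ∈ A', ((A.filter fun c => (nn A A' ε (b + ε * c) : ℝ) < Δ).card : ℝ) ≤ A.card / 4)
    (u : F → ℝ) (hu : ∀ z, 0 ≤ u z) (hu3 : ∀ z, u z ^ 3 = rr A' z) :
    (A.card : ℝ) / 2 * ∑ z, u z ^ 4 ≤
      ∑ x ∈ univ.filter (fun x => Δ ≤ (nn A A' ε x : ℝ)), ∑ y ∈ univ.filter (fun x => Δ ≤ (nn A A' ε x : ℝ)),
        u (x - y) * n3 A A' ε x y := by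
  set P := univ.filter (fun x => Δ ≤ (nn A A' ε x : ℝ)) with hPdef
  rw [T_eq]
  have hE : ∑ z, u z ^ 4 = ∑ a ∈ A', ∑ b ∈ A', u (a - b) := by
    rw [← sum_rr_mul]
    refine Finset.sum_congr rfl fun z _ => ?_
    rw [← hu3]; ring
  rw [hE, Finset.mul_sum]
  have key : ∀ a ∈ A', ∑ c ∈ A, (1 - ind P (a + ε * c)) ≤ (A.card : ℝ) / 4 := by
    intro a ha
    refine le_trans (le_of_eq ?_) (hA' a ha)
    rw [Finset.card_filter, Nat.cast_sum]
    refine Finset.sum_congr rfl fun c _ => ?_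
    by_cases hc : (nn A A' ε (a + ε * c) : ℝ) < Δ
    · have : a + ε * c ∉ P := by simp [hPdef, hc]
      simp [ind, this, hc]
    · have : a + ε * c ∈ P := by simp [hPdef]; exact not_lt.1 hc
      simp [ind, this, hc]
  refine Finset.sum_le_sum fun a ha => ?_
  rw [Finset.mul_sum]
  refine Finset.sum_le_sum fun b hb => ?_
  rw [mul_comm]
  refine mul_le_mul_of_nonneg_left ?_ (hu _)
  have h1 : ∑ c ∈ A, ((1 : ℝ) - (1 - ind P (a + ε * c)) - (1 - ind P (b + ε * c))) ≤
      ∑ c ∈ A, ind P (a + ε * c) * ind P (b + ε * c) := by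
    refine Finset.sum_le_sum fun c _ => ?_
    nlinarith [ind_le_one P (a + ε * c), ind_le_one P (b + ε * c)]
  rw [Finset.sum_sub_distrib, Finset.sum_sub_distrib] at h1
  have h2 := key a ha
  have h3 := key b hb
  simp only [Finset.sum_const, nsmul_eq_mul, mul_one] at h1
  linarith

/-- quadruple count -/
def cq (A : Finset F) (z t : F) : ℝ := ∑ b, ind A b * ind A (b + z) * (ind A (b + t) * ind A (b + z + t))

lemma cq_nonneg (A : Finset F) (z t : F) : 0 ≤ cq A z t :=
  Finset.sum_nonneg fun c _ => mul_nonneg (mul_nonneg (ind_nonneg _ _) (ind_nonneg _ _))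
    (mul_nonneg (ind_nonneg _ _) (ind_nonneg _ _))

lemma cq_symm (A : Finset F) (z t : F) : cq A z t = cq A t z := by
  unfold cq
  refine Finset.sum_congr rfl fun b _ => ?_
  rw [add_right_comm b z t]; ring

lemma sum_cq (A : Finset F) (z : F) : ∑ t, cq A z t = (rr A z : ℝ) ^ 2 := by
  unfold cq
  rw [Finset.sum_comm, sq, rr_eq_ind, Finset.sum_mul]
  refine Finset.sum_congr rfl fun b _ => ?_
  rw [← Finset.mul_sum]
  congr 1
  rw [← Equiv.sum_comp (Equiv.addLeft b) (fun x => ind A x * ind A (x + z))]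
  refine Finset.sum_congr rfl fun t _ => ?_
  simp only [Equiv.coe_addLeft]
  rw [add_right_comm]

lemma n3_sq_sum (A A' : Finset F) (ε : F) (hε : ε = 1 ∨ ε = -1) (z : F) :
    ∑ y, n3 A A' ε (y + z) y ^ 2 = ∑ t, (rr A t : ℝ) * cq A' z t := by
  have h1 : ∑ y, n3 A A' ε (y + z) y ^ 2 = ∑ c ∈ A, ∑ d ∈ A, cq A' z (-ε * (c - d)) := by
    have e : ∀ x y, n3 A A' ε x y = ∑ c ∈ A, (ind A' (x - ε * c) * ind A' (y - ε * c)) := fun x y => by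
      rw [sum_ind]; rfl
    simp_rw [e, sq, Finset.sum_mul_sum]
    rw [Finset.sum_comm]
    refine Finset.sum_congr rfl fun c _ => ?_
    rw [Finset.sum_comm]
    refine Finset.sum_congr rfl fun d _ => ?_
    rw [cq, ← Equiv.sum_comp (Equiv.addRight (ε * d))]
    refine Finset.sum_congr rfl fun b _ => ?_
    simp only [Equiv.coe_addRight]
    rw [show b + ε * d + z - ε * c = b + z + -ε * (c - d) by ring,
      show b + ε * d - ε * c = b + -ε * (c - d) by ring,
      show b + ε * d + z - ε * d = b + z by ring,
      show b + ε * d - ε * d = b by ring]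
    ring
  rw [h1, ← sum_rr_mul A (fun t => cq A' z (-ε * t))]
  rcases hε with rfl | rfl
  · rw [← Equiv.sum_comp (Equiv.neg F)]
    refine Finset.sum_congr rfl fun t _ => ?_
    simp [rr_neg]
  · simp

lemma V_le (A A' P : Finset F) (hA' : A' ⊆ A) (ε : F) (hε : ε = 1 ∨ ε = -1)
    (u : F → ℝ) (hu : ∀ z, 0 ≤ u z) (hu3 : ∀ z, u z ^ 3 = rr A' z) :
    (∑ x ∈ P, ∑ y ∈ P, n3 A A' ε x y ^ 2 * (u (x - y))⁻¹) ^ 2 ≤ (∑ z, u z ^ 4) * ∑ z, (rr A z : ℝ) ^ 4 := by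
  have hn : ∀ x y, 0 ≤ n3 A A' ε x y ^ 2 * (u (x - y))⁻¹ := fun x y =>
    mul_nonneg (sq_nonneg _) (inv_nonneg.2 (hu _))
  have h0 : 0 ≤ ∑ x ∈ P, ∑ y ∈ P, n3 A A' ε x y ^ 2 * (u (x - y))⁻¹ :=
    Finset.sum_nonneg fun x _ => Finset.sum_nonneg fun y _ => hn x y
  have h1 : ∑ x ∈ P, ∑ y ∈ P, n3 A A' ε x y ^ 2 * (u (x - y))⁻¹ ≤
      ∑ w : F × F, (u w.1)⁻¹ * ((rr A w.2 : ℝ) * cq A' w.1 w.2) := by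
    calc _ ≤ ∑ x, ∑ y, n3 A A' ε x y ^ 2 * (u (x - y))⁻¹ := by
          refine (Finset.sum_le_sum fun x _ => Finset.sum_le_sum_of_subset_of_nonneg (Finset.subset_univ P)
            fun y _ _ => hn x y).trans ?_
          exact Finset.sum_le_sum_of_subset_of_nonneg (Finset.subset_univ P)
            fun x _ _ => Finset.sum_nonneg fun y _ => hn x y
      _ = ∑ y, ∑ x, n3 A A' ε x y ^ 2 * (u (x - y))⁻¹ := Finset.sum_comm
      _ = ∑ y, ∑ z, n3 A A' ε (y + z) y ^ 2 * (u z)⁻¹ := by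
          refine Finset.sum_congr rfl fun y _ => ?_
          rw [← Equiv.sum_comp (Equiv.addLeft y)]
          refine Finset.sum_congr rfl fun z _ => ?_
          simp
      _ = ∑ z, ∑ y, n3 A A' ε (y + z) y ^ 2 * (u z)⁻¹ := Finset.sum_comm
      _ = ∑ z, (u z)⁻¹ * ∑ t, (rr A t : ℝ) * cq A' z t := by
          refine Finset.sum_congr rfl fun z _ => ?_
          rw [← Finset.sum_mul, n3_sq_sum A A' ε hε, mul_comm]
      _ = _ := by
          rw [Fintype.sum_prod_type]
          refine Finset.sum_congr rfl fun z _ => ?_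
          rw [Finset.mul_sum]
  refine (pow_le_pow_left₀ h0 h1 2).trans ?_
  refine (Finset.sum_sq_le_sum_mul_sum_of_sq_le_mul Finset.univ
    (f := fun w : F × F => (u w.1)⁻¹ ^ 2 * cq A' w.1 w.2) (g := fun w : F × F => (rr A w.2 : ℝ) ^ 2 * cq A' w.1 w.2)
    ?_ ?_ ?_).trans ?_
  · intro w _; exact mul_nonneg (sq_nonneg _) (cq_nonneg _ _ _)
  · intro w _; exact mul_nonneg (sq_nonneg _) (cq_nonneg _ _ _)
  · intro w _; apply le_of_eq; ring
  · have e1 : ∑ w : F × F, (u w.1)⁻¹ ^ 2 * cq A' w.1 w.2 = ∑ z, u z ^ 4 := by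
      rw [Fintype.sum_prod_type]
      refine Finset.sum_congr rfl fun z _ => ?_
      simp only
      rw [← Finset.mul_sum, sum_cq, ← hu3]
      by_cases hz : u z = 0
      · simp [hz]
      · field_simp
    have e2 : ∑ w : F × F, (rr A w.2 : ℝ) ^ 2 * cq A' w.1 w.2 ≤ ∑ z, (rr A z : ℝ) ^ 4 := by
      rw [Fintype.sum_prod_type_right]
      refine Finset.sum_le_sum fun t _ => ?_
      simp only
      rw [← Finset.mul_sum]
      simp_rw [cq_symm A' _ t]
      rw [sum_cq]
      have : (rr A' t : ℝ) ≤ rr A t := by exact_mod_cast rr_mono hA' t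
      have h2 : (rr A' t : ℝ) ^ 2 ≤ (rr A t : ℝ) ^ 2 := pow_le_pow_left₀ (Nat.cast_nonneg _) this 2
      nlinarith [sq_nonneg (rr A t : ℝ)]
    rw [e1]
    exact mul_le_mul_of_nonneg_left e2 (Finset.sum_nonneg fun z _ => pow_nonneg (hu z) 4)

lemma T_sq (A A' P : Finset F) (ε : F) (u : F → ℝ) (hu : ∀ z, 0 ≤ u z) (hu3 : ∀ z, u z ^ 3 = rr A' z) :
    (∑ x ∈ P, ∑ y ∈ P, u (x - y) * n3 A A' ε x y) ^ 2 ≤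
      (∑ x ∈ P, ∑ y ∈ P, (rr A' (x - y) : ℝ)) * ∑ x ∈ P, ∑ y ∈ P, n3 A A' ε x y ^ 2 * (u (x - y))⁻¹ := by
  simp_rw [← Finset.sum_product']
  refine Finset.sum_sq_le_sum_mul_sum_of_sq_le_mul _ ?_ ?_ ?_
  · intro w _; exact Nat.cast_nonneg _
  · intro w _; exact mul_nonneg (sq_nonneg _) (inv_nonneg.2 (hu _))
  · intro w _
    apply le_of_eq
    rw [← hu3]
    by_cases hz : u (w.1 - w.2) = 0
    · simp [hz]
    · field_simp

lemma delta_main (A A' : Finset F) (hA' : A' ⊆ A) (hne : A'.Nonempty) (ε : F) (hε : ε = 1 ∨ ε = -1) (Δ : ℝ) (hΔ : 0 ≤ Δ)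
    (hpr : ∀ b ∈ A', ((A.filter fun c => (nn A A' ε (b + ε * c) : ℝ) < Δ).card : ℝ) ≤ A.card / 4)
    (u : F → ℝ) (hu : ∀ z, 0 ≤ u z) (hu3 : ∀ z, u z ^ 3 = rr A' z) :
    Δ ^ 4 * (A.card : ℝ) ^ 4 * (∑ z, u z ^ 4) ^ 3 ≤
      16 * (∑ q, (∑ c ∈ A, (rr A' (q - ε * c) : ℝ)) ^ 2) ^ 2 * ∑ z, (rr A z : ℝ) ^ 4 := by
  have h1 := T_ge A A' ε Δ hpr u hu hu3
  have h2 := T_sq A A' (univ.filter (fun x => Δ ≤ (nn A A' ε x : ℝ))) ε u hu hu3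
  have h3 := V_le A A' (univ.filter (fun x => Δ ≤ (nn A A' ε x : ℝ))) hA' ε hε u hu hu3
  have h4 := G_le A A' (univ.filter (fun x => Δ ≤ (nn A A' ε x : ℝ))) ε Δ hΔ (fun x hx => (Finset.mem_filter.1 hx).2)
  have hE : 0 < ∑ z, u z ^ 4 := by
    refine Finset.sum_pos' (fun z _ => pow_nonneg (hu z) 4) ⟨0, Finset.mem_univ _, ?_⟩
    have : u 0 ≠ 0 := by
      intro h0
      have := hu3 0
      rw [h0] at this
      simp [rr] at this
      exact hne.ne_empty (by simpa using this.symm)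
    positivity
  have hG : 0 ≤ ∑ x ∈ univ.filter (fun x => Δ ≤ (nn A A' ε x : ℝ)), ∑ y ∈ univ.filter (fun x => Δ ≤ (nn A A' ε x : ℝ)), (rr A' (x - y) : ℝ) :=
    Finset.sum_nonneg fun x _ => Finset.sum_nonneg fun y _ => Nat.cast_nonneg _
  have hE4 : 0 ≤ ∑ z, (rr A z : ℝ) ^ 4 := Finset.sum_nonneg fun z _ => by positivity
  generalize (∑ x ∈ univ.filter (fun x => Δ ≤ (nn A A' ε x : ℝ)), ∑ y ∈ univ.filter (fun x => Δ ≤ (nn A A' ε x : ℝ)), (rr A' (x - y) : ℝ)) = G at *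
  generalize (∑ x ∈ univ.filter (fun x => Δ ≤ (nn A A' ε x : ℝ)), ∑ y ∈ univ.filter (fun x => Δ ≤ (nn A A' ε x : ℝ)), u (x - y) * n3 A A' ε x y) = T at *
  generalize (∑ x ∈ univ.filter (fun x => Δ ≤ (nn A A' ε x : ℝ)), ∑ y ∈ univ.filter (fun x => Δ ≤ (nn A A' ε x : ℝ)), n3 A A' ε x y ^ 2 * (u (x - y))⁻¹) = V at *
  generalize (∑ z, u z ^ 4) = E at *
  generalize (∑ z, (rr A z : ℝ) ^ 4) = Q at *
  generalize (∑ q, (∑ c ∈ A, (rr A' (q - ε * c) : ℝ)) ^ 2) = W at *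
  have ha : (0 : ℝ) ≤ A.card := Nat.cast_nonneg _
  generalize (A.card : ℝ) = a at *
  have h5 : (a / 2 * E) ^ 4 ≤ G ^ 2 * (E * Q) := by
    calc (a / 2 * E) ^ 4 ≤ T ^ 4 := pow_le_pow_left₀ (by positivity) h1 4
      _ = (T ^ 2) ^ 2 := by ring
      _ ≤ (G * V) ^ 2 := pow_le_pow_left₀ (sq_nonneg _) h2 2
      _ = G ^ 2 * V ^ 2 := by ring
      _ ≤ _ := mul_le_mul_of_nonneg_left h3 (sq_nonneg _)
  have h6 : a ^ 4 * E ^ 3 ≤ 16 * G ^ 2 * Q := by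
    refine le_of_mul_le_mul_left ?_ hE
    nlinarith
  calc Δ ^ 4 * a ^ 4 * E ^ 3 = Δ ^ 4 * (a ^ 4 * E ^ 3) := by ring
    _ ≤ Δ ^ 4 * (16 * G ^ 2 * Q) := mul_le_mul_of_nonneg_left h6 (by positivity)
    _ = 16 * (Δ ^ 2 * G) ^ 2 * Q := by ring
    _ ≤ 16 * W ^ 2 * Q := by
        have := pow_le_pow_left₀ (by positivity) h4 2
        nlinarith

end
end SDE


namespace SDE

lemma energy_lower {F : Type*} [Field F] [Fintype F] [DecidableEq F] (A D : Finset F) (ε : F) (hε : ε = 1 ∨ ε = -1)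
    (hD : ∀ a ∈ A, ∀ c ∈ A, a + ε * c ∈ D) :
    (A.card : ℝ) ^ 4 ≤ D.card * ∑ z, (rr A z : ℝ) ^ 2 := by
  have h1 : ∑ x ∈ D, (nn A A ε x : ℝ) = (A.card : ℝ) ^ 2 := by
    have := sum_nn A A D ε
    have h2 : ∑ b ∈ A, (A.filter fun c => b + ε * c ∈ D).card = A.card ^ 2 := by
      rw [Finset.sum_congr rfl (fun b hb => by rw [Finset.filter_true_of_mem (fun c hc => hD b hb c hc)])]
      rw [Finset.sum_const, smul_eq_mul, sq]
    rw [h2] at this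
    exact_mod_cast this
  have h2 : ∑ x, (nn A A ε x : ℝ) ^ 2 = ∑ z, (rr A z : ℝ) ^ 2 := by
    have e : ∀ x, (nn A A ε x : ℝ) = ∑ c ∈ A, ind A (x - ε * c) := fun x => by
      rw [nn_eq_ind, sum_ind A]
    simp_rw [e, sq, Finset.sum_mul_sum]
    rw [sum_rr_mul A (fun z => (rr A z : ℝ)), Finset.sum_comm]
    refine Finset.sum_congr rfl fun c _ => ?_
    rw [Finset.sum_comm]
    refine Finset.sum_congr rfl fun d _ => ?_
    have e2 : rr A (c - d) = rr A (-ε * (c - d)) := by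
      rcases hε with rfl | rfl
      · rw [← rr_neg]; congr 1; ring
      · congr 1; ring
    rw [e2, rr_eq_ind, ← Equiv.sum_comp (Equiv.addRight (ε * d))]
    refine Finset.sum_congr rfl fun b _ => ?_
    simp only [Equiv.coe_addRight]
    rw [show b + ε * d - ε * c = b + -ε * (c - d) by ring, show b + ε * d - ε * d = b by ring]
    ring
  have h3 := sq_sum_le_card_mul_sum_sq (s := D) (f := fun x => (nn A A ε x : ℝ))
  rw [h1] at h3
  calc (A.card : ℝ) ^ 4 = ((A.card : ℝ) ^ 2) ^ 2 := by ring
    _ ≤ D.card * ∑ x ∈ D, (nn A A ε x : ℝ) ^ 2 := h3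
    _ ≤ D.card * ∑ x, (nn A A ε x : ℝ) ^ 2 := by
        refine mul_le_mul_of_nonneg_left ?_ (Nat.cast_nonneg _)
        exact Finset.sum_le_sum_of_subset_of_nonneg (Finset.subset_univ D) fun x _ _ => sq_nonneg _
    _ = _ := by rw [h2]

lemma holder_u {F : Type*} [Fintype F] (u : F → ℝ) (hu : ∀ z, 0 ≤ u z) :
    (∑ z, u z ^ 6) ^ 4 ≤ (∑ z, u z ^ 4) ^ 3 * ∑ z, u z ^ 12 := by
  have h1 : (∑ z, u z ^ 6) ^ 2 ≤ (∑ z, u z ^ 4) * ∑ z, u z ^ 8 :=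
    Finset.sum_sq_le_sum_mul_sum_of_sq_le_mul _ (fun z _ => pow_nonneg (hu z) 4) (fun z _ => pow_nonneg (hu z) 8)
      (fun z _ => le_of_eq (by ring))
  have h2 : (∑ z, u z ^ 8) ^ 2 ≤ (∑ z, u z ^ 4) * ∑ z, u z ^ 12 :=
    Finset.sum_sq_le_sum_mul_sum_of_sq_le_mul _ (fun z _ => pow_nonneg (hu z) 4) (fun z _ => pow_nonneg (hu z) 12)
      (fun z _ => le_of_eq (by ring))
  calc (∑ z, u z ^ 6) ^ 4 = ((∑ z, u z ^ 6) ^ 2) ^ 2 := by ring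
    _ ≤ ((∑ z, u z ^ 4) * ∑ z, u z ^ 8) ^ 2 := pow_le_pow_left₀ (sq_nonneg _) h1 2
    _ = (∑ z, u z ^ 4) ^ 2 * (∑ z, u z ^ 8) ^ 2 := by ring
    _ ≤ (∑ z, u z ^ 4) ^ 2 * ((∑ z, u z ^ 4) * ∑ z, u z ^ 12) := mul_le_mul_of_nonneg_left h2 (sq_nonneg _)
    _ = _ := by ring

lemma arith_aux (t a K l M : ℝ) (ht : 1 ≤ t) (ha1 : 1 ≤ a) (hK : 1 ≤ K) (hl : 1 ≤ l) (hM : 0 ≤ M)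
    (h9 : a ^ 52 ≤ t ^ 156 * K ^ 6 * l ^ 36 * M ^ 42) : a ^ 11 ≤ t ^ 34 * K ^ 2 * l ^ 11 * M ^ 9 := by
  refine le_of_pow_le_pow_left₀ (n := 14) (by norm_num) (by positivity) ?_
  calc (a ^ 11) ^ 14 = a ^ 154 := by ring
    _ ≤ a ^ 156 := pow_le_pow_right₀ ha1 (by norm_num)
    _ = (a ^ 52) ^ 3 := by ring
    _ ≤ (t ^ 156 * K ^ 6 * l ^ 36 * M ^ 42) ^ 3 := pow_le_pow_left₀ (by positivity) h9 3
    _ = t ^ 468 * K ^ 18 * l ^ 108 * M ^ 126 := by ring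
    _ ≤ t ^ 476 * K ^ 28 * l ^ 154 * M ^ 126 := by
        have i1 : t ^ 468 ≤ t ^ 476 := pow_le_pow_right₀ ht (by norm_num)
        have i2 : K ^ 18 ≤ K ^ 28 := pow_le_pow_right₀ hK (by norm_num)
        have i3 : l ^ 108 ≤ l ^ 154 := pow_le_pow_right₀ hl (by norm_num)
        refine mul_le_mul_of_nonneg_right ?_ (pow_nonneg hM _)
        refine mul_le_mul ?_ i3 (by positivity) (by positivity)
        exact mul_le_mul i1 i2 (by positivity) (by positivity)
    _ = _ := by ring

lemma arith_main (a d F M K l E W Q p Δ : ℝ) (ha : 0 < a) (hd : 0 < d) (hF : 0 < F) (hK : 1 ≤ K) (hl : 1 ≤ l)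
    (hE : 0 < E) (hW0 : 0 ≤ W) (hp : 0 < p) (hΔ : Δ * (8 * d) = a ^ 2)
    (hFM : F ≤ M) (hdM : d ≤ M) (hQ : Q ≤ 16 * K * l ^ 3 * F ^ 2 * a ^ 2)
    (hmain : Δ ^ 4 * a ^ 4 * E ^ 3 ≤ 16 * W ^ 2 * Q)
    (hW : W ≤ 16 * l ^ 3 * (√(K * l ^ 2 * F ^ 3 * E ^ 3 / a) + 2 * a ^ 5 * F / p))
    (hE3 : a ^ 16 ≤ 2 ^ 16 * d ^ 4 * (E ^ 3 * Q)) (ha1 : 1 ≤ a) (hpa : a ^ 5 ≤ p ^ 3) :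
    a ^ 11 ≤ 2 ^ 34 * K ^ 2 * l ^ 11 * M ^ 9 := by
  have hM : 0 < M := hF.trans_le hFM
  have hl0 : 0 < l := by linarith
  have hK0 : 0 < K := by linarith
  have hΔ4 : a ^ 8 = 2 ^ 12 * d ^ 4 * Δ ^ 4 := by
    have : (a ^ 2) ^ 4 = (Δ * (8 * d)) ^ 4 := by rw [hΔ]
    linear_combination this
  rcases le_total (2 * a ^ 5 * F / p) (√(K * l ^ 2 * F ^ 3 * E ^ 3 / a)) with hc | hc
  · have h1 : W ≤ 32 * l ^ 3 * √(K * l ^ 2 * F ^ 3 * E ^ 3 / a) := by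
      refine hW.trans ?_
      have : 0 < l ^ 3 := by positivity
      nlinarith
    have h2 : W ^ 2 ≤ (32 * l ^ 3) ^ 2 * (K * l ^ 2 * F ^ 3 * E ^ 3 / a) := by
      refine (pow_le_pow_left₀ hW0 h1 2).trans (le_of_eq ?_)
      rw [mul_pow, Real.sq_sqrt (by positivity)]
    have h3 : Δ ^ 4 * a ^ 4 * E ^ 3 ≤ 16 * ((32 * l ^ 3) ^ 2 * (K * l ^ 2 * F ^ 3 * E ^ 3 / a)) * (16 * K * l ^ 3 * F ^ 2 * a ^ 2) := by
      refine hmain.trans ?_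
      have : 0 ≤ 16 * K * l ^ 3 * F ^ 2 * a ^ 2 := by positivity
      calc 16 * W ^ 2 * Q ≤ 16 * W ^ 2 * (16 * K * l ^ 3 * F ^ 2 * a ^ 2) := mul_le_mul_of_nonneg_left hQ (by positivity)
        _ ≤ _ := by gcongr
    have h4 : (a * E ^ 3) * a ^ 11 ≤ (a * E ^ 3) * (2 ^ 30 * K ^ 2 * l ^ 11 * F ^ 5 * d ^ 4) := by
      calc (a * E ^ 3) * a ^ 11 = 2 ^ 12 * d ^ 4 * (Δ ^ 4 * a ^ 4 * E ^ 3) := by linear_combination (a ^ 4 * E ^ 3) * hΔ4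
        _ ≤ 2 ^ 12 * d ^ 4 * (16 * ((32 * l ^ 3) ^ 2 * (K * l ^ 2 * F ^ 3 * E ^ 3 / a)) * (16 * K * l ^ 3 * F ^ 2 * a ^ 2)) :=
            mul_le_mul_of_nonneg_left h3 (by positivity)
        _ = _ := by field_simp; ring
    have h5 := le_of_mul_le_mul_left h4 (by positivity)
    calc a ^ 11 ≤ 2 ^ 30 * K ^ 2 * l ^ 11 * F ^ 5 * d ^ 4 := h5
      _ ≤ 2 ^ 34 * K ^ 2 * l ^ 11 * M ^ 5 * M ^ 4 := by gcongr <;> norm_num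
      _ = _ := by ring
  · have h1 : W ≤ 64 * l ^ 3 * (a ^ 5 * F / p) := by
      refine hW.trans ?_
      have : 0 < l ^ 3 := by positivity
      have e : 2 * a ^ 5 * F / p = 2 * (a ^ 5 * F / p) := by ring
      rw [e] at hc ⊢
      nlinarith
    have h2 : W ^ 2 ≤ (64 * l ^ 3 * (a ^ 5 * F / p)) ^ 2 := pow_le_pow_left₀ hW0 h1 2
    have h3 : Δ ^ 4 * a ^ 4 * E ^ 3 ≤ 16 * (64 * l ^ 3 * (a ^ 5 * F / p)) ^ 2 * (16 * K * l ^ 3 * F ^ 2 * a ^ 2) := by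
      refine hmain.trans ?_
      calc 16 * W ^ 2 * Q ≤ 16 * W ^ 2 * (16 * K * l ^ 3 * F ^ 2 * a ^ 2) := mul_le_mul_of_nonneg_left hQ (by positivity)
        _ ≤ _ := by gcongr
    have h4 : a ^ 12 * (p ^ 2 * E ^ 3) ≤ a ^ 12 * (2 ^ 32 * K * l ^ 9 * F ^ 4 * d ^ 4) := by
      calc a ^ 12 * (p ^ 2 * E ^ 3) = 2 ^ 12 * d ^ 4 * p ^ 2 * (Δ ^ 4 * a ^ 4 * E ^ 3) := by
            linear_combination (a ^ 4 * E ^ 3 * p ^ 2) * hΔ4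
        _ ≤ 2 ^ 12 * d ^ 4 * p ^ 2 * (16 * (64 * l ^ 3 * (a ^ 5 * F / p)) ^ 2 * (16 * K * l ^ 3 * F ^ 2 * a ^ 2)) :=
            mul_le_mul_of_nonneg_left h3 (by positivity)
        _ = _ := by field_simp; ring
    have h5 := le_of_mul_le_mul_left h4 (by positivity)
    have h6 : a ^ 2 * (p ^ 2 * a ^ 14) ≤ a ^ 2 * (2 ^ 52 * K ^ 2 * l ^ 12 * F ^ 6 * d ^ 8) := by
      calc a ^ 2 * (p ^ 2 * a ^ 14) = p ^ 2 * a ^ 16 := by ring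
        _ ≤ p ^ 2 * (2 ^ 16 * d ^ 4 * (E ^ 3 * (16 * K * l ^ 3 * F ^ 2 * a ^ 2))) := by
            refine mul_le_mul_of_nonneg_left (hE3.trans ?_) (by positivity)
            gcongr
        _ = (2 ^ 20 * d ^ 4 * K * l ^ 3 * F ^ 2 * a ^ 2) * (p ^ 2 * E ^ 3) := by ring
        _ ≤ (2 ^ 20 * d ^ 4 * K * l ^ 3 * F ^ 2 * a ^ 2) * (2 ^ 32 * K * l ^ 9 * F ^ 4 * d ^ 4) :=
            mul_le_mul_of_nonneg_left h5 (by positivity)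
        _ = _ := by ring
    have h7 := le_of_mul_le_mul_left h6 (by positivity)
    have h8 : p ^ 2 * a ^ 14 ≤ 2 ^ 52 * K ^ 2 * l ^ 12 * M ^ 14 := by
      calc p ^ 2 * a ^ 14 ≤ 2 ^ 52 * K ^ 2 * l ^ 12 * F ^ 6 * d ^ 8 := h7
        _ ≤ 2 ^ 52 * K ^ 2 * l ^ 12 * M ^ 6 * M ^ 8 := by gcongr
        _ = _ := by ring
    have h9 : a ^ 52 ≤ 2 ^ 156 * K ^ 6 * l ^ 36 * M ^ 42 := by
      calc a ^ 52 = (a ^ 5) ^ 2 * a ^ 42 := by ring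
        _ ≤ (p ^ 3) ^ 2 * a ^ 42 := by gcongr
        _ = (p ^ 2 * a ^ 14) ^ 3 := by ring
        _ ≤ (2 ^ 52 * K ^ 2 * l ^ 12 * M ^ 14) ^ 3 := pow_le_pow_left₀ (by positivity) h8 3
        _ = _ := by ring
    exact arith_aux 2 a K l M (by norm_num) ha1 hK hl hM.le h9

lemma Setup.final {p : ℕ} [Fact p.Prime] {g h : ZMod p → ZMod p} {A X Fs : Finset (ZMod p)} {m : ℕ}
    (H : Setup p g h A X Fs m) (D : Finset (ZMod p)) (ε : ZMod p) (hε : ε = 1 ∨ ε = -1)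
    (hD : ∀ a ∈ A, ∀ c ∈ A, a + ε * c ∈ D) :
    (A.card : ℝ) ^ 11 ≤ 2 ^ 34 * ((12001 + m) ^ 2 * m : ℝ) ^ 2 * lam A ^ 11 * (max (Fs.card : ℝ) D.card) ^ 9 := by
  have hε0 : ε ≠ 0 := by rcases hε with rfl | rfl <;> simp
  have hap : (1 : ℝ) ≤ A.card := by exact_mod_cast H.apos
  have hmp : (1 : ℝ) ≤ m := by exact_mod_cast H.mpos
  have hl := one_le_lam A
  have hfa : (A.card : ℝ) ≤ Fs.card := by exact_mod_cast H.hFa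
  have hp0 : (0 : ℝ) < p := by exact_mod_cast (Fact.out : p.Prime).pos
  have hdp : (0 : ℝ) < D.card := by
    obtain ⟨a, ha⟩ := H.hA
    exact_mod_cast Finset.card_pos.2 ⟨_, hD a ha a ha⟩
  have hΔ : ((A.card : ℝ) ^ 2 / (8 * D.card)) * (8 * D.card) = (A.card : ℝ) ^ 2 := by field_simp
  have hΔ0 : 0 ≤ ((A.card : ℝ) ^ 2 / (8 * D.card)) := by positivity
  generalize ((A.card : ℝ) ^ 2 / (8 * D.card)) = Δ at hΔ hΔ0
  obtain ⟨A', hsub, hcard, hpr⟩ := prune A D H.hA ε hε0 hD Δ hΔ.le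
  have hne : A'.Nonempty := by
    rw [← Finset.card_pos]
    have : (0 : ℝ) < A'.card := by linarith
    exact_mod_cast this
  let u : ZMod p → ℝ := fun z => (rr A' z : ℝ) ^ ((1 : ℝ) / 3)
  have hu : ∀ z, 0 ≤ u z := fun z => Real.rpow_nonneg (Nat.cast_nonneg _) _
  have hu3 : ∀ z, u z ^ 3 = rr A' z := fun z => by
    simp only [u]
    rw [← Real.rpow_natCast, ← Real.rpow_mul (Nat.cast_nonneg _)]
    norm_num
  clear_value u
  have hE : 0 < ∑ z, u z ^ 4 := by
    refine Finset.sum_pos' (fun z _ => pow_nonneg (hu z) 4) ⟨0, Finset.mem_univ _, ?_⟩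
    have : u 0 ≠ 0 := by
      intro h0
      have := hu3 0
      rw [h0] at this
      simp [rr] at this
      exact hne.ne_empty (by simpa using this.symm)
    have := hu 0
    positivity
  have hmain := delta_main A A' hsub hne ε hε Δ hΔ0 hpr u hu hu3
  have hw := H.weighted A' hsub ε hε0 ((∑ z, u z ^ 4) ^ 3) (by
    intro j
    set B := univ.filter fun z => 2 ^ j ≤ rr A' z with hB
    have h1 : ((2 : ℝ) ^ j) * (B.card : ℝ) ^ 3 * (2 ^ j) ^ 3 ≤ (∑ z, u z ^ 4) ^ 3 := by
      have hv : ((2 : ℝ) ^ j) = (((2 : ℝ) ^ j) ^ ((1 : ℝ) / 3)) ^ 3 := by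
        rw [← Real.rpow_natCast _ 3, ← Real.rpow_mul (by positivity)]
        norm_num
      have hv0 : (0 : ℝ) ≤ ((2 : ℝ) ^ j) ^ ((1 : ℝ) / 3) := by positivity
      generalize ((2 : ℝ) ^ j) ^ ((1 : ℝ) / 3) = v at hv hv0
      have h2 : (B.card : ℝ) * v ^ 4 ≤ ∑ z, u z ^ 4 := by
        calc (B.card : ℝ) * v ^ 4 = ∑ z ∈ B, v ^ 4 := by rw [Finset.sum_const, nsmul_eq_mul]
          _ ≤ ∑ z ∈ B, u z ^ 4 := by
              refine Finset.sum_le_sum fun z hz => pow_le_pow_left₀ hv0 ?_ 4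
              refine le_of_pow_le_pow_left₀ (n := 3) (by norm_num) (hu z) ?_
              rw [← hv, hu3]
              exact_mod_cast (Finset.mem_filter.1 hz).2
          _ ≤ _ := Finset.sum_le_sum_of_subset_of_nonneg (Finset.subset_univ B) fun z _ _ => pow_nonneg (hu z) 4
      calc ((2 : ℝ) ^ j) * (B.card : ℝ) ^ 3 * (2 ^ j) ^ 3 = ((B.card : ℝ) * v ^ 4) ^ 3 := by rw [hv]; ring
        _ ≤ _ := pow_le_pow_left₀ (by positivity) h2 3
    have h16 : (16 : ℝ) ^ j = (2 ^ j) ^ 4 := by rw [← pow_mul, mul_comm, pow_mul]; norm_num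
    rw [h16]
    calc _ = ((2 : ℝ) ^ j) * (B.card : ℝ) ^ 3 * (2 ^ j) ^ 3 := by ring
      _ ≤ _ := h1)
  have hQ := H.E4
  have hen := energy_lower A' D ε hε (fun a ha c hc => hD a (hsub ha) c (hsub hc))
  have hho := holder_u u hu
  have h12 : ∑ z, u z ^ 12 ≤ ∑ z, (rr A z : ℝ) ^ 4 := by
    refine Finset.sum_le_sum fun z _ => ?_
    calc u z ^ 12 = (u z ^ 3) ^ 4 := by ring
      _ = (rr A' z : ℝ) ^ 4 := by rw [hu3]
      _ ≤ _ := pow_le_pow_left₀ (Nat.cast_nonneg _) (by exact_mod_cast rr_mono hsub z) 4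
  have h6 : ∑ z, (rr A' z : ℝ) ^ 2 = ∑ z, u z ^ 6 := by
    refine Finset.sum_congr rfl fun z _ => ?_
    rw [← hu3]; ring
  rw [h6] at hen
  have hE3 : (A.card : ℝ) ^ 16 ≤ 2 ^ 16 * (D.card : ℝ) ^ 4 * ((∑ z, u z ^ 4) ^ 3 * ∑ z, (rr A z : ℝ) ^ 4) := by
    calc (A.card : ℝ) ^ 16 ≤ (2 * A'.card) ^ 16 := pow_le_pow_left₀ (by positivity) hcard 16
      _ = 2 ^ 16 * ((A'.card : ℝ) ^ 4) ^ 4 := by ring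
      _ ≤ 2 ^ 16 * (D.card * ∑ z, u z ^ 6) ^ 4 := by gcongr
      _ = 2 ^ 16 * (D.card : ℝ) ^ 4 * (∑ z, u z ^ 6) ^ 4 := by ring
      _ ≤ _ := by
          refine mul_le_mul_of_nonneg_left (hho.trans ?_) (by positivity)
          exact mul_le_mul_of_nonneg_left h12 (by positivity)
  have hpa : (A.card : ℝ) ^ 5 ≤ (p : ℝ) ^ 3 := by exact_mod_cast H.hpa
  refine arith_main (A.card : ℝ) D.card Fs.card _ _ (lam A) _ _ _ p Δ (by linarith) hdp (by linarith) ?_ hl hE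
    (Finset.sum_nonneg fun q _ => sq_nonneg _) hp0 hΔ (le_max_left _ _) (le_max_right _ _) hQ hmain hw hE3 hap hpa
  nlinarith

end SDE

namespace SDE

lemma lam_le {F : Type*} (A : Finset F) (hA : A.Nonempty) : lam A ≤ 10 * Real.log (2 * (A.card : ℝ)) := by
  have hap : (1 : ℝ) ≤ A.card := by exact_mod_cast Finset.card_pos.2 hA
  have h1 : (Nat.log 2 (A.card ^ 5) : ℝ) ≤ Real.logb 2 ((A.card ^ 5 : ℕ) : ℝ) := by
    exact_mod_cast Real.natLog_le_logb (A.card ^ 5) 2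
  have h2 : Real.logb 2 ((A.card ^ 5 : ℕ) : ℝ) = 5 * (Real.log A.card / Real.log 2) := by
    rw [Real.logb, Nat.cast_pow, Real.log_pow]; push_cast; ring
  have hl2 : (1 : ℝ) / 2 < Real.log 2 := by linarith [Real.log_two_gt_d9]
  have hla : 0 ≤ Real.log A.card := Real.log_nonneg hap
  have h3 : Real.log A.card / Real.log 2 ≤ 2 * Real.log A.card := by
    rw [div_le_iff₀ (by linarith)]
    nlinarith
  rw [Real.log_mul (by norm_num) (by linarith)]
  unfold lam
  linarith

lemma exists_reps {α β : Type*} [DecidableEq α] [DecidableEq β] (A : Finset α) (g : α → β) (m : ℕ)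
    (hm : ∀ x ∈ A, (A.filter fun y => g y = g x).card ≤ m) :
    ∃ X ⊆ A, Set.InjOn g X ∧ A.card ≤ m * X.card := by
  obtain ⟨X, hX, him, hinj⟩ : ∃ X ⊆ A, X.image g = A.image g ∧ Set.InjOn g X := by
    obtain ⟨Y, hY, hb⟩ := Set.exists_subset_bijOn (A : Set α) g
    lift Y to Finset α using A.finite_toSet.subset hY
    refine ⟨Y, Finset.coe_subset.1 hY, ?_, hb.injOn⟩
    apply Finset.coe_injective
    rw [Finset.coe_image, hb.image_eq, Finset.coe_image]
  refine ⟨X, hX, hinj, ?_⟩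
  have h1 : A.card ≤ m * (A.image g).card := by
    refine Finset.card_le_mul_card_image (f := g) A m fun b hb => ?_
    obtain ⟨x, hx, rfl⟩ := Finset.mem_image.1 hb
    exact hm x hx
  rwa [← him, Finset.card_image_of_injOn hinj] at h1

lemma conclude (a L M K : ℝ) (ha : 0 ≤ a) (hL : 0 < L) (hM : 0 ≤ M) (hK : 0 < K)
    (h : a ^ 11 ≤ K * L ^ 11 * M ^ 9) :
    K ^ (-(1 : ℝ) / 9) * L ^ (-((11 : ℝ) / 9)) * a ^ ((11 : ℝ) / 9) ≤ M := by
  refine le_of_pow_le_pow_left₀ (n := 9) (by norm_num) hM ?_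
  have e1 : (K ^ (-(1 : ℝ) / 9)) ^ 9 = K⁻¹ := by
    rw [← Real.rpow_natCast, ← Real.rpow_mul hK.le, ← Real.rpow_neg_one]; norm_num
  have e2 : (L ^ (-((11 : ℝ) / 9))) ^ 9 = (L ^ 11)⁻¹ := by
    rw [← Real.rpow_natCast, ← Real.rpow_mul hL.le, ← Real.rpow_natCast L, ← Real.rpow_neg hL.le]; norm_num
  have e3 : (a ^ ((11 : ℝ) / 9)) ^ 9 = a ^ 11 := by
    rw [← Real.rpow_natCast, ← Real.rpow_mul ha, ← Real.rpow_natCast a]; norm_num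
  rw [mul_pow, mul_pow, e1, e2, e3]
  calc K⁻¹ * (L ^ 11)⁻¹ * a ^ 11 ≤ K⁻¹ * (L ^ 11)⁻¹ * (K * L ^ 11 * M ^ 9) :=
        mul_le_mul_of_nonneg_left h (by positivity)
    _ = M ^ 9 := by field_simp

lemma setup_exists {p : ℕ} [Fact p.Prime] (m : ℕ) (g h : ZMod p → ZMod p)
    (hg : ∀ x : ZMod p, x ≠ 0 → g x ≠ 0) (hmu : mu g ≤ m)
    (A : Finset (ZMod p)) (hA : A.Nonempty) (h0 : (0 : ZMod p) ∉ A)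
    (hp : (A.card : ℝ) ≤ (p : ℝ) ^ ((3 : ℝ) / 5)) :
    ∃ X, Setup p g h A X (Finset.image₂ (fun x y => g x * (h x + y)) A A) m := by
  have hne : ∀ x ∈ A, x ≠ 0 := fun x hx h => h0 (h ▸ hx)
  obtain ⟨X, hX, hinj, hc⟩ := exists_reps A g m (by
    intro x hx
    refine le_trans ?_ hmu
    have h1 : (Finset.univ.filter fun y : ZMod p => y ≠ 0 ∧ g y = g x).card ≤ mu g :=
      Finset.le_sup (f := fun t => (Finset.univ.filter fun x : ZMod p => x ≠ 0 ∧ g x = t).card)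
        (Finset.mem_filter.2 ⟨Finset.mem_univ _, hg x (hne x hx)⟩)
    refine le_trans (Finset.card_le_card ?_) h1
    intro y hy
    rw [Finset.mem_filter] at hy ⊢
    exact ⟨Finset.mem_univ _, hne y hy.1, hy.2⟩)
  refine ⟨X, hX, hinj, fun x hx => hg x (hne x (hX hx)), fun x hx y hy => ?_, hc, hA, ?_, ?_, ?_⟩
  · exact Finset.mem_image₂_of_mem (hX hx) hy
  · have h1 : (A.card : ℝ) ^ 5 ≤ (p : ℝ) ^ 3 := by
      refine (pow_le_pow_left₀ (Nat.cast_nonneg _) hp 5).trans (le_of_eq ?_)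
      rw [← Real.rpow_natCast, ← Real.rpow_mul (Nat.cast_nonneg _), ← Real.rpow_natCast (p : ℝ) 3]
      norm_num
    exact_mod_cast h1
  · obtain ⟨x, hx⟩ := hA
    refine Finset.card_le_card_of_injOn (fun y => g x * (h x + y)) ?_ ?_
    · intro y hy
      exact Finset.mem_coe.2 (Finset.mem_image₂_of_mem hx hy)
    · intro y _ z _ hyz
      exact add_left_cancel (mul_left_cancel₀ (hg x (hne x hx)) hyz)
  · rw [sq]; exact Finset.card_image₂_le _ _ _

end SDE

theorem sum_diff_expander_eleven_ninths :
    ∀ m : ℕ, 1 ≤ m → ∃ C > (0:ℝ), ∃ c ≥ (0:ℝ),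
      ∀ (p : ℕ) [Fact p.Prime], p ≠ 2 →
      ∀ g h : ZMod p → ZMod p,
      (∀ x : ZMod p, x ≠ 0 → g x ≠ 0) → (∀ x : ZMod p, x ≠ 0 → h x ≠ 0) →
      mu g ≤ m →
      ∀ A : Finset (ZMod p), A.Nonempty → (0:ZMod p) ∉ A →
      (A.card : ℝ) ≤ (p:ℝ) ^ ((3:ℝ)/5) →
      (C * (Real.log (2 * (A.card:ℝ))) ^ (-c) * (A.card : ℝ) ^ ((11:ℝ)/9) ≤
          max ((Finset.image₂ (fun x y => g x * (h x + y)) A A).card : ℝ) (((A + A).card : ℝ))) ∧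
      (C * (Real.log (2 * (A.card:ℝ))) ^ (-c) * (A.card : ℝ) ^ ((11:ℝ)/9) ≤
          max ((Finset.image₂ (fun x y => g x * (h x + y)) A A).card : ℝ) (((A - A).card : ℝ))) := by
  intro m hm
  have hm0 : (0 : ℝ) < m := by exact_mod_cast hm
  have hK : (0 : ℝ) < 2 ^ 34 * ((12001 + m) ^ 2 * m : ℝ) ^ 2 * 10 ^ 11 := by positivity
  refine ⟨(2 ^ 34 * ((12001 + m) ^ 2 * m : ℝ) ^ 2 * 10 ^ 11) ^ (-(1 : ℝ) / 9), Real.rpow_pos_of_pos hK _,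
    (11 : ℝ) / 9, by norm_num, ?_⟩
  intro p _ _ g h hg _ hmu A hA h0 hp
  obtain ⟨X, H⟩ := SDE.setup_exists m g h hg hmu A hA h0 hp
  have hap : (1 : ℝ) ≤ A.card := by exact_mod_cast Finset.card_pos.2 hA
  have hL : 0 < Real.log (2 * (A.card : ℝ)) := Real.log_pos (by linarith)
  have hlam := SDE.lam_le A hA
  have hl1 := SDE.one_le_lam A
  have key : ∀ (D : Finset (ZMod p)) (ε : ZMod p), (ε = 1 ∨ ε = -1) → (∀ a ∈ A, ∀ c ∈ A, a + ε * c ∈ D) →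
      (2 ^ 34 * ((12001 + m) ^ 2 * m : ℝ) ^ 2 * 10 ^ 11) ^ (-(1 : ℝ) / 9) *
        (Real.log (2 * (A.card:ℝ))) ^ (-((11 : ℝ) / 9)) * (A.card : ℝ) ^ ((11:ℝ)/9) ≤
          max ((Finset.image₂ (fun x y => g x * (h x + y)) A A).card : ℝ) (D.card : ℝ) := by
    intro D ε hε hD
    have hM : (0 : ℝ) ≤ max ((Finset.image₂ (fun x y => g x * (h x + y)) A A).card : ℝ) (D.card : ℝ) :=
      le_max_of_le_left (Nat.cast_nonneg _)
    refine SDE.conclude _ _ _ _ (by linarith) hL hM hK ?_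
    refine (H.final D ε hε hD).trans ?_
    rw [mul_assoc _ ((10 : ℝ) ^ 11), ← mul_pow]
    gcongr
  refine ⟨key (A + A) 1 (Or.inl rfl) ?_, key (A - A) (-1) (Or.inr rfl) ?_⟩
  · intro a ha c hc
    rw [one_mul]; exact Finset.add_mem_add ha hc
  · intro a ha c hc
    rw [neg_one_mul, ← sub_eq_add_neg]; exact Finset.sub_mem_sub ha hc
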